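/- arXiv:1810.12965 — 3 statements merged into one kernel-verified Lean document; each statement's English description precedes it below -/
import Mathlib

section
/- Let p be a positive odd integer, q a positive even integer, and r = gcd(p,q). The set [M_{p,q}, ℝP²]₀ of based homotopy classes of continuous maps from M_{p,q} to the real projective plane is in bijection with the disjoint union ℤ/r ⊔ ℤ/p. -/
/-- Based homotopy classes of base-point-preserving continuous maps `(M, m₀) → (X, x₀)`:
the quotient of `{f : C(M, X) // f m₀ = x₀}` by homotopy relative to the base point. -/
def BasedHomotopyClasses (M X : Type*) [TopologicalSpace M] [TopologicalSpace X]
    (m₀ : M) (x₀ : X) : Type _ :=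
  Quot fun f g : {f : C(M, X) // f m₀ = x₀} =>
    ContinuousMap.HomotopicRel f.1 g.1 {m₀}

/-- The identifications `(0, z) ~ (0, e^{2πi/p} z)` and `(1, z) ~ (1, e^{2πi/q} z)` on the
cylinder `[0, 1] × S¹`. -/
def MpqRel (p q : ℕ) (a b : Set.Icc (0 : ℝ) 1 × Circle) : Prop :=
  ((a.1 : ℝ) = 0 ∧ (b.1 : ℝ) = 0 ∧ b.2 = Circle.exp (2 * Real.pi / p) * a.2) ∨
  ((a.1 : ℝ) = 1 ∧ (b.1 : ℝ) = 1 ∧ b.2 = Circle.exp (2 * Real.pi / q) * a.2)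

/-- The space `M_{p,q}`: the quotient of the cylinder `[0, 1] × S¹` by the identifications
`(0, z) ~ (0, e^{2πi/p} z)` and `(1, z) ~ (1, e^{2πi/q} z)`, with the quotient topology. -/
def Mpq (p q : ℕ) : Type := Quot (MpqRel p q)

noncomputable instance (p q : ℕ) : TopologicalSpace (Mpq p q) := instTopologicalSpaceQuot

/-- The base point of `M_{p,q}`: the class of `(0, 1)`. -/
noncomputable def mpqBasePoint (p q : ℕ) : Mpq p q :=
  Quot.mk _ (⟨0, by norm_num [Set.mem_Icc]⟩, 1)

/-- The real projective plane: the quotient of the unit sphere `S² ⊆ ℝ³` by the antipodal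
identification `x ~ −x`, with the quotient topology. -/
def RP2 : Type :=
  Quot fun x y : Metric.sphere (0 : EuclideanSpace ℝ (Fin 3)) 1 =>
    (y : EuclideanSpace ℝ (Fin 3)) = -(x : EuclideanSpace ℝ (Fin 3))

noncomputable instance : TopologicalSpace RP2 := instTopologicalSpaceQuot

/-- The base point of `ℝP²`: the class of `(1, 0, 0)`. -/
noncomputable def rp2BasePoint : RP2 :=
  Quot.mk _ ⟨EuclideanSpace.single (0 : Fin 3) (1 : ℝ), by
    simp [EuclideanSpace.norm_single]⟩



open Quaternion Topology

namespace MpqAux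

noncomputable section

/-- The group of unit quaternions. -/
abbrev S3 := Metric.sphere (0 : ℍ[ℝ]) 1

/-- The unit sphere in `ℝ³`. -/
abbrev S2 := Metric.sphere (0 : EuclideanSpace ℝ (Fin 3)) 1

/-- vectors of `ℝ³` as imaginary quaternions -/
def toQ (v : EuclideanSpace ℝ (Fin 3)) : ℍ[ℝ] := ⟨0, v 0, v 1, v 2⟩

@[simp] theorem toQ_re (v) : (toQ v).re = 0 := rfl
@[simp] theorem toQ_imI (v) : (toQ v).imI = v 0 := rfl
@[simp] theorem toQ_imJ (v) : (toQ v).imJ = v 1 := rfl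
@[simp] theorem toQ_imK (v) : (toQ v).imK = v 2 := rfl

/-- imaginary part of a quaternion as a vector -/
def vec (x : ℍ[ℝ]) : EuclideanSpace ℝ (Fin 3) := !₂[x.imI, x.imJ, x.imK]

theorem norm_sq_quat (x : ℍ[ℝ]) : ‖x‖ ^ 2 = x.re ^ 2 + x.imI ^ 2 + x.imJ ^ 2 + x.imK ^ 2 := by
  rw [sq, ← Quaternion.normSq_eq_norm_mul_self, Quaternion.normSq_def']

theorem S3_sq (g : S3) : g.1.re ^ 2 + g.1.imI ^ 2 + g.1.imJ ^ 2 + g.1.imK ^ 2 = 1 := by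
  rw [← norm_sq_quat, mem_sphere_zero_iff_norm.1 g.2, one_pow]

theorem mem_S3 {x : ℍ[ℝ]} (h : x.re ^ 2 + x.imI ^ 2 + x.imJ ^ 2 + x.imK ^ 2 = 1) :
    x ∈ Metric.sphere (0 : ℍ[ℝ]) 1 := by
  rw [← norm_sq_quat] at h
  rw [mem_sphere_zero_iff_norm]
  exact (pow_eq_one_iff_of_nonneg (norm_nonneg _) two_ne_zero).1 h

theorem norm_sq_vec (v : EuclideanSpace ℝ (Fin 3)) : ‖v‖ ^ 2 = v 0 ^ 2 + v 1 ^ 2 + v 2 ^ 2 := by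
  rw [EuclideanSpace.norm_sq_eq]; simp [Fin.sum_univ_three]

theorem S2_sq (v : S2) : v.1 0 ^ 2 + v.1 1 ^ 2 + v.1 2 ^ 2 = 1 := by
  rw [← norm_sq_vec, mem_sphere_zero_iff_norm.1 v.2, one_pow]

theorem mem_S2 {v : EuclideanSpace ℝ (Fin 3)} (h : v 0 ^ 2 + v 1 ^ 2 + v 2 ^ 2 = 1) :
    v ∈ Metric.sphere (0 : EuclideanSpace ℝ (Fin 3)) 1 := by
  rw [← norm_sq_vec] at h
  rw [mem_sphere_zero_iff_norm]
  exact (pow_eq_one_iff_of_nonneg (norm_nonneg _) two_ne_zero).1 h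

theorem continuous_vec : Continuous vec := by
  unfold vec
  refine (PiLp.continuous_toLp 2 _).comp (continuous_pi fun i => ?_)
  fin_cases i
  · exact Quaternion.continuous_imI
  · exact Quaternion.continuous_imJ
  · exact Quaternion.continuous_imK

theorem toQ_eq (v : EuclideanSpace ℝ (Fin 3)) : toQ v = v 0 • (⟨0, 1, 0, 0⟩ : ℍ[ℝ])
    + v 1 • (⟨0, 0, 1, 0⟩ : ℍ[ℝ]) + v 2 • (⟨0, 0, 0, 1⟩ : ℍ[ℝ]) := by
  ext <;> simp [toQ]

theorem continuous_toQ : Continuous toQ := by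
  have : toQ = fun v => v 0 • (⟨0, 1, 0, 0⟩ : ℍ[ℝ])
    + v 1 • (⟨0, 0, 1, 0⟩ : ℍ[ℝ]) + v 2 • (⟨0, 0, 0, 1⟩ : ℍ[ℝ]) := funext toQ_eq
  rw [this]
  have h : ∀ i, Continuous fun v : EuclideanSpace ℝ (Fin 3) => v i := fun i => by fun_prop
  exact (((h 0).smul continuous_const).add ((h 1).smul continuous_const)).add
    ((h 2).smul continuous_const)

theorem toQ_vec {x : ℍ[ℝ]} (h : x.re = 0) : toQ (vec x) = x := by
  ext <;> simp [toQ, vec, h]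

theorem vec_toQ (v : EuclideanSpace ℝ (Fin 3)) : vec (toQ v) = v := by
  ext i; fin_cases i <;> simp [toQ, vec]

theorem toQ_neg (v : EuclideanSpace ℝ (Fin 3)) : toQ (-v) = - toQ v := by
  ext <;> simp

theorem vec_neg (x : ℍ[ℝ]) : vec (-x) = - vec x := by
  ext i; fin_cases i <;> simp [vec]

theorem S3_star_mul (g : S3) : star g.1 * g.1 = 1 := by
  rw [Quaternion.star_mul_self, Quaternion.normSq_eq_norm_mul_self,
    mem_sphere_zero_iff_norm.1 g.2]; simp

theorem S3_mul_star (g : S3) : g.1 * star g.1 = 1 := by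
  rw [Quaternion.self_mul_star, Quaternion.normSq_eq_norm_mul_self,
    mem_sphere_zero_iff_norm.1 g.2]; simp

theorem re_conj (g : ℍ[ℝ]) (v : EuclideanSpace ℝ (Fin 3)) : (g * toQ v * star g).re = 0 := by
  simp; ring

theorem norm_toQ (v : EuclideanSpace ℝ (Fin 3)) : ‖toQ v‖ = ‖v‖ := by
  rw [← sq_eq_sq₀ (norm_nonneg _) (norm_nonneg _), norm_sq_quat, norm_sq_vec]; simp [toQ]

/-- The rotation action of unit quaternions on the sphere. -/
def act (g : S3) (v : S2) : S2 :=
  ⟨vec (g.1 * toQ v.1 * star g.1), by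
    rw [mem_sphere_zero_iff_norm, ← norm_toQ, toQ_vec (re_conj _ _), norm_mul, norm_mul, norm_star,
      norm_toQ, mem_sphere_zero_iff_norm.1 g.2, mem_sphere_zero_iff_norm.1 v.2]; simp⟩

theorem act_mul (g h : S3) (v : S2) : act (g * h) v = act g (act h v) := by
  apply Subtype.ext
  simp only [act]
  rw [toQ_vec (re_conj _ _)]
  simp [mul_assoc]

theorem act_one (v : S2) : act 1 v = v := by
  apply Subtype.ext
  simp only [act]
  simp [vec_toQ]

theorem act_neg (g : S3) (v : S2) : act g (-v) = - act g v := by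
  apply Subtype.ext
  simp only [act, coe_neg_sphere]
  rw [toQ_neg, mul_neg, neg_mul, vec_neg]

theorem continuous_act : Continuous fun x : S3 × S2 => act x.1 x.2 := by
  refine Continuous.subtype_mk (continuous_vec.comp ?_) _
  refine ((continuous_subtype_val.comp continuous_fst).mul (continuous_toQ.comp
    (continuous_subtype_val.comp continuous_snd))).mul ?_
  exact (continuous_subtype_val.comp continuous_fst).star

/-- projection `S² → ℝP²` -/
def mkRP (v : S2) : RP2 := Quot.mk _ v

theorem mkRP_neg (v : S2) : mkRP (-v) = mkRP v := by
  refine (Quot.sound ?_).symm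
  exact coe_neg_sphere v

theorem continuous_mkRP : Continuous mkRP := continuous_quot_mk

theorem isOpenQuotientMap_mkRP : IsOpenQuotientMap mkRP := by
  refine ⟨Quot.mk_surjective, continuous_mkRP, fun U hU => ?_⟩
  have : mkRP ⁻¹' (mkRP '' U) = U ∪ (fun x => -x) ⁻¹' U := by
    ext x
    constructor
    · rintro ⟨y, hy, hxy⟩
      have key : ∀ a b : RP2, a = b → ∀ x y, mkRP x = a → mkRP y = b → (y = x ∨ y = -x) := by
        rintro a _ rfl x y rfl h
        have h' := Quot.eqvGen_exact h
        induction h' with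
        | rel x y h0 => right; apply Subtype.ext; rw [coe_neg_sphere, h0, neg_neg]
        | refl => left; rfl
        | symm x y _ ih =>
          rcases ih (Quot.eqvGen_sound (by assumption)) with h | h
          · left; exact h.symm
          · right; rw [h, neg_neg]
        | trans x y z h1 h2 ih1 ih2 =>
          rcases ih1 (Quot.eqvGen_sound h1) with h | h <;>
            rcases ih2 (Quot.eqvGen_sound h2) with h' | h'
          · left; rw [h, h']
          · right; rw [h, h']
          · right; rw [h, h']
          · left; rw [h, h', neg_neg]
      rcases key _ _ rfl x y rfl hxy with h | h
      · left; rwa [← h]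
      · right; change -x ∈ U; rwa [← h]
    · rintro (h | h)
      · exact ⟨x, h, rfl⟩
      · exact ⟨-x, h, mkRP_neg x⟩
  have h2 : IsOpen (mkRP ⁻¹' (mkRP '' U)) := by
    rw [this]
    exact hU.union (hU.preimage continuous_neg)
  exact h2

/-- action on `ℝP²` -/
def actRP (g : S3) (l : RP2) : RP2 :=
  Quot.lift (fun v => mkRP (act g v)) (fun x y h => by
    have : y = -x := Subtype.ext h
    change mkRP (act g x) = mkRP (act g y)
    rw [this, act_neg, mkRP_neg]) l

theorem actRP_mk (g : S3) (v : S2) : actRP g (mkRP v) = mkRP (act g v) := rfl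

theorem actRP_mul (g h : S3) (l : RP2) : actRP (g * h) l = actRP g (actRP h l) := by
  obtain ⟨v, rfl⟩ := isOpenQuotientMap_mkRP.surjective l
  simp only [actRP_mk, act_mul]

theorem actRP_one (l : RP2) : actRP 1 l = l := by
  obtain ⟨v, rfl⟩ := isOpenQuotientMap_mkRP.surjective l
  simp only [actRP_mk, act_one]

theorem continuous_actRP : Continuous fun x : S3 × RP2 => actRP x.1 x.2 := by
  have h := IsOpenQuotientMap.prodMap (IsOpenQuotientMap.id (X := S3)) isOpenQuotientMap_mkRP
  rw [← h.continuous_comp_iff]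
  exact continuous_mkRP.comp continuous_act

/-- absolute value of the cosine of the angle between two lines -/
def cosRP (l m : RP2) : ℝ :=
  Quot.lift₂ (fun x y : S2 => |(toQ x.1 * toQ y.1).re|)
    (fun a x y h => by simp only [h, toQ_neg, mul_neg, Quaternion.re_neg, abs_neg])
    (fun a x y h => by simp only [h, toQ_neg, neg_mul, Quaternion.re_neg, abs_neg]) l m

theorem cosRP_mk (x y : S2) : cosRP (mkRP x) (mkRP y) = |(toQ x.1 * toQ y.1).re| := rfl

/-- unnormalised rotation taking the second line to the first -/
def rotRaw (l m : RP2) : ℍ[ℝ] :=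
  Quot.lift₂ (fun x y : S2 => ((|(toQ x.1 * toQ y.1).re| : ℝ) : ℍ[ℝ])
      + (toQ x.1 * toQ y.1).re • (toQ x.1 * toQ y.1))
    (fun a x y h => by
      simp only [h, toQ_neg, mul_neg, Quaternion.re_neg, abs_neg, smul_neg, neg_smul, neg_neg])
    (fun a x y h => by
      simp only [h, toQ_neg, neg_mul, Quaternion.re_neg, abs_neg, smul_neg, neg_smul, neg_neg]) l m

theorem rotRaw_mk (x y : S2) : rotRaw (mkRP x) (mkRP y) = ((|(toQ x.1 * toQ y.1).re| : ℝ) : ℍ[ℝ])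
      + (toQ x.1 * toQ y.1).re • (toQ x.1 * toQ y.1) := rfl

theorem continuous_toQmul : Continuous fun z : S2 × S2 => toQ z.1.1 * toQ z.2.1 :=
  (continuous_toQ.comp (continuous_subtype_val.comp continuous_fst)).mul
    (continuous_toQ.comp (continuous_subtype_val.comp continuous_snd))

theorem continuous_cosRP : Continuous fun z : RP2 × RP2 => cosRP z.1 z.2 := by
  have h := IsOpenQuotientMap.prodMap isOpenQuotientMap_mkRP isOpenQuotientMap_mkRP
  rw [← h.continuous_comp_iff]
  exact (Quaternion.continuous_re.comp continuous_toQmul).abs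

theorem continuous_rotRaw : Continuous fun z : RP2 × RP2 => rotRaw z.1 z.2 := by
  have h := IsOpenQuotientMap.prodMap isOpenQuotientMap_mkRP isOpenQuotientMap_mkRP
  rw [← h.continuous_comp_iff]
  have h1 := Quaternion.continuous_re.comp continuous_toQmul
  exact (Quaternion.continuous_coe.comp h1.abs).add (h1.smul continuous_toQmul)

theorem toQ_mul_self (x : S2) : toQ x.1 * toQ x.1 = -1 := by
  have := S2_sq x
  ext <;> simp
  · linarith
  all_goals ring

theorem cosRP_self (l : RP2) : cosRP l l = 1 := by
  obtain ⟨v, rfl⟩ := isOpenQuotientMap_mkRP.surjective l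
  rw [cosRP_mk, toQ_mul_self]; simp

theorem rotRaw_self (l : RP2) : rotRaw l l = (2 : ℝ) • (1 : S3).1 := by
  obtain ⟨v, rfl⟩ := isOpenQuotientMap_mkRP.surjective l
  rw [rotRaw_mk, toQ_mul_self]
  have : (-1 : ℍ[ℝ]).re = -1 := by simp
  rw [this]
  simp only [abs_neg, abs_one, Quaternion.coe_one, two_smul, neg_smul, one_smul, neg_neg]
  rfl

theorem rotRaw_ne_zero {l m : RP2} (h : cosRP l m ≠ 0) : rotRaw l m ≠ 0 := by
  obtain ⟨x, rfl⟩ := isOpenQuotientMap_mkRP.surjective l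
  obtain ⟨y, rfl⟩ := isOpenQuotientMap_mkRP.surjective m
  rw [cosRP_mk] at h
  intro h0
  have := congrArg (fun q : ℍ[ℝ] => q.re) h0
  rw [rotRaw_mk] at this
  simp only [Quaternion.re_add, Quaternion.re_coe, Quaternion.re_smul, Quaternion.re_zero,
    smul_eq_mul] at this
  have h1 : 0 < |(toQ x.1 * toQ y.1).re| := lt_of_le_of_ne (abs_nonneg _) (Ne.symm h)
  have h2 := mul_self_nonneg (toQ x.1 * toQ y.1).re
  linarith

open Classical in
/-- normalisation of quaternions -/
def nrm (x : ℍ[ℝ]) : S3 :=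
  if h : x = 0 then 1 else ⟨‖x‖⁻¹ • x, by
    rw [mem_sphere_zero_iff_norm, norm_smul, norm_inv, norm_norm,
      inv_mul_cancel₀ (norm_ne_zero_iff.2 h)]⟩

theorem nrm_coe {x : ℍ[ℝ]} (h : x ≠ 0) : (nrm x : ℍ[ℝ]) = ‖x‖⁻¹ • x := by
  simp [nrm, h]

theorem continuous_nrm {Y : Type*} [TopologicalSpace Y] {u : Y → ℍ[ℝ]} (hu : Continuous u)
    (h : ∀ y, u y ≠ 0) : Continuous fun y => nrm (u y) := by
  rw [continuous_induced_rng]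
  have : (Subtype.val ∘ fun y => nrm (u y)) = fun y => ‖u y‖⁻¹ • u y :=
    funext fun y => nrm_coe (h y)
  rw [this]
  exact (hu.norm.inv₀ fun y => norm_ne_zero_iff.2 (h y)).smul hu

theorem nrm_S3 (g : S3) : nrm g.1 = g := by
  apply Subtype.ext
  have h : g.1 ≠ 0 := by
    intro h; have := mem_sphere_zero_iff_norm.1 g.2; rw [h] at this; simp at this
  rw [nrm_coe h, mem_sphere_zero_iff_norm.1 g.2]; simp

theorem nrm_smul {c : ℝ} (hc : 0 < c) (g : S3) : nrm (c • g.1) = g := by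
  apply Subtype.ext
  have h : g.1 ≠ 0 := by
    intro h; have := mem_sphere_zero_iff_norm.1 g.2; rw [h] at this; simp at this
  rw [nrm_coe (smul_ne_zero hc.ne' h), norm_smul, mem_sphere_zero_iff_norm.1 g.2, smul_smul,
    Real.norm_of_nonneg hc.le]
  simp [hc.ne']

theorem rot_spec {l m : RP2} (h : cosRP l m ≠ 0) : actRP (nrm (rotRaw l m)) m = l := by
  have hne := rotRaw_ne_zero h
  have hn : ‖rotRaw l m‖ ≠ 0 := norm_ne_zero_iff.2 hne
  have hnc := nrm_coe hne
  have hD : rotRaw l m * star (rotRaw l m) = ((‖rotRaw l m‖ * ‖rotRaw l m‖ : ℝ) : ℍ[ℝ]) := by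
    rw [Quaternion.self_mul_star, Quaternion.normSq_eq_norm_mul_self]
  obtain ⟨x, rfl⟩ := isOpenQuotientMap_mkRP.surjective l
  obtain ⟨y, rfl⟩ := isOpenQuotientMap_mkRP.surjective m
  generalize hd : rotRaw (mkRP x) (mkRP y) = D at *
  rw [rotRaw_mk] at hd
  set c := (toQ x.1 * toQ y.1).re with hc
  have h1 : D * toQ y.1 = |c| • toQ y.1 - c • toQ x.1 := by
    rw [← hd, add_mul, smul_mul_assoc, mul_assoc, toQ_mul_self, Quaternion.coe_mul_eq_smul]
    simp [sub_eq_add_neg]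
  have h2 : toQ x.1 * D = |c| • toQ x.1 - c • toQ y.1 := by
    rw [← hd, mul_add, mul_smul_comm, ← mul_assoc, toQ_mul_self, Quaternion.mul_coe_eq_smul]
    simp [sub_eq_add_neg]
  have h3 : ∀ z : S2, D * toQ y.1 = toQ z.1 * D → act (nrm D) y = z := by
    intro z hz
    apply Subtype.ext
    simp only [act]
    rw [hnc, Quaternion.star_smul, smul_mul_assoc, smul_mul_assoc, mul_smul_comm, hz, mul_assoc, hD,
      Quaternion.mul_coe_eq_smul, smul_smul, smul_smul]
    have h4 : ‖D‖⁻¹ * ‖D‖⁻¹ * (‖D‖ * ‖D‖) = 1 := by field_simp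
    rw [h4, one_smul, vec_toQ]
  rw [actRP_mk]
  rcases le_or_gt c 0 with hc0 | hc0
  · rw [h3 x]
    rw [h1, h2, abs_of_nonpos hc0]; simp only [neg_smul]; abel
  · rw [h3 (-x), mkRP_neg]
    rw [coe_neg_sphere, toQ_neg, neg_mul, h1, h2, abs_of_pos hc0]; abel

theorem rot_self (l : RP2) : nrm (rotRaw l l) = 1 := by
  rw [rotRaw_self, nrm_smul two_pos]

end

end MpqAux

open Quaternion Topology

namespace MpqAux

noncomputable section

local notation "II" => Set.Icc (0 : ℝ) 1

/-- clamping the parameter at `i / N` -/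
def cl (N i : ℕ) (s : II) : II :=
  ⟨min s.1 ((i : ℝ) / N), le_min s.2.1 (by positivity), min_le_of_left_le s.2.2⟩

theorem continuous_cl (N i : ℕ) : Continuous (cl N i) :=
  (continuous_subtype_val.min continuous_const).subtype_mk _

theorem exists_rot {Y : Type*} [TopologicalSpace Y] [CompactSpace Y] (f : C(II × Y, RP2)) :
    ∃ K : C(II × Y, S3), (∀ y, K (0, y) = 1) ∧
      (∀ s y, f (s, y) = actRP (K (s, y)) (f (0, y))) ∧
      ∀ y, (∀ s, f (s, y) = f (0, y)) → ∀ s, K (s, y) = 1 := by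
  let h0 : C((II × II) × Y, ℝ) := ⟨fun z => cosRP (f (z.1.1, z.2)) (f (z.1.2, z.2)), by
    exact continuous_cosRP.comp ((f.continuous.comp (by fun_prop)).prodMk
      (f.continuous.comp (by fun_prop)))⟩
  have huc : UniformContinuous h0.curry :=
    CompactSpace.uniformContinuous_of_continuous h0.curry.continuous
  obtain ⟨δ, hδ, hd⟩ := Metric.uniformContinuous_iff.1 huc 1 one_pos
  obtain ⟨n, hn⟩ := exists_nat_one_div_lt hδ
  have hclose : ∀ s t : II, dist s t < δ → ∀ y, cosRP (f (s, y)) (f (t, y)) ≠ 0 := by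
    intro s t hst y hc
    have h1 : dist ((s, t) : II × II) (t, t) < δ := by
      rw [Prod.dist_eq]; simpa using hst
    have h2 := lt_of_le_of_lt (ContinuousMap.dist_apply_le_dist y) (hd h1)
    have h3 : h0.curry (s, t) y = 0 := hc
    have h4 : h0.curry (t, t) y = 1 := cosRP_self _
    rw [h3, h4] at h2
    simp at h2
  set N := n + 1 with hN
  have hNpos : (0 : ℝ) < N := by positivity
  have hstep : ∀ i s, dist (cl N (i + 1) s) (cl N i s) < δ := by
    intro i s
    refine lt_of_le_of_lt ?_ hn
    rw [Subtype.dist_eq, Real.dist_eq]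
    simp only [cl]
    refine (abs_min_sub_min_le_max _ _ _ _).trans ?_
    rw [sub_self, abs_zero]
    have : ((i + 1 : ℕ) : ℝ) / N - (i : ℝ) / N = 1 / ((n : ℝ) + 1) := by
      rw [hN]; push_cast; ring
    rw [this, abs_of_pos (by positivity)]
    exact max_le (by positivity) le_rfl
  have hcl0 : ∀ i, cl N i 0 = 0 := fun i => by
    apply Subtype.ext
    simp only [cl, Set.Icc.coe_zero]
    exact min_eq_left (by positivity)
  have main : ∀ i, ∃ K : C(II × Y, S3), (∀ y, K (0, y) = 1) ∧
      (∀ s y, f (cl N i s, y) = actRP (K (s, y)) (f (0, y))) ∧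
      ∀ y, (∀ s, f (s, y) = f (0, y)) → ∀ s, K (s, y) = 1 := by
    intro i
    induction i with
    | zero =>
      refine ⟨ContinuousMap.const _ 1, fun y => rfl, fun s y => ?_, fun y _ s => rfl⟩
      have : cl N 0 s = 0 := by
        apply Subtype.ext
        simp only [cl, Set.Icc.coe_zero]
        simpa using s.2.1
      rw [this]; exact (actRP_one _).symm
    | succ i ih =>
      obtain ⟨K, hK0, hK1, hK2⟩ := ih
      have hc : Continuous fun z : II × Y =>
          rotRaw (f (cl N (i + 1) z.1, z.2)) (f (cl N i z.1, z.2)) := by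
        refine continuous_rotRaw.comp ((f.continuous.comp ?_).prodMk (f.continuous.comp ?_))
        · exact ((continuous_cl _ _).comp continuous_fst).prodMk continuous_snd
        · exact ((continuous_cl _ _).comp continuous_fst).prodMk continuous_snd
      refine ⟨⟨fun z => nrm (rotRaw (f (cl N (i + 1) z.1, z.2)) (f (cl N i z.1, z.2))) * K z,
        (continuous_nrm hc fun z => rotRaw_ne_zero (hclose _ _ (hstep i z.1) z.2)).mul
          K.continuous⟩, ?_, ?_, ?_⟩
      · intro y
        simp only [ContinuousMap.coe_mk, hcl0, rot_self, hK0, mul_one]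
      · intro s y
        simp only [ContinuousMap.coe_mk]
        rw [actRP_mul, ← hK1, rot_spec (hclose _ _ (hstep i s) y)]
      · intro y hy s
        simp only [ContinuousMap.coe_mk]
        rw [hK2 y hy, hy (cl N (i + 1) s), hy (cl N i s), rot_self, mul_one]
  obtain ⟨K, h1, h2, h3⟩ := main N
  refine ⟨K, h1, fun s y => ?_, h3⟩
  have : cl N N s = s := by
    apply Subtype.ext
    simp only [cl]
    rw [div_self hNpos.ne']
    exact min_eq_left s.2.2
  rw [← h2, this]

/-! ### circle subgroup -/

/-- quaternion with given coordinates -/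
def mkQ (a b c d : ℝ) : ℍ[ℝ] := ⟨a, b, c, d⟩

@[simp] theorem mkQ_re (a b c d : ℝ) : (mkQ a b c d).re = a := rfl
@[simp] theorem mkQ_imI (a b c d : ℝ) : (mkQ a b c d).imI = b := rfl
@[simp] theorem mkQ_imJ (a b c d : ℝ) : (mkQ a b c d).imJ = c := rfl
@[simp] theorem mkQ_imK (a b c d : ℝ) : (mkQ a b c d).imK = d := rfl

theorem mkQ_eq (a b c d : ℝ) : mkQ a b c d = a • mkQ 1 0 0 0 + b • mkQ 0 1 0 0 + c • mkQ 0 0 1 0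
    + d • mkQ 0 0 0 1 := by
  ext <;> simp

theorem continuous_quat {Y : Type*} [TopologicalSpace Y] {a b c d : Y → ℝ} (ha : Continuous a)
    (hb : Continuous b) (hc : Continuous c) (hd : Continuous d) :
    Continuous fun y => mkQ (a y) (b y) (c y) (d y) := by
  simp_rw [mkQ_eq (a _) (b _) (c _) (d _)]
  exact (((ha.smul continuous_const).add (hb.smul continuous_const)).add
    (hc.smul continuous_const)).add (hd.smul continuous_const)

/-- one parameter subgroup with `e 1 = 1` -/
def e (x : ℝ) : S3 := ⟨mkQ (Real.cos (2 * Real.pi * x)) (Real.sin (2 * Real.pi * x)) 0 0, mem_S3 (by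
  simp)⟩

/-- one parameter subgroup through `j` -/
def ej (x : ℝ) : S3 := ⟨mkQ (Real.cos (Real.pi / 2 * x)) 0 (Real.sin (Real.pi / 2 * x)) 0, mem_S3 (by
  simp)⟩

/-- the quaternion `j` -/
def jq : S3 := ⟨mkQ 0 0 1 0, mem_S3 (by simp)⟩

theorem S3_ext {g h : S3} (h1 : g.1.re = h.1.re) (h2 : g.1.imI = h.1.imI) (h3 : g.1.imJ = h.1.imJ)
    (h4 : g.1.imK = h.1.imK) : g = h :=
  Subtype.ext (by ext <;> assumption)

theorem continuous_e : Continuous e :=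
  (continuous_quat (by fun_prop) (by fun_prop) (by fun_prop) (by fun_prop)).subtype_mk _

theorem continuous_ej : Continuous ej :=
  (continuous_quat (by fun_prop) (by fun_prop) (by fun_prop) (by fun_prop)).subtype_mk _

theorem e_add (x y : ℝ) : e (x + y) = e x * e y := by
  apply S3_ext <;> simp [e, mul_add, Real.cos_add, Real.sin_add]
  ring

theorem ej_add (x y : ℝ) : ej (x + y) = ej x * ej y := by
  apply S3_ext <;> simp [ej, mul_add, Real.cos_add, Real.sin_add]
  ring

theorem e_zero : e 0 = 1 := by apply S3_ext <;> simp [e]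
theorem ej_zero : ej 0 = 1 := by apply S3_ext <;> simp [ej]
theorem ej_one : ej 1 = jq := by apply S3_ext <;> simp [ej, jq]

theorem e_neg (x : ℝ) : e (-x) = (e x)⁻¹ := by
  rw [eq_inv_iff_mul_eq_one, ← e_add]; simp [e_zero]

theorem e_int (n : ℤ) : e n = 1 := by
  have h : 2 * Real.pi * n = n * (2 * Real.pi) := by ring
  have h2 : Real.sin (n * (2 * Real.pi)) = 0 := by
    simpa using Real.sin_int_mul_two_pi_sub 0 n
  apply S3_ext <;> simp [e, h, h2]

theorem jq_e (x : ℝ) : jq * e x = e (-x) * jq := by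
  apply S3_ext <;> simp [e, jq]

theorem jq_sq : jq * jq = e (1 / 2) := by
  have h : 2 * Real.pi * 2⁻¹ = Real.pi := by ring
  apply S3_ext <;> simp [e, jq, h]

theorem e_eq_iff {x y : ℝ} : e x = e y ↔ ∃ n : ℤ, x = y + n := by
  constructor
  · intro h
    have h1 : Real.cos (2 * Real.pi * x) = Real.cos (2 * Real.pi * y) := by
      simpa [e] using congrArg (fun g : S3 => g.1.re) h
    have h2 : Real.sin (2 * Real.pi * x) = Real.sin (2 * Real.pi * y) := by
      simpa [e] using congrArg (fun g : S3 => g.1.imI) h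
    have h3 := Real.Angle.cos_sin_inj h1 h2
    obtain ⟨n, hn⟩ := Real.Angle.angle_eq_iff_two_pi_dvd_sub.1 h3
    refine ⟨n, ?_⟩
    have hp := Real.pi_pos
    have : 2 * Real.pi * (x - y - n) = 0 := by linarith
    rcases mul_eq_zero.1 this with h | h
    · linarith
    · linarith
  · rintro ⟨n, rfl⟩
    rw [e_add, e_int, mul_one]

/-- membership in the circle subgroup -/
def isU (g : S3) : Prop := g.1.imJ = 0 ∧ g.1.imK = 0

/-- membership in the other component of the normaliser -/
def isJ (g : S3) : Prop := g.1.re = 0 ∧ g.1.imI = 0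

theorem isU_e (x : ℝ) : isU (e x) := ⟨rfl, rfl⟩
theorem isU_one : isU 1 := by rw [← e_zero]; exact isU_e 0
theorem isJ_jq : isJ jq := ⟨rfl, rfl⟩

theorem isU.mul {g h : S3} (hg : isU g) (hh : isU h) : isU (g * h) := by
  simp [isU, hg.1, hg.2, hh.1, hh.2]

theorem isU.inv {g : S3} (hg : isU g) : isU g⁻¹ := by
  simp [isU, Quaternion.inv_def, hg.1, hg.2]

theorem not_isU_of_isJ {g : S3} (hJ : isJ g) : ¬ isU g := by
  intro hU
  have := S3_sq g
  rw [hJ.1, hJ.2, hU.1, hU.2] at this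
  norm_num at this

/-- the basepoint of the sphere -/
def e1 : S2 := ⟨EuclideanSpace.single (0 : Fin 3) (1 : ℝ), by simp⟩

theorem base_eq : rp2BasePoint = mkRP e1 := rfl

/-- the orbit map of the base point -/
def Phi (g : S3) : RP2 := actRP g rp2BasePoint

theorem Phi_one : Phi 1 = rp2BasePoint := actRP_one _

theorem Phi_mul (g h : S3) : Phi (g * h) = actRP g (Phi h) := actRP_mul _ _ _

theorem continuous_Phi : Continuous Phi :=
  continuous_actRP.comp (continuous_id.prodMk continuous_const)

/-- square of the first coordinate -/
def sq0 (l : RP2) : ℝ := Quot.lift (fun v : S2 => v.1 0 ^ 2) (fun x y h => by simp [h]) l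

theorem act_e1 (g : S3) : (act g e1).1 0 =
    g.1.re ^ 2 + g.1.imI ^ 2 - g.1.imJ ^ 2 - g.1.imK ^ 2 := by
  simp [act, vec, e1]
  ring

theorem of_Phi_eq {g : S3} (h : Phi g = rp2BasePoint) : isU g ∨ isJ g := by
  have h1 : sq0 (Phi g) = sq0 rp2BasePoint := by rw [h]
  have h2 : sq0 (Phi g) = ((act g e1).1 0) ^ 2 := rfl
  have h3 : sq0 rp2BasePoint = (e1.1 0) ^ 2 := rfl
  have h4 : e1.1 0 = 1 := by simp [e1]
  rw [h2, h3, h4, one_pow, act_e1] at h1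
  have hs := S3_sq g
  have h5 : (g.1.re ^ 2 + g.1.imI ^ 2) * (g.1.imJ ^ 2 + g.1.imK ^ 2) = 0 := by nlinarith
  rcases mul_eq_zero.1 h5 with h | h
  · right; constructor <;> nlinarith [sq_nonneg g.1.re, sq_nonneg g.1.imI]
  · left; constructor <;> nlinarith [sq_nonneg g.1.imJ, sq_nonneg g.1.imK]

theorem Phi_of_isU {g : S3} (h : isU g) : Phi g = rp2BasePoint := by
  have hs := S3_sq g
  rw [h.1, h.2] at hs
  have : act g e1 = e1 := by
    apply Subtype.ext
    ext i
    fin_cases i <;> simp [act, vec, e1, h.1, h.2] <;> linarith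
  rw [base_eq, Phi, base_eq, actRP_mk, this]

theorem Phi_jq : Phi jq = rp2BasePoint := by
  have : act jq e1 = -e1 := by
    apply Subtype.ext
    ext i
    fin_cases i <;> simp [act, vec, e1, jq]
  rw [base_eq, Phi, base_eq, actRP_mk, this, mkRP_neg]

theorem Phi_mul_e (g : S3) (x : ℝ) : Phi (g * e x) = Phi g := by
  rw [Phi_mul, Phi_of_isU (isU_e x)]; rfl

theorem Phi_mul_jq (g : S3) : Phi (g * jq) = Phi g := by
  rw [Phi_mul, Phi_jq]; rfl

theorem of_Phi_eq_Phi {g h : S3} (H : Phi g = Phi h) : isU (g⁻¹ * h) ∨ isJ (g⁻¹ * h) := by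
  apply of_Phi_eq
  rw [Phi_mul, ← H, ← Phi_mul, inv_mul_cancel, Phi_one]

theorem isU_of_connected {T : Type*} [TopologicalSpace T] [PreconnectedSpace T] {g : T → S3}
    (hg : Continuous g) (h : ∀ t, isU (g t) ∨ isJ (g t)) (t₀ : T) (h0 : isU (g t₀)) :
    ∀ t, isU (g t) := by
  have hgv : Continuous fun t => (g t).1 := continuous_subtype_val.comp hg
  have hc1 : IsClosed {t | isU (g t)} :=
    (isClosed_eq (Quaternion.continuous_imJ.comp hgv) continuous_const).inter
      (isClosed_eq (Quaternion.continuous_imK.comp hgv) continuous_const)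
  have hc2 : IsClosed {t | isJ (g t)} :=
    (isClosed_eq (Quaternion.continuous_re.comp hgv) continuous_const).inter
      (isClosed_eq (Quaternion.continuous_imI.comp hgv) continuous_const)
  have he : {t | isU (g t)} = {t | isJ (g t)}ᶜ := by
    ext t
    simp only [Set.mem_ofPred_eq, Set.mem_compl_iff]
    constructor
    · intro h1 h2; exact not_isU_of_isJ h2 h1
    · intro h1; exact (h t).resolve_right h1
  have : IsClopen {t | isU (g t)} := ⟨hc1, by rw [he]; exact hc2.isOpen_compl⟩
  have hu := this.eq_univ ⟨t₀, h0⟩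
  intro t
  have : t ∈ {t | isU (g t)} := by rw [hu]; trivial
  exact this

theorem exists_log {T : Type*} [TopologicalSpace T] [SimplyConnectedSpace T]
    [LocallyPathConnectedSpace T] {g : T → S3} (hg : Continuous g) (h : ∀ t, isU (g t)) :
    ∃ γ : C(T, ℝ), ∀ t, g t = e (γ t) := by
  have hgv : Continuous fun t => (g t).1 := continuous_subtype_val.comp hg
  have hn : ∀ t, (⟨(g t).1.re, (g t).1.imI⟩ : ℂ) ∈ Submonoid.unitSphere ℂ := by
    intro t
    have hs := S3_sq (g t)
    rw [(h t).1, (h t).2] at hs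
    change _ ∈ Metric.sphere (0 : ℂ) 1
    rw [mem_sphere_zero_iff_norm, ← pow_eq_one_iff_of_nonneg (norm_nonneg _) two_ne_zero,
      Complex.sq_norm, Complex.normSq_apply]
    simp only []
    nlinarith
  have hcc : Continuous fun t => (⟨(g t).1.re, (g t).1.imI⟩ : ℂ) := by
    have : (fun t => (⟨(g t).1.re, (g t).1.imI⟩ : ℂ)) =
        fun t => Complex.equivRealProdCLM.symm ((g t).1.re, (g t).1.imI) := rfl
    rw [this]
    exact Complex.equivRealProdCLM.symm.continuous.comp
      ((Quaternion.continuous_re.comp hgv).prodMk (Quaternion.continuous_imI.comp hgv))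
  let c : C(T, Circle) := ⟨fun t => ⟨⟨(g t).1.re, (g t).1.imI⟩, hn t⟩, hcc.subtype_mk _⟩
  have t₀ : T := Classical.arbitrary T
  obtain ⟨x₀, hx₀⟩ := Circle.exp_surjective (c t₀)
  obtain ⟨F, ⟨-, hF⟩, -⟩ := Circle.isCoveringMap_exp.existsUnique_continuousMap_lifts c t₀ x₀ hx₀
  refine ⟨⟨fun t => F t / (2 * Real.pi), F.continuous.div_const _⟩, fun t => ?_⟩
  have h1 : Circle.exp (F t) = c t := congrFun hF t
  have h2 : Complex.exp (F t * Complex.I) = ⟨(g t).1.re, (g t).1.imI⟩ := by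
    rw [← Circle.coe_exp, h1]; rfl
  rw [Complex.exp_mul_I, ← Complex.ofReal_cos, ← Complex.ofReal_sin] at h2
  have h3 : Real.cos (F t) = (g t).1.re := by
    simpa [-Complex.ofReal_cos, -Complex.ofReal_sin] using congrArg Complex.re h2
  have h4 : Real.sin (F t) = (g t).1.imI := by
    simpa [-Complex.ofReal_cos, -Complex.ofReal_sin] using congrArg Complex.im h2
  have hp := Real.pi_pos
  have h5 : 2 * Real.pi * (F t / (2 * Real.pi)) = F t := by field_simp
  apply S3_ext <;> simp [e, h5, h3, h4, (h t).1, (h t).2]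

theorem isU.exists_e {g : S3} (h : isU g) : ∃ x, g = e x := by
  obtain ⟨γ, hγ⟩ := exists_log (T := ℝ) (g := fun _ => g) continuous_const fun _ => h
  exact ⟨γ 0, hγ 0⟩

theorem extend_path (G : C(II, S3)) (ν : S3) (hG : G 1 = G 0 * ν) (E : ℝ → S3) (hE : Continuous E)
    (hE0 : E 0 = 1) (hE1 : E 1 = ν) (hEa : ∀ x y, E (x + y) = E x * E y) :
    ∃ H : C(ℝ, S3), (∀ x : II, H x = G x) ∧ ∀ x, H (x + 1) = H x * ν := by
  let P : ℝ → S3 := fun x => G (Set.projIcc 0 1 zero_le_one x) * (E x)⁻¹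
  have hP : Continuous P := (G.continuous.comp continuous_projIcc).mul hE.inv
  have h01 : P 0 = P 1 := by
    simp only [P, Set.projIcc_left, Set.projIcc_right, hE0, hE1]
    change G 0 * 1⁻¹ = G 1 * ν⁻¹
    rw [hG]; group
  have hPf : Continuous fun x : ℝ => P (Int.fract x) := ContinuousOn.comp_fract'' hP.continuousOn h01
  refine ⟨⟨fun x => P (Int.fract x) * E x, hPf.mul hE⟩, fun x => ?_, fun x => ?_⟩
  · have : P (Int.fract x.1) = P x.1 := by
      rcases eq_or_lt_of_le x.2.2 with h | h
      · rw [h, Int.fract_one, h01]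
      · rw [Int.fract_eq_self.2 ⟨x.2.1, h⟩]
    simp only [ContinuousMap.coe_mk, this, P, Set.projIcc_val]
    group
  · simp only [ContinuousMap.coe_mk, Int.fract_add_one, hEa, hE1, mul_assoc]

theorem lift_loop_one (l : ℝ → RP2) (hl : Continuous l) (hper : ∀ x, l (x + 1) = l x) (A : S3)
    (hA : l 0 = Phi A) : ∃ G : C(ℝ, S3), ∃ ν : S3, (ν = 1 ∨ ν = jq) ∧ G 0 = A ∧
      (∀ x, l x = Phi (G x)) ∧ ∀ x, G (x + 1) = G x * ν := by
  obtain ⟨K, hK0, hK1, -⟩ := exists_rot (Y := Unit)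
    ⟨fun z => l z.1, hl.comp (continuous_subtype_val.comp continuous_fst)⟩
  have hK1' : ∀ s : II, l s = Phi (K (s, ()) * A) := by
    intro s
    have := hK1 s ()
    simp only [ContinuousMap.coe_mk, Set.Icc.coe_zero] at this
    rw [this, hA, Phi_mul]
  have key : ∃ G : C(II, S3), ∃ ν : S3, (ν = 1 ∨ ν = jq) ∧ G 0 = A ∧
      (∀ x : II, l x = Phi (G x)) ∧ G 1 = G 0 * ν := by
    have h1 : Phi A = Phi (K (1, ()) * A) := by
      rw [← hK1', ← hA]
      have := hper 0
      rw [zero_add] at this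
      simpa using this.symm
    have hkc : Continuous fun s : II => K (s, ()) * A :=
      (K.continuous.comp (by fun_prop)).mul continuous_const
    have hec : ∀ c : ℝ, Continuous fun s : II => e (c * s) := fun c =>
      continuous_e.comp (continuous_const.mul continuous_subtype_val)
    rcases of_Phi_eq_Phi h1 with h | h
    · obtain ⟨x, hx⟩ := h.exists_e
      refine ⟨⟨fun s => K (s, ()) * A * e (-x * s), hkc.mul (hec _)⟩, 1, Or.inl rfl, ?_, ?_, ?_⟩
      · simp [hK0, e_zero]
      · intro s; simp only [ContinuousMap.coe_mk]; rw [Phi_mul_e, hK1']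
      · have : K (1, ()) * A = A * e x := by rw [← hx]; group
        simp [hK0, e_zero, this, e_neg]
    · have h2 : isU (A⁻¹ * (K (1, ()) * A) * jq⁻¹) := by
        generalize A⁻¹ * (K (1, ()) * A) = g at h
        have : jq⁻¹ = ⟨mkQ 0 0 (-1) 0, mem_S3 (by simp)⟩ := by
          rw [inv_eq_iff_mul_eq_one]
          apply S3_ext <;> simp [jq]
        rw [this]
        simp [isU, h.1, h.2]
      obtain ⟨x, hx⟩ := h2.exists_e
      refine ⟨⟨fun s => K (s, ()) * A * e (x * s), hkc.mul (hec _)⟩, jq, Or.inr rfl, ?_, ?_, ?_⟩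
      · simp [hK0, e_zero]
      · intro s; simp only [ContinuousMap.coe_mk]; rw [Phi_mul_e, hK1']
      · have : K (1, ()) * A = A * e x * jq := by rw [← hx]; group
        simp only [ContinuousMap.coe_mk, hK0, Set.Icc.coe_one, mul_one, Set.Icc.coe_zero,
          mul_zero, e_zero, one_mul]
        rw [this, mul_assoc _ jq, jq_e, ← mul_assoc, mul_assoc A, ← e_add]
        simp [e_zero]
  obtain ⟨G, ν, hν, hG0, hGl, hG1⟩ := key
  have hext : ∃ H : C(ℝ, S3), (∀ x : II, H x = G x) ∧ ∀ x, H (x + 1) = H x * ν := by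
    rcases hν with rfl | rfl
    · exact extend_path G 1 hG1 (fun _ => 1) continuous_const rfl rfl (fun _ _ => (mul_one 1).symm)
    · exact extend_path G jq hG1 ej continuous_ej ej_zero ej_one ej_add
  obtain ⟨H, hH, hHp⟩ := hext
  refine ⟨H, ν, hν, ?_, fun x => ?_, hHp⟩
  · rw [← hG0]; exact hH 0
  · have p1 : Function.Periodic l 1 := hper
    have p2 : Function.Periodic (fun x => Phi (H x)) 1 := by
      intro x
      simp only []
      rw [hHp]
      rcases hν with rfl | rfl
      · rw [mul_one]
      · rw [Phi_mul_jq]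
    have h1 := p1.sub_zsmul_eq ⌊x⌋ (x := x)
    have h2 := p2.sub_zsmul_eq ⌊x⌋ (x := x)
    simp only [zsmul_eq_mul, mul_one, Int.self_sub_floor] at h1 h2
    rw [← h1, ← h2]
    have h3 := hGl ⟨Int.fract x, Int.fract_nonneg x, (Int.fract_lt_one x).le⟩
    rw [← hH] at h3
    exact h3

theorem lift_loop (h : ℝ) (hh : 0 < h) (l : ℝ → RP2) (hl : Continuous l)
    (hper : ∀ x, l (x + h) = l x) (A : S3)
    (hA : l 0 = Phi A) : ∃ G : C(ℝ, S3), ∃ ν : S3, (ν = 1 ∨ ν = jq) ∧ G 0 = A ∧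
      (∀ x, l x = Phi (G x)) ∧ ∀ x, G (x + h) = G x * ν := by
  obtain ⟨G, ν, h1, h2, h3, h4⟩ := lift_loop_one (fun x => l (h * x))
    (hl.comp (by fun_prop)) (fun x => by rw [mul_add, mul_one, hper]) A (by rw [mul_zero, hA])
  refine ⟨⟨fun x => G (x / h), G.continuous.comp (by fun_prop)⟩, ν, h1, ?_, fun x => ?_, fun x => ?_⟩
  · simp [h2]
  · simp only [ContinuousMap.coe_mk]
    rw [← h3, mul_div_cancel₀ _ hh.ne']
  · simp only [ContinuousMap.coe_mk]
    rw [← h4, add_div, div_self hh.ne']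

end

end MpqAux

open Quaternion Topology

namespace MpqAux

noncomputable section

local notation "II" => Set.Icc (0 : ℝ) 1

variable {p q : ℕ}

/-- the covering of the cylinder -/
def cyl (z : II × ℝ) : II × Circle := (z.1, Circle.exp (2 * Real.pi * z.2))

theorem isOpenQuotientMap_cyl : IsOpenQuotientMap cyl := by
  have h1 : IsOpenQuotientMap (Circle.exp : ℝ → Circle) :=
    ⟨Circle.exp_surjective, Circle.exp.continuous, Circle.isCoveringMap_exp.isLocalHomeomorph.isOpenMap⟩
  have h2 : IsOpenQuotientMap (fun x : ℝ => 2 * Real.pi * x) :=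
    (Homeomorph.mulLeft₀ (2 * Real.pi) (by positivity)).isOpenQuotientMap
  exact IsOpenQuotientMap.id.prodMap (h1.comp h2)

theorem continuous_cyl : Continuous cyl := isOpenQuotientMap_cyl.continuous

/-- projection of the strip onto `Mpq` -/
def pr (p q : ℕ) (z : II × ℝ) : Mpq p q := Quot.mk _ (cyl z)

theorem continuous_pr : Continuous (pr p q) := continuous_quot_mk.comp continuous_cyl

theorem pr_surjective : Function.Surjective (pr p q) :=
  Quot.mk_surjective.comp isOpenQuotientMap_cyl.surjective

instance : CompactSpace (Mpq p q) := Quot.compactSpace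

theorem pr_base : pr p q (0, 0) = mpqBasePoint p q := by
  simp only [pr, cyl, mul_zero, Circle.exp_zero]; rfl

theorem pr_add_one (s : II) (θ : ℝ) : pr p q (s, θ + 1) = pr p q (s, θ) := by
  simp only [pr, cyl, mul_add, mul_one, Circle.exp_add_two_pi]
  rfl

theorem pr_zero (θ : ℝ) : pr p q (0, θ + 1 / p) = pr p q (0, θ) := by
  have h : MpqRel p q (cyl (0, θ)) (cyl (0, θ + 1 / p)) := by
    refine Or.inl ⟨rfl, rfl, ?_⟩
    simp only [cyl]
    rw [← Circle.exp_add]; congr 1; ring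
  exact (Quot.sound h).symm

theorem pr_one (θ : ℝ) : pr p q (1, θ + 1 / q) = pr p q (1, θ) := by
  have h : MpqRel p q (cyl (1, θ)) (cyl (1, θ + 1 / q)) := by
    refine Or.inr ⟨rfl, rfl, ?_⟩
    simp only [cyl]
    rw [← Circle.exp_add]; congr 1; ring
  exact (Quot.sound h).symm

theorem descend {Z : Type*} [TopologicalSpace Z] (G : C(II × ℝ, Z))
    (h1 : ∀ s θ, G (s, θ + 1) = G (s, θ)) (hp : ∀ θ, G (0, θ + 1 / p) = G (0, θ))
    (hq : ∀ θ, G (1, θ + 1 / q) = G (1, θ)) :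
    ∃ F : C(Mpq p q, Z), ∀ z, F (pr p q z) = G z := by
  have hf : Function.FactorsThrough G (⟨cyl, continuous_cyl⟩ : C(II × ℝ, II × Circle)) := by
    rintro ⟨s, θ⟩ ⟨s', θ'⟩ h
    simp only [ContinuousMap.coe_mk, cyl, Prod.mk.injEq] at h
    obtain ⟨rfl, h⟩ := h
    obtain ⟨m, hm⟩ := Circle.exp_eq_exp.1 h
    have hm' : θ = θ' + m := by
      have hp := Real.pi_pos
      have : 2 * Real.pi * (θ - θ' - m) = 0 := by linarith
      rcases mul_eq_zero.1 this with h | h <;> linarith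
    have : Function.Periodic (fun θ => G (s, θ)) 1 := h1 s
    have := this.int_mul m θ'
    simpa [hm'] using this
  let F1 : C(II × Circle, Z) := isOpenQuotientMap_cyl.isQuotientMap.lift G hf
  have hF1 : ∀ z, F1 (cyl z) = G z := fun z =>
    congrArg (fun f => f z) (isOpenQuotientMap_cyl.isQuotientMap.lift_comp
      (f := ⟨cyl, continuous_cyl⟩) G hf)
  have hres : ∀ a b, MpqRel p q a b → F1 a = F1 b := by
    rintro ⟨s, a⟩ ⟨t, b⟩ h
    obtain ⟨x, hx⟩ := Circle.exp_surjective a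
    have hx2 : Circle.exp (2 * Real.pi * (x / (2 * Real.pi))) = a := by
      rw [← hx]; congr 1; have hp := Real.pi_pos; field_simp
    rcases h with ⟨h1, h2, h3⟩ | ⟨h1, h2, h3⟩
    · have hs : s = 0 := Subtype.ext h1
      have ht : t = 0 := Subtype.ext h2
      subst hs ht
      simp only at h3
      rw [h3, ← hx2, ← Circle.exp_add]
      have := hp (x / (2 * Real.pi))
      rw [← hF1, ← hF1] at this
      simp only [cyl] at this
      rw [← this]; congr 3; ring
    · have hs : s = 1 := Subtype.ext h1
      have ht : t = 1 := Subtype.ext h2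
      subst hs ht
      simp only at h3
      rw [h3, ← hx2, ← Circle.exp_add]
      have := hq (x / (2 * Real.pi))
      rw [← hF1, ← hF1] at this
      simp only [cyl] at this
      rw [← this]; congr 3; ring
  exact ⟨⟨Quot.lift F1 hres, continuous_quot_lift hres F1.continuous⟩, hF1⟩

/-! ### null homotopies -/

/-- functions with smooth lift to the strip -/
def smoothAlg (p q : ℕ) : Subalgebra ℝ C(Mpq p q, ℝ) where
  carrier := {φ | ∃ Φ : ℝ × ℝ → ℝ, ContDiff ℝ 1 Φ ∧
    ∀ (s : II) (θ : ℝ), Φ (s, θ) = φ (pr p q (s, θ))}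
  mul_mem' := by
    rintro a b ⟨A, hA, hA'⟩ ⟨B, hB, hB'⟩
    exact ⟨fun z => A z * B z, hA.mul hB, fun s θ => by simp [hA', hB']⟩
  add_mem' := by
    rintro a b ⟨A, hA, hA'⟩ ⟨B, hB, hB'⟩
    exact ⟨fun z => A z + B z, hA.add hB, fun s θ => by simp [hA', hB']⟩
  algebraMap_mem' := fun r => ⟨fun _ => r, contDiff_const, fun s θ => rfl⟩

theorem exists_smooth (Φ : ℝ × ℝ → ℝ) (hΦ : ContDiff ℝ 1 Φ)
    (h1 : ∀ (s : II) (θ : ℝ), Φ (s, θ + 1) = Φ (s, θ)) (hp : ∀ θ, Φ (0, θ + 1 / p) = Φ (0, θ))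
    (hq : ∀ θ, Φ (1, θ + 1 / q) = Φ (1, θ)) :
    ∃ φ ∈ smoothAlg p q, ∀ (s : II) (θ : ℝ), φ (pr p q (s, θ)) = Φ (s, θ) := by
  obtain ⟨F, hF⟩ := descend (p := p) (q := q) (Z := ℝ)
    ⟨fun z : II × ℝ => Φ (z.1, z.2), hΦ.continuous.comp (by fun_prop)⟩ h1
    (by simpa using hp) (by simpa using hq)
  exact ⟨F, ⟨Φ, hΦ, fun s θ => (hF (s, θ)).symm⟩, fun s θ => hF (s, θ)⟩

theorem nat_mul_period {m k : ℕ} (hm : 0 < m) (h : m ∣ k) (θ : ℝ) :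
    ∃ n : ℕ, 2 * Real.pi * (k * (θ + 1 / m)) = 2 * Real.pi * (k * θ) + n * (2 * Real.pi) := by
  obtain ⟨n, rfl⟩ := h
  refine ⟨n, ?_⟩
  have : (m : ℝ) ≠ 0 := by positivity
  push_cast
  field_simp

theorem sep_aux (hp : 0 < p) (hq : 0 < q) (s : II) (θ θ' : ℝ)
    (hA : ∀ φ ∈ smoothAlg p q, φ (pr p q (s, θ)) = φ (pr p q (s, θ')))
    (u : ℝ → ℝ) (k : ℕ) (hu : ContDiff ℝ 1 u) (h0 : u 0 = 0 ∨ p ∣ k) (h1 : u 1 = 0 ∨ q ∣ k)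
    (hus : u s ≠ 0) : ∃ n : ℤ, (k : ℝ) * θ = k * θ' + n := by
  have key : ∀ T : ℝ → ℝ, ContDiff ℝ 1 T → (∀ (x : ℝ) (n : ℕ), T (x + n * (2 * Real.pi)) = T x) →
      T (2 * Real.pi * (k * θ)) = T (2 * Real.pi * (k * θ')) := by
    intro T hT hper
    obtain ⟨φ, hφ, hφ'⟩ := exists_smooth (p := p) (q := q)
      (fun z => u z.1 * T (2 * Real.pi * (k * z.2)))
      ((hu.comp contDiff_fst).mul (hT.comp (by fun_prop)))
      (fun s θ => by
        obtain ⟨n, hn⟩ := nat_mul_period one_pos (one_dvd k) θ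
        simp only [Nat.cast_one, div_one] at hn
        simp only [hn, hper]) (fun θ => by
        rcases h0 with h0 | h0
        · simp [h0]
        · obtain ⟨n, hn⟩ := nat_mul_period hp h0 θ
          simp only [hn, hper]) (fun θ => by
        rcases h1 with h0 | h0
        · simp [h0]
        · obtain ⟨n, hn⟩ := nat_mul_period hq h0 θ
          simp only [hn, hper])
    have := hA φ hφ
    rw [hφ', hφ'] at this
    exact mul_left_cancel₀ hus this
  have hc := key Real.cos Real.contDiff_cos fun x n => Real.cos_add_nat_mul_two_pi x n
  have hs := key Real.sin Real.contDiff_sin fun x n => Real.sin_add_nat_mul_two_pi x n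
  apply e_eq_iff.1
  apply S3_ext <;> simp [e, hc, hs]

theorem separates (hp : 0 < p) (hq : 0 < q) : (smoothAlg p q).SeparatesPoints := by
  intro x y hxy
  by_contra hcon
  apply hxy
  have hA : ∀ φ ∈ smoothAlg p q, φ x = φ y := by
    intro φ hφ
    by_contra hne
    exact hcon ⟨φ, ⟨φ, hφ, rfl⟩, hne⟩
  obtain ⟨⟨s, θ⟩, rfl⟩ := pr_surjective x
  obtain ⟨⟨s', θ'⟩, rfl⟩ := pr_surjective y
  have hs : s = s' := by
    obtain ⟨φ, hφ, hφ'⟩ := exists_smooth (p := p) (q := q) (fun z => z.1) contDiff_fst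
      (fun _ _ => rfl) (fun _ => rfl) (fun _ => rfl)
    have := hA φ hφ
    rw [hφ', hφ'] at this
    exact Subtype.ext this
  subst hs
  have hp' : (p : ℝ) ≠ 0 := by positivity
  have hq' : (q : ℝ) ≠ 0 := by positivity
  by_cases hs0 : s = 0
  · subst hs0
    obtain ⟨n, hn⟩ := sep_aux hp hq 0 θ θ' hA (fun x => 1 - x) p (by fun_prop) (Or.inr dvd_rfl)
      (Or.inl (by simp)) (by simp)
    have hθ : θ = θ' + n * (1 / p) := by field_simp; linarith
    have hper : Function.Periodic (fun θ => pr p q (0, θ)) (1 / p) := pr_zero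
    rw [hθ]
    exact hper.int_mul n θ'
  by_cases hs1 : s = 1
  · subst hs1
    obtain ⟨n, hn⟩ := sep_aux hp hq 1 θ θ' hA (fun x => x) q (by fun_prop) (Or.inl rfl)
      (Or.inr dvd_rfl) (by simp)
    have hθ : θ = θ' + n * (1 / q) := by field_simp; linarith
    have hper : Function.Periodic (fun θ => pr p q (1, θ)) (1 / q) := pr_one
    rw [hθ]
    exact hper.int_mul n θ'
  · obtain ⟨n, hn⟩ := sep_aux hp hq s θ θ' hA (fun x => x * (1 - x)) 1 (by fun_prop)
      (Or.inl (by simp)) (Or.inl (by simp)) (by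
        refine mul_ne_zero (fun h => hs0 (Subtype.ext h)) (fun h => hs1 (Subtype.ext ?_))
        simp only [Set.Icc.coe_one]; linarith)
    have hθ : θ = θ' + n * 1 := by simpa using hn
    have hper : Function.Periodic (fun θ => pr p q (s, θ)) 1 := pr_add_one s
    rw [hθ]
    exact hper.int_mul n θ'

theorem homotopic_line {X : Type*} [TopologicalSpace X] (F0 F1 : C(X, ℍ[ℝ])) (K0 K1 : C(X, S3))
    (h : ∀ (t : II) x, (1 - t.1) • F0 x + t.1 • F1 x ≠ 0)
    (h0 : ∀ x, K0 x = nrm (F0 x)) (h1 : ∀ x, K1 x = nrm (F1 x)) :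
    ContinuousMap.Homotopic K0 K1 := by
  refine ⟨⟨⟨fun z => nrm ((1 - z.1.1) • F0 z.2 + z.1.1 • F1 z.2), continuous_nrm ?_ fun z => h _ _⟩,
    fun x => ?_, fun x => ?_⟩⟩
  · exact (((continuous_const.sub (continuous_subtype_val.comp continuous_fst))).smul
      (F0.continuous.comp continuous_snd)).add ((continuous_subtype_val.comp continuous_fst).smul
      (F1.continuous.comp continuous_snd))
  · simp [h0]
  · simp [h1]

theorem null_homotopic (hp : 0 < p) (hq : 0 < q) (K : C(Mpq p q, S3)) :
    ∃ c : S3, ContinuousMap.Homotopic K (ContinuousMap.const _ c) := by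
  have hKv : Continuous fun x => (K x).1 := continuous_subtype_val.comp K.continuous
  have happ : ∀ f : C(Mpq p q, ℝ), ∃ φ : C(Mpq p q, ℝ), (∃ Φ : ℝ × ℝ → ℝ, ContDiff ℝ 1 Φ ∧
      ∀ (s : II) (θ : ℝ), Φ (s, θ) = φ (pr p q (s, θ))) ∧ ∀ x, |φ x - f x| < 1 / 4 := by
    intro f
    obtain ⟨⟨g, hg⟩, hgf⟩ :=
      ContinuousMap.exists_mem_subalgebra_near_continuousMap_of_separatesPoints (smoothAlg p q)
        (separates hp hq) f (1 / 4) (by norm_num)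
    refine ⟨g, hg, fun x => lt_of_le_of_lt ?_ hgf⟩
    exact ContinuousMap.norm_coe_le_norm (g - f) x
  obtain ⟨a, ⟨a', ha1, ha2⟩, ha⟩ := happ ⟨_, Quaternion.continuous_re.comp hKv⟩
  obtain ⟨b, ⟨b', hb1, hb2⟩, hb⟩ := happ ⟨_, Quaternion.continuous_imI.comp hKv⟩
  obtain ⟨c, ⟨c', hc1, hc2⟩, hc⟩ := happ ⟨_, Quaternion.continuous_imJ.comp hKv⟩
  obtain ⟨d, ⟨d', hd1, hd2⟩, hd⟩ := happ ⟨_, Quaternion.continuous_imK.comp hKv⟩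
  let T : C(Mpq p q, ℍ[ℝ]) := ⟨fun x => mkQ (a x) (b x) (c x) (d x),
    continuous_quat a.continuous b.continuous c.continuous d.continuous⟩
  have hsq : ∀ x : ℝ, |x| < 1 / 4 → x ^ 2 < 1 / 16 := fun x hx => by
    rw [abs_lt] at hx; nlinarith
  have hT : ∀ x, ‖T x - (K x).1‖ < 1 := by
    intro x
    have h1 := hsq _ (ha x)
    have h2 := hsq _ (hb x)
    have h3 := hsq _ (hc x)
    have h4 := hsq _ (hd x)
    have h5 : ‖T x - (K x).1‖ ^ 2 < 1 := by
      rw [norm_sq_quat]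
      simp only [Quaternion.re_sub, Quaternion.imI_sub, Quaternion.imJ_sub, Quaternion.imK_sub]
      simp only [ContinuousMap.coe_mk, Function.comp] at h1 h2 h3 h4
      simp only [T, ContinuousMap.coe_mk, mkQ_re, mkQ_imI, mkQ_imJ, mkQ_imK]
      linarith
    nlinarith [norm_nonneg (T x - (K x).1)]
  have hK1 : ∀ x, ‖(K x).1‖ = 1 := fun x => mem_sphere_zero_iff_norm.1 (K x).2
  have hline : ∀ (t : II) x, (1 - t.1) • (K x).1 + t.1 • T x ≠ 0 := by
    intro t x h
    have h1 : (K x).1 = - (t.1 • (T x - (K x).1)) := by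
      rw [smul_sub, eq_neg_iff_add_eq_zero, ← h, sub_smul, one_smul]; abel
    have h2 := hK1 x
    rw [h1, norm_neg, norm_smul, Real.norm_of_nonneg t.2.1] at h2
    have := hT x
    have := t.2.2
    nlinarith [norm_nonneg (T x - (K x).1), t.2.1]
  have hT0 : ∀ x, T x ≠ 0 := fun x => by simpa using hline 1 x
  let f : ℝ × ℝ × ℝ → ℍ[ℝ] := fun z => z.1 • (a' z.2 • mkQ 1 0 0 0 + b' z.2 • mkQ 0 1 0 0
    + c' z.2 • mkQ 0 0 1 0 + d' z.2 • mkQ 0 0 0 1)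
  have hf : ContDiff ℝ 1 f := by
    refine contDiff_fst.smul ((((?_ : ContDiff ℝ 1 _).add ?_).add ?_).add ?_)
    · exact (ha1.comp contDiff_snd).smul contDiff_const
    · exact (hb1.comp contDiff_snd).smul contDiff_const
    · exact (hc1.comp contDiff_snd).smul contDiff_const
    · exact (hd1.comp contDiff_snd).smul contDiff_const
  have hrank : Module.finrank ℝ (ℝ × ℝ × ℝ) < Module.finrank ℝ ℍ[ℝ] := by
    rw [Quaternion.finrank_eq_four]; simp
  obtain ⟨A, hA⟩ := (hf.dense_compl_range_of_finrank_lt_finrank hrank).nonempty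
  have hA' : ∀ (l : ℝ) x, l • T x ≠ A := by
    intro l x h
    obtain ⟨⟨s, θ⟩, rfl⟩ := pr_surjective x
    apply hA
    refine ⟨(l, s.1, θ), ?_⟩
    simp only [f]
    rw [← h, ha2, hb2, hc2, hd2, ← mkQ_eq]
    rfl
  let KT : C(Mpq p q, S3) := ⟨fun x => nrm (T x), continuous_nrm T.continuous hT0⟩
  refine ⟨nrm A, ContinuousMap.Homotopic.trans (g := KT) ?_ ?_⟩
  · exact homotopic_line ⟨_, hKv⟩ T K KT hline (fun x => (nrm_S3 _).symm) fun x => rfl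
  · refine homotopic_line T (ContinuousMap.const _ A) _ _ ?_ (fun x => rfl) fun x => rfl
    intro t x h
    simp only [ContinuousMap.const_apply] at h
    by_cases ht : t.1 = 0
    · rw [ht] at h; apply hT0 x; simpa using h
    · apply hA' (-(1 - t.1) / t.1) x
      have h2 : t.1 • A = (-(1 - t.1)) • T x := by
        rw [neg_smul, eq_neg_iff_add_eq_zero, add_comm, h]
      rw [div_eq_inv_mul, mul_smul, ← h2, smul_smul, inv_mul_cancel₀ ht, one_smul]

/-- a map to the unit quaternions that is `1` at the base point is based null homotopic -/
theorem based_null (hp : 0 < p) (hq : 0 < q) (K : C(Mpq p q, S3)) (m : Mpq p q) (hm : K m = 1) :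
    ∃ H : C(II × Mpq p q, S3), (∀ x, H (0, x) = 1) ∧ (∀ x, H (1, x) = K x) ∧ ∀ t, H (t, m) = 1 := by
  obtain ⟨c, ⟨H⟩⟩ := null_homotopic hp hq K
  let H' := H.symm
  refine ⟨⟨fun z => (H' (z.1, m))⁻¹ * H' z, ?_⟩, ?_, ?_, ?_⟩
  · exact (H'.continuous.comp (by fun_prop)).inv.mul H'.continuous
  · intro x; simp
  · intro x; simp [hm]
  · intro t; simp

end

end MpqAux

open Quaternion Topology

namespace MpqAux

noncomputable section

local notation "II" => Set.Icc (0 : ℝ) 1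

variable {p q : ℕ}

/-- the two possible multipliers -/
def kap (κ : Bool) : S3 := if κ then jq else 1

/-- the slope correction -/
def cc (q : ℕ) (κ : Bool) : ℝ := if κ then (q : ℝ) / 4 else 0

theorem e_pow (x : ℝ) (n : ℕ) : e x ^ n = e (n * x) := by
  induction n with
  | zero => simp [e_zero]
  | succ n ih => rw [pow_succ, ih, ← e_add]; congr 1; push_cast; ring

theorem jq_pow_even (m : ℕ) : jq ^ (m + m) = e (m / 2) := by
  rw [← two_mul, pow_mul, sq, jq_sq, e_pow]; congr 1; ring

theorem kap_pow (hq : Even q) (κ : Bool) : kap κ ^ q = e (cc q κ) := by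
  obtain ⟨m, rfl⟩ := hq
  cases κ
  · simp [kap, cc, e_zero]
  · simp only [kap, cc, if_true]
    rw [jq_pow_even]; congr 1; push_cast; ring

theorem Phi_mul_kap (g : S3) (κ : Bool) : Phi (g * kap κ) = Phi g := by
  cases κ
  · simp [kap]
  · simpa [kap] using Phi_mul_jq g

theorem iter_mul {G : ℝ → S3} {h : ℝ} {ν : S3} (H : ∀ x, G (x + h) = G x * ν) (n : ℕ) (x : ℝ) :
    G (x + n * h) = G x * ν ^ n := by
  induction n with
  | zero => simp
  | succ n ih =>
    have : x + (n + 1 : ℕ) * h = (x + n * h) + h := by push_cast; ring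
    rw [this, H, ih, pow_succ, mul_assoc]

theorem iter_add {F : ℝ → ℝ} {h c : ℝ} (H : ∀ x, F (x + h) = F x + c) (n : ℕ) (x : ℝ) :
    F (x + n * h) = F x + n * c := by
  induction n with
  | zero => simp
  | succ n ih =>
    have : x + (n + 1 : ℕ) * h = (x + n * h) + h := by push_cast; ring
    rw [this, H, ih]; push_cast; ring

theorem int_const {T : Type*} [TopologicalSpace T] [PreconnectedSpace T] (t₀ : T) {F : T → ℝ}
    (hF : Continuous F) (h : ∀ t, ∃ n : ℤ, F t = n) : ∃ n : ℤ, ∀ t, F t = n := by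
  choose n hn using h
  have hc : Continuous n := by
    rw [Int.isClosedEmbedding_coe_real.isEmbedding.continuous_iff]
    have : ((↑) : ℤ → ℝ) ∘ n = F := funext fun t => (hn t).symm
    rw [this]; exact hF
  refine ⟨n t₀, fun t => ?_⟩
  rw [hn, PreconnectedSpace.constant ‹_› hc (x := t) (y := t₀)]

/-- homotopy type data of a based map -/
def HasType (p q : ℕ) (f : C(Mpq p q, RP2)) (κ : Bool) (n : ℤ) : Prop :=
  ∃ G : C(II × ℝ, S3), G (0, 0) = 1 ∧ (∀ z, f (pr p q z) = Phi (G z)) ∧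
    (∀ s θ, G (s, θ + 1) = G (s, θ)) ∧ (∀ θ, G (0, θ + 1 / p) = G (0, θ)) ∧
    ∀ θ, G (1, θ + 1 / q) * e ((n + cc q κ) * (θ + 1 / q)) = G (1, θ) * e ((n + cc q κ) * θ) * kap κ

theorem continuous_act_comp {X : Type*} [TopologicalSpace X] (H : C(II × X, S3)) (f : C(X, RP2)) :
    Continuous fun z : II × X => actRP (H z) (f z.2) := by
  have h1 : Continuous fun z : II × X => ((H z, f z.2) : S3 × RP2) :=
    H.continuous.prodMk (f.continuous.comp continuous_snd)
  have h2 := continuous_actRP.comp h1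
  exact h2

theorem homotopic_of_act (hp : 0 < p) (hq : 0 < q) {f f' : C(Mpq p q, RP2)} (K : C(Mpq p q, S3))
    (hKm : K (mpqBasePoint p q) = 1) (hf' : ∀ x, f' x = actRP (K x) (f x)) :
    ContinuousMap.HomotopicRel f f' {mpqBasePoint p q} := by
  obtain ⟨H, H0, H1, H2⟩ := based_null hp hq K _ hKm
  have hac := continuous_act_comp H f
  let Hc : C(II × Mpq p q, RP2) := ⟨fun z => actRP (H z) (f z.2), hac⟩
  have e0 : ∀ x, Hc (0, x) = f x := fun x => by
    change actRP (H (0, x)) (f x) = f x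
    rw [H0, actRP_one]
  have e1 : ∀ x, Hc (1, x) = f' x := fun x => by
    change actRP (H (1, x)) (f x) = f' x
    rw [H1, hf']
  have e2 : ∀ t, ∀ x ∈ ({mpqBasePoint p q} : Set (Mpq p q)), Hc (t, x) = f x := fun t x hx => by
    change actRP (H (t, x)) (f x) = f x
    rw [Set.mem_singleton_iff.1 hx, H2, actRP_one]
  exact ⟨⟨⟨Hc, e0, e1⟩, e2⟩⟩

theorem homotopic_of_type (hp : 0 < p) (hq : 0 < q) {f f' : C(Mpq p q, RP2)} {κ : Bool} {n : ℤ}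
    (hf : HasType p q f κ n) (hf' : HasType p q f' κ n) :
    ContinuousMap.HomotopicRel f f' {mpqBasePoint p q} := by
  obtain ⟨G, h0, hG, h1, hGp, hGq⟩ := hf
  obtain ⟨G', h0', hG', h1', hGp', hGq'⟩ := hf'
  let D : C(II × ℝ, S3) := ⟨fun z => G' z * (G z)⁻¹, G'.continuous.mul G.continuous.inv⟩
  have hD : ∀ z, D z = G' z * (G z)⁻¹ := fun z => rfl
  have hD1 : ∀ θ, D (1, θ + 1 / q) = D (1, θ) := fun θ => by
    rw [hD, hD, eq_mul_inv_of_mul_eq (hGq θ), eq_mul_inv_of_mul_eq (hGq' θ)]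
    simp only [mul_inv_rev, inv_inv, mul_assoc, inv_mul_cancel_left, mul_inv_cancel_left]
  obtain ⟨K, hK⟩ := descend (p := p) (q := q) (Z := S3) D
    (fun s θ => by rw [hD, hD, h1, h1']) (fun θ => by rw [hD, hD, hGp, hGp']) hD1
  have hKm : K (mpqBasePoint p q) = 1 := by
    rw [← pr_base, hK, hD, h0, h0', inv_one, mul_one]
  have hf' : ∀ x, f' x = actRP (K x) (f x) := by
    intro x
    obtain ⟨z, rfl⟩ := pr_surjective x
    rw [hK, hG, hG', ← Phi_mul, hD, inv_mul_cancel_right]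
  exact homotopic_of_act hp hq K hKm hf'

theorem HasType.of_homotopic {f f' : C(Mpq p q, RP2)} {κ : Bool} {n : ℤ}
    (hf : HasType p q f κ n) (h : ContinuousMap.HomotopicRel f f' {mpqBasePoint p q}) :
    HasType p q f' κ n := by
  obtain ⟨G, h0, hG, h1, hGp, hGq⟩ := hf
  obtain ⟨H⟩ := h
  obtain ⟨K, -, hK, hKb⟩ := exists_rot (Y := Mpq p q) H.toContinuousMap
  have hKm : K (1, mpqBasePoint p q) = 1 := by
    apply hKb
    intro s
    have a1 : H (s, mpqBasePoint p q) = f (mpqBasePoint p q) := H.eq_fst s rfl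
    have a2 : H (0, mpqBasePoint p q) = f (mpqBasePoint p q) := H.eq_fst 0 rfl
    exact a1.trans a2.symm
  have hf' : ∀ x, f' x = actRP (K (1, x)) (f x) := by
    intro x
    have a1 : H (1, x) = f' x := H.apply_one x
    have a2 : H (0, x) = f x := H.apply_zero x
    rw [← a1, ← a2]; exact hK 1 x
  refine ⟨⟨fun z => K (1, pr p q z) * G z, ?_⟩, ?_, ?_, ?_, ?_, ?_⟩
  · exact (K.continuous.comp (continuous_const.prodMk continuous_pr)).mul G.continuous
  · simp [pr_base, hKm, h0]
  · intro z; simp [hf', hG, Phi_mul]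
  · intro s θ; simp [h1, pr_add_one]
  · intro θ
    simp only [ContinuousMap.coe_mk, hGp, pr_zero]
  · intro θ
    simp only [ContinuousMap.coe_mk, pr_one, mul_assoc]
    rw [hGq, mul_assoc]

theorem HasType.add_p (hp : 0 < p) {f : C(Mpq p q, RP2)} {κ : Bool} {n : ℤ}
    (hf : HasType p q f κ n) (k : ℤ) : HasType p q f κ (n + p * k) := by
  obtain ⟨G, h0, hG, h1, hGp, hGq⟩ := hf
  have hp' : (p : ℝ) ≠ 0 := by positivity
  refine ⟨⟨fun z => G z * e (-(p * k) * z.2), G.continuous.mul (continuous_e.comp (by fun_prop))⟩,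
    ?_, ?_, ?_, ?_, ?_⟩
  · simp [h0, e_zero]
  · intro z; simp only [ContinuousMap.coe_mk]; rw [Phi_mul_e, hG]
  · intro s θ
    simp only [ContinuousMap.coe_mk, h1]
    congr 1
    rw [e_eq_iff]
    exact ⟨-(p * k), by push_cast; ring⟩
  · intro θ
    simp only [ContinuousMap.coe_mk, hGp]
    congr 1
    rw [e_eq_iff]
    exact ⟨-k, by push_cast; field_simp; ring⟩
  · intro θ
    simp only [ContinuousMap.coe_mk, mul_assoc, ← e_add]
    have key : ∀ x : ℝ, -(p * k : ℝ) * x + (((n + p * k : ℤ) : ℝ) + cc q κ) * x =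
      (n + cc q κ) * x := fun x => by push_cast; ring
    have := hGq θ
    rw [mul_assoc] at this
    rw [key, this, ← key θ, e_add, mul_assoc]

theorem HasType.add_q (hq : 0 < q) {f : C(Mpq p q, RP2)} {n : ℤ}
    (hf : HasType p q f false n) (l : ℤ) : HasType p q f false (n + q * l) := by
  obtain ⟨G, h0, hG, h1, hGp, hGq⟩ := hf
  have hq' : (q : ℝ) ≠ 0 := by positivity
  refine ⟨G, h0, hG, h1, hGp, fun θ => ?_⟩
  have := hGq θ
  simp only [cc, kap, add_zero, mul_one, Bool.false_eq_true, if_false] at this ⊢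
  have a1 : e (((n + q * l : ℤ) : ℝ) * (θ + 1 / q)) = e (n * (θ + 1 / q)) * e (q * l * θ) := by
    rw [← e_add, e_eq_iff]
    exact ⟨l, by push_cast; field_simp; ring⟩
  have a2 : e (((n + q * l : ℤ) : ℝ) * θ) = e (n * θ) * e (q * l * θ) := by
    rw [← e_add]; congr 1; push_cast; ring
  rw [a1, a2, ← mul_assoc, this, mul_assoc]

theorem HasType.unique (hp : 0 < p) (hq : 0 < q) (hqe : Even q) {f : C(Mpq p q, RP2)}
    {κ κ' : Bool} {n n' : ℤ} (hf : HasType p q f κ n) (hf' : HasType p q f κ' n') :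
    κ = κ' ∧ ∃ k l : ℤ, n' = n + p * k + q * l ∧ (κ = true → l = 0) := by
  obtain ⟨G, h0, hG, h1, hGp, hGq⟩ := hf
  obtain ⟨G', h0', hG', h1', hGp', hGq'⟩ := hf'
  have hp' : (p : ℝ) ≠ 0 := by positivity
  have hq' : (q : ℝ) ≠ 0 := by positivity
  let pj : ℝ → II := Set.projIcc 0 1 zero_le_one
  have hpj : Continuous pj := continuous_projIcc
  have hpjc : Continuous fun z : ℝ × ℝ => (pj z.1, z.2) :=
    (hpj.comp continuous_fst).prodMk continuous_snd
  have pj0 : pj 0 = 0 := Set.projIcc_left _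
  have pj1 : pj 1 = 1 := Set.projIcc_right _
  let g : ℝ × ℝ → S3 := fun z => (G (pj z.1, z.2))⁻¹ * G' (pj z.1, z.2)
  have hgc : Continuous g := (G.continuous.comp hpjc).inv.mul (G'.continuous.comp hpjc)
  have hgU : ∀ z, isU (g z) := by
    refine isU_of_connected hgc (fun z => of_Phi_eq_Phi ?_) (0, 0) ?_
    · rw [← hG, ← hG']
    · simp only [g, pj0, h0, h0']; simpa using isU_one
  obtain ⟨γ, hγ⟩ := exists_log hgc hgU
  have hGG : ∀ s θ, G' (pj s, θ) = G (pj s, θ) * e (γ (s, θ)) := fun s θ => by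
    rw [← hγ]; simp only [g]; group
  obtain ⟨d, hd⟩ : ∃ d : ℤ, ∀ z : ℝ × ℝ, γ (z.1, z.2 + 1) - γ z = d := by
    refine int_const (0, 0) ((γ.continuous.comp (by fun_prop)).sub γ.continuous) fun z => ?_
    have : e (γ (z.1, z.2 + 1)) = e (γ z) := by
      rw [← hγ, ← hγ]; simp only [g, h1, h1']
    obtain ⟨n, hn⟩ := e_eq_iff.1 this
    exact ⟨n, by rw [hn]; ring⟩
  obtain ⟨k, hk⟩ : ∃ k : ℤ, ∀ θ : ℝ, γ (0, θ + 1 / p) - γ (0, θ) = k := by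
    refine int_const 0 ((γ.continuous.comp (by fun_prop)).sub (γ.continuous.comp (by fun_prop)))
      fun θ => ?_
    have : e (γ (0, θ + 1 / p)) = e (γ (0, θ)) := by
      rw [← hγ, ← hγ]; simp only [g, pj0, hGp, hGp']
    obtain ⟨n, hn⟩ := e_eq_iff.1 this
    exact ⟨n, by rw [hn]; ring⟩
  have hdk : (d : ℝ) = p * k := by
    have h := iter_add (F := fun θ => γ (0, θ)) (h := 1 / p) (c := k)
      (fun x => by have := hk x; linarith) p 0
    have h' := hd (0, 0)
    have : (p : ℝ) * (1 / p) = 1 := by field_simp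
    simp only [this] at h h'
    linarith
  let a : ℝ := n + cc q κ
  let a' : ℝ := n' + cc q κ'
  let δ : ℝ → ℝ := fun θ => γ (1, θ) + (a' - a) * θ
  have hδc : Continuous δ := (γ.continuous.comp (by fun_prop)).add (by fun_prop)
  have hδ1 : ∀ θ, δ (θ + 1) = δ θ + (d + (a' - a)) := fun θ => by
    have := hd (1, θ)
    simp only [δ] at this ⊢
    linarith
  have hδe : ∀ θ, G' (1, θ) * e (a' * θ) = G (1, θ) * e (a * θ) * e (δ θ) := fun θ => by
    have := hGG 1 θ
    rw [pj1] at this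
    rw [this, mul_assoc, mul_assoc, ← e_add, ← e_add]
    congr 2
    simp only [δ]; ring
  have hrel : ∀ θ, kap κ * e (δ (θ + 1 / q)) = e (δ θ) * kap κ' := fun θ => by
    have b1 : G' (1, θ + 1 / q) * e (a' * (θ + 1 / q)) = _ := hGq' θ
    have b2 : G (1, θ + 1 / q) * e (a * (θ + 1 / q)) = _ := hGq θ
    have b3 : G' (1, θ) * e ((n' + cc q κ') * θ) = _ := hδe θ
    rw [hδe, b2, b3] at b1
    change G (1, θ) * e (a * θ) * kap κ * _ = _ at b1
    rw [mul_assoc, mul_assoc _ _ (kap κ')] at b1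
    exact mul_left_cancel b1
  have hjU : ¬ isU jq := not_isU_of_isJ isJ_jq
  have hκ : κ = κ' := by
    have h := hrel 0
    cases κ <;> cases κ' <;> simp only [kap, if_true, if_false, Bool.false_eq_true, one_mul,
      mul_one] at h ⊢
    · exact hjU (by rw [← inv_mul_eq_iff_eq_mul.2 h]; exact (isU_e _).inv.mul (isU_e _))
    · exact absurd (by rw [eq_mul_inv_of_mul_eq h]; exact (isU_e _).mul (isU_e _).inv) hjU
  subst hκ
  refine ⟨rfl, ?_⟩
  have haa : a' - a = n' - n := by simp only [a, a']; ring
  rw [haa] at hδ1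
  have hq1 : (q : ℝ) * (1 / q) = 1 := by field_simp
  cases κ
  · simp only [kap, if_false, Bool.false_eq_true, one_mul, mul_one] at hrel
    obtain ⟨l, hl⟩ : ∃ l : ℤ, ∀ θ : ℝ, δ (θ + 1 / q) - δ θ = l := by
      refine int_const 0 ((hδc.comp (by fun_prop)).sub hδc) fun θ => ?_
      obtain ⟨n, hn⟩ := e_eq_iff.1 (hrel θ)
      exact ⟨n, by rw [hn]; ring⟩
    have h := iter_add (F := δ) (h := 1 / q) (c := l) (fun x => by linarith [hl x]) q 0
    rw [hq1, hδ1] at h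
    refine ⟨-k, l, ?_, by simp⟩
    have : (n' : ℝ) = n + p * (-k) + q * l := by linarith
    exact_mod_cast this
  · simp only [kap, if_true, jq_e] at hrel
    obtain ⟨l, hl⟩ : ∃ l : ℤ, ∀ θ : ℝ, - δ (θ + 1 / q) - δ θ = l := by
      refine int_const 0 ((hδc.comp (by fun_prop)).neg.sub hδc) fun θ => ?_
      obtain ⟨n, hn⟩ := e_eq_iff.1 (mul_right_cancel (hrel θ))
      exact ⟨n, by rw [hn]; ring⟩
    obtain ⟨m, hm⟩ := hqe
    have h := iter_add (F := δ) (h := 1 / q + 1 / q) (c := 0) (fun x => by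
      have b1 := hl x
      have b2 := hl (x + 1 / q)
      rw [← add_assoc]
      linarith) m 0
    have hm2 : (m : ℝ) * (1 / q + 1 / q) = 1 := by
      have : (q : ℝ) = m + m := by rw [hm]; push_cast; ring
      field_simp
      linarith
    rw [hm2, hδ1] at h
    refine ⟨-k, 0, ?_, by simp⟩
    have : (n' : ℝ) = n + p * (-k) + q * 0 := by linarith
    exact_mod_cast this

theorem exists_type (hp : 0 < p) (hq : 0 < q) (hpo : Odd p) (hqe : Even q) (f : C(Mpq p q, RP2))
    (hf : f (mpqBasePoint p q) = rp2BasePoint) : ∃ κ n, HasType p q f κ n := by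
  have hp' : (p : ℝ) ≠ 0 := by positivity
  have hq' : (q : ℝ) ≠ 0 := by positivity
  have hp1 : (p : ℝ) * (1 / p) = 1 := by field_simp
  have hq1 : (q : ℝ) * (1 / q) = 1 := by field_simp
  have hlc : ∀ s : II, Continuous fun θ : ℝ => f (pr p q (s, θ)) := fun s =>
    f.continuous.comp (continuous_pr.comp (by fun_prop))
  obtain ⟨G0, ν, hν, hG00, hG0, hG0p⟩ := lift_loop (1 / p) (by positivity)
    (fun θ => f (pr p q (0, θ))) (hlc 0) (fun θ => by simp only [pr_zero]) 1
    (by rw [pr_base, hf, Phi_one])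
  obtain ⟨K, hK0, hK, -⟩ := exists_rot (Y := Circle)
    ⟨fun z => f (Quot.mk _ z), f.continuous.comp continuous_quot_mk⟩
  let cy : ℝ → Circle := fun θ => Circle.exp (2 * Real.pi * θ)
  have hcy : Continuous cy := Circle.exp.continuous.comp (by fun_prop)
  have hcy1 : ∀ θ, cy (θ + 1) = cy θ := fun θ => by
    simp only [cy, mul_add, mul_one, Circle.exp_add_two_pi]
  let G : C(II × ℝ, S3) := ⟨fun z => K (z.1, cy z.2) * G0 z.2,
    (K.continuous.comp (continuous_fst.prodMk (hcy.comp continuous_snd))).mul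
      (G0.continuous.comp continuous_snd)⟩
  have hG : ∀ z, f (pr p q z) = Phi (G z) := by
    rintro ⟨s, θ⟩
    have b1 : f (pr p q (s, θ)) = actRP (K (s, cy θ)) (f (pr p q (0, θ))) := hK s (cy θ)
    rw [b1, hG0, ← Phi_mul]; rfl
  have hGz : ∀ θ, G (0, θ) = G0 θ := fun θ => by simp [G, hK0]
  have hG01 : ∀ θ, G0 (θ + 1) = G0 θ * ν ^ p := fun θ => by
    have := iter_mul hG0p p θ
    rwa [hp1] at this
  have hGper : ∀ s θ, G (s, θ + 1) = G (s, θ) * ν ^ p := fun s θ => by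
    simp only [G, ContinuousMap.coe_mk, hcy1, hG01, mul_assoc]
  obtain ⟨G1, κ', hκ', hG10, hG1, hG1q⟩ := lift_loop (1 / q) (by positivity)
    (fun θ => f (pr p q (1, θ))) (hlc 1) (fun θ => by simp only [pr_one]) (G (1, 0)) (hG _)
  obtain ⟨κ, rfl⟩ : ∃ κ, κ' = kap κ := by
    rcases hκ' with h | h
    · exact ⟨false, by simp [kap, h]⟩
    · exact ⟨true, by simp [kap, h]⟩
  have hG11 : ∀ θ, G1 (θ + 1) = G1 θ * e (cc q κ) := fun θ => by
    have := iter_mul hG1q q θ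
    rwa [hq1, kap_pow hqe] at this
  have hGc : Continuous fun θ : ℝ => G (1, θ) := G.continuous.comp (by fun_prop)
  have hgc : Continuous fun θ : ℝ => (G (1, θ))⁻¹ * G1 θ := hGc.inv.mul G1.continuous
  have hgU : ∀ θ, isU ((G (1, θ))⁻¹ * G1 θ) := by
    refine isU_of_connected hgc (fun θ => of_Phi_eq_Phi ?_) 0 ?_
    · rw [← hG, ← hG1]
    · rw [hG10]; simpa using isU_one
  obtain ⟨γ, hγ⟩ := exists_log hgc hgU
  have hGγ : ∀ θ, G1 θ = G (1, θ) * e (γ θ) := fun θ => by rw [← hγ]; group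
  have hrel : ∀ θ, ν ^ p * e (γ (θ + 1)) = e (γ θ) * e (cc q κ) := fun θ => by
    have b1 := hG11 θ
    rw [hGγ, hGγ, hGper, mul_assoc, mul_assoc] at b1
    exact mul_left_cancel b1
  have hν1 : ν = 1 := by
    rcases hν with h | h
    · exact h
    · exfalso
      rw [h] at hrel
      obtain ⟨m, rfl⟩ := hpo
      have b1 := hrel 0
      rw [two_mul, pow_succ, jq_pow_even, mul_assoc] at b1
      have b2 := eq_mul_inv_of_mul_eq (eq_inv_mul_of_mul_eq b1)
      refine not_isU_of_isJ isJ_jq ?_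
      rw [b2]
      exact (((isU_e _).inv.mul ((isU_e _).mul (isU_e _)))).mul (isU_e _).inv
  subst hν1
  simp only [one_pow, one_mul, mul_one, ← e_add] at hrel hGper
  obtain ⟨n, hn⟩ : ∃ n : ℤ, ∀ θ : ℝ, γ (θ + 1) - (γ θ + cc q κ) = n := by
    refine int_const 0 ((γ.continuous.comp (by fun_prop)).sub
      (γ.continuous.add continuous_const)) fun θ => ?_
    obtain ⟨n, hn⟩ := e_eq_iff.1 (hrel θ)
    exact ⟨n, by rw [hn]; ring⟩
  refine ⟨κ, n, ⟨fun z => G z * e (z.1.1 * (γ z.2 - (n + cc q κ) * z.2)), ?_⟩, ?_, ?_, ?_, ?_, ?_⟩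
  · exact G.continuous.mul (continuous_e.comp ((continuous_subtype_val.comp continuous_fst).mul
      ((γ.continuous.comp continuous_snd).sub (by fun_prop))))
  · simp [hGz, hG00, e_zero]
  · intro z; simp only [ContinuousMap.coe_mk]; rw [Phi_mul_e, hG]
  · intro s θ
    simp only [ContinuousMap.coe_mk, hGper]
    congr 3
    linarith [hn θ]
  · intro θ
    simp only [ContinuousMap.coe_mk, hGz, hG0p, Set.Icc.coe_zero, zero_mul, e_zero, mul_one]
  · intro θ
    have b1 : ∀ x : ℝ, G (1, x) * e (γ x - (n + cc q κ) * x) * e ((n + cc q κ) * x) = G1 x := by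
      intro x
      rw [hGγ, mul_assoc, ← e_add, sub_add_cancel]
    simp only [ContinuousMap.coe_mk, Set.Icc.coe_one, one_mul]
    rw [b1, b1, hG1q]

theorem ej_nat (q : ℕ) : ej q = jq ^ q := by
  induction q with
  | zero => simp [ej_zero]
  | succ n ih => push_cast; rw [ej_add, ih, ej_one, pow_succ]

theorem exists_end (hq : 0 < q) (hqe : Even q) (κ : Bool) (n : ℤ) : ∃ G1 : C(ℝ, S3),
    (∀ θ, G1 (θ + 1) = G1 θ) ∧
    (∀ θ, G1 (θ + 1 / q) * e ((n + cc q κ) * (θ + 1 / q)) =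
      G1 θ * e ((n + cc q κ) * θ) * kap κ) ∧
    ∀ θ, (G1 θ).1.re * (G1 θ).1.imK + (G1 θ).1.imI * (G1 θ).1.imJ = 0 := by
  have hq' : (q : ℝ) ≠ 0 := by positivity
  cases κ
  · refine ⟨⟨fun θ => e (-(n * θ)), continuous_e.comp (by fun_prop)⟩, fun θ => ?_, fun θ => ?_,
      fun θ => ?_⟩
    · simp only [ContinuousMap.coe_mk]
      rw [e_eq_iff]; exact ⟨-n, by push_cast; ring⟩
    · simp only [ContinuousMap.coe_mk, cc, kap, Bool.false_eq_true, if_false, add_zero, mul_one,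
        ← e_add, neg_add_cancel]
    · simp [e]
  · refine ⟨⟨fun θ => ej (q * θ) * e (-((n + cc q true) * θ)),
      (continuous_ej.comp (by fun_prop)).mul (continuous_e.comp (by fun_prop))⟩,
      fun θ => ?_, fun θ => ?_, fun θ => ?_⟩
    · simp only [ContinuousMap.coe_mk, mul_add, mul_one]
      have h1 := kap_pow hqe true
      simp only [kap, if_true] at h1
      rw [ej_add, ej_nat, h1, mul_assoc, ← e_add]
      congr 1
      rw [e_eq_iff]; exact ⟨-n, by push_cast; ring⟩
    · simp only [ContinuousMap.coe_mk, mul_assoc, ← e_add, neg_add_cancel, e_zero, mul_one, kap,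
        if_true]
      rw [mul_add, ej_add, mul_one_div_cancel hq', ej_one]
    · simp [e, ej]; ring

theorem exists_model (hq : 0 < q) (hqe : Even q) (κ : Bool) (n : ℤ) :
    ∃ f : C(Mpq p q, RP2), f (mpqBasePoint p q) = rp2BasePoint ∧ HasType p q f κ n := by
  obtain ⟨G1, h1, h2, h3⟩ := exists_end hq hqe κ n
  let u : II × ℝ → ℍ[ℝ] := fun z => (max (1 - 2 * z.1.1) 0) • mkQ 1 0 0 0 +
    (z.1.1 * (1 - z.1.1)) • mkQ 1 0 0 1 + (max (2 * z.1.1 - 1) 0) • (G1 z.2).1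
  have huc : Continuous u := by
    have hs : Continuous fun z : II × ℝ => z.1.1 := continuous_subtype_val.comp continuous_fst
    have hg : Continuous fun z : II × ℝ => (G1 z.2).1 :=
      continuous_subtype_val.comp (G1.continuous.comp continuous_snd)
    have c1 : Continuous fun z : II × ℝ => max (1 - 2 * z.1.1) 0 :=
      (continuous_const.sub (continuous_const.mul hs)).max continuous_const
    have c2 : Continuous fun z : II × ℝ => z.1.1 * (1 - z.1.1) := hs.mul (continuous_const.sub hs)
    have c3 : Continuous fun z : II × ℝ => max (2 * z.1.1 - 1) 0 :=
      ((continuous_const.mul hs).sub continuous_const).max continuous_const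
    exact ((c1.smul continuous_const).add (c2.smul continuous_const)).add (c3.smul hg)
  have hu0 : ∀ z, u z ≠ 0 := by
    rintro ⟨s, θ⟩ hz
    have hs0 := s.2.1
    have hs1 := s.2.2
    have hre := congrArg (fun x : ℍ[ℝ] => x.re) hz
    have hI := congrArg (fun x : ℍ[ℝ] => x.imI) hz
    have hJ := congrArg (fun x : ℍ[ℝ] => x.imJ) hz
    have hK := congrArg (fun x : ℍ[ℝ] => x.imK) hz
    simp [u] at hre hI hJ hK
    rcases le_total (s : ℝ) (1 / 2) with hs | hs
    · rw [max_eq_left (by linarith), max_eq_right (by linarith : 2 * (s : ℝ) - 1 ≤ 0)] at hre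
      nlinarith
    · rw [max_eq_right (by linarith), max_eq_left (by linarith : 0 ≤ 2 * (s : ℝ) - 1)] at hre
      rw [max_eq_left (by linarith : 0 ≤ 2 * (s : ℝ) - 1)] at hK
      have hIJ : (2 * (s : ℝ) - 1) ^ 2 * ((G1 θ).1.imI * (G1 θ).1.imJ) = 0 := by
        rcases hI with h | h
        · have : 2 * (s : ℝ) - 1 = 0 := by linarith
          rw [this]; ring
        · rw [h]; ring
      have hb : ((s : ℝ) * (1 - s)) ^ 2 = 0 := by
        have e1 : (s : ℝ) * (1 - s) = - ((2 * s - 1) * (G1 θ).1.re) := by linarith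
        have e2 : (s : ℝ) * (1 - s) = - ((2 * s - 1) * (G1 θ).1.imK) := by linarith
        have e3 := h3 θ
        calc ((s : ℝ) * (1 - s)) ^ 2 = ((s : ℝ) * (1 - s)) * ((s : ℝ) * (1 - s)) := sq _
          _ = (- ((2 * s - 1) * (G1 θ).1.re)) * (- ((2 * s - 1) * (G1 θ).1.imK)) := by
            rw [← e1, ← e2]
          _ = (2 * (s : ℝ) - 1) ^ 2 * ((G1 θ).1.re * (G1 θ).1.imK + (G1 θ).1.imI * (G1 θ).1.imJ) -
            (2 * (s : ℝ) - 1) ^ 2 * ((G1 θ).1.imI * (G1 θ).1.imJ) := by ring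
          _ = 0 := by rw [e3, hIJ]; ring
      have hs1' : (s : ℝ) = 1 := by
        rcases mul_eq_zero.1 (pow_eq_zero_iff two_ne_zero |>.1 hb) with h | h <;> linarith
      have : u (s, θ) = (G1 θ).1 := by
        simp only [u, hs1']; norm_num
      rw [this] at hz
      have h5 := mem_sphere_zero_iff_norm.1 (G1 θ).2
      rw [hz] at h5
      simp at h5
  let G : C(II × ℝ, S3) := ⟨fun z => nrm (u z), continuous_nrm huc hu0⟩
  have hG0 : ∀ θ, G (0, θ) = 1 := fun θ => by
    have : u (0, θ) = (1 : S3).1 := by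
      ext <;> simp [u]
    simp only [G, ContinuousMap.coe_mk, this, nrm_S3]
  have hG1 : ∀ θ, G (1, θ) = G1 θ := fun θ => by
    have : u (1, θ) = (G1 θ).1 := by
      simp only [u, Set.Icc.coe_one]; norm_num
    simp only [G, ContinuousMap.coe_mk, this, nrm_S3]
  have hGper : ∀ s θ, G (s, θ + 1) = G (s, θ) := fun s θ => by
    simp only [G, ContinuousMap.coe_mk, u, h1]
  obtain ⟨f, hf⟩ := descend (p := p) (q := q) (Z := RP2)
    ⟨fun z => Phi (G z), continuous_Phi.comp G.continuous⟩
    (fun s θ => by simp only [ContinuousMap.coe_mk, hGper])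
    (fun θ => by simp only [ContinuousMap.coe_mk, hG0])
    (fun θ => by
      simp only [ContinuousMap.coe_mk, hG1]
      have := congrArg Phi (h2 θ)
      rwa [Phi_mul_e, Phi_mul_kap, Phi_mul_e] at this)
  refine ⟨f, ?_, G, hG0 0, hf, hGper, fun θ => by rw [hG0, hG0], fun θ => ?_⟩
  · rw [← pr_base, hf]; simp only [ContinuousMap.coe_mk, hG0, Phi_one]
  · rw [hG1, hG1, h2]

/-- types of a homotopy class -/
def clType (p q : ℕ) (c : BasedHomotopyClasses (Mpq p q) RP2 (mpqBasePoint p q) rp2BasePoint) :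
    Bool → ℤ → Prop :=
  Quot.lift (fun f : {f : C(Mpq p q, RP2) // f (mpqBasePoint p q) = rp2BasePoint} =>
    HasType p q f.1) (fun f g h => by
      funext κ n
      exact propext ⟨fun a => a.of_homotopic h, fun a => a.of_homotopic h.symm⟩) c

/-- the model map -/
def model (p : ℕ) {q : ℕ} (hq : 0 < q) (hqe : Even q) (κ : Bool) (n : ℤ) :
    BasedHomotopyClasses (Mpq p q) RP2 (mpqBasePoint p q) rp2BasePoint :=
  Quot.mk _ ⟨(exists_model (p := p) hq hqe κ n).choose, (exists_model hq hqe κ n).choose_spec.1⟩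

theorem model_type (hq : 0 < q) (hqe : Even q) (κ : Bool) (n : ℤ) :
    clType p q (model p hq hqe κ n) κ n := (exists_model hq hqe κ n).choose_spec.2

theorem clType_unique (hp : 0 < p) (hq : 0 < q) (hqe : Even q)
    {c : BasedHomotopyClasses (Mpq p q) RP2 (mpqBasePoint p q) rp2BasePoint}
    {κ κ' : Bool} {n n' : ℤ} (h : clType p q c κ n) (h' : clType p q c κ' n') :
    κ = κ' ∧ ∃ k l : ℤ, n' = n + p * k + q * l ∧ (κ = true → l = 0) := by
  induction c using Quot.ind with
  | mk f => exact HasType.unique hp hq hqe h h'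

theorem clType_eq (hp : 0 < p) (hq : 0 < q)
    {c c' : BasedHomotopyClasses (Mpq p q) RP2 (mpqBasePoint p q) rp2BasePoint}
    {κ : Bool} {n : ℤ} (h : clType p q c κ n) (h' : clType p q c' κ n) : c = c' := by
  induction c using Quot.ind with
  | mk f =>
    induction c' using Quot.ind with
    | mk f' => exact Quot.sound (homotopic_of_type hp hq h h')

theorem bijective_aux (hp : 0 < p) (hq : 0 < q) (hpo : Odd p) (hqe : Even q) :
    Function.Bijective (Sum.elim (fun x : ZMod (Nat.gcd p q) => model p hq hqe false (x.cast : ℤ))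
      (fun x : ZMod p => model p hq hqe true (x.cast : ℤ))) := by
  have hgp : ((p : ℤ) : ZMod (Nat.gcd p q)) = 0 := by
    rw [Int.cast_natCast, ZMod.natCast_eq_zero_iff]; exact Nat.gcd_dvd_left _ _
  have hgq : ((q : ℤ) : ZMod (Nat.gcd p q)) = 0 := by
    rw [Int.cast_natCast, ZMod.natCast_eq_zero_iff]; exact Nat.gcd_dvd_right _ _
  have hpp : ((p : ℤ) : ZMod p) = 0 := by simp
  constructor
  · rintro (x | x) (y | y) h <;> simp only [Sum.elim_inl, Sum.elim_inr] at h
    · have h1 := model_type (p := p) hq hqe false (x.cast : ℤ)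
      rw [h] at h1
      obtain ⟨-, k, l, hkl, -⟩ := clType_unique hp hq hqe h1 (model_type hq hqe false (y.cast : ℤ))
      have := congrArg (Int.cast : ℤ → ZMod (Nat.gcd p q)) hkl
      rw [Int.cast_add, Int.cast_add, Int.cast_mul, Int.cast_mul, hgp, hgq] at this
      simp only [ZMod.intCast_cast, ZMod.cast_id', id, zero_mul, add_zero] at this
      rw [this]
    · have h1 := model_type (p := p) hq hqe false (x.cast : ℤ)
      rw [h] at h1
      have := (clType_unique hp hq hqe h1 (model_type hq hqe true (y.cast : ℤ))).1
      cases this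
    · have h1 := model_type (p := p) hq hqe true (x.cast : ℤ)
      rw [h] at h1
      have := (clType_unique hp hq hqe h1 (model_type hq hqe false (y.cast : ℤ))).1
      cases this
    · have h1 := model_type (p := p) hq hqe true (x.cast : ℤ)
      rw [h] at h1
      obtain ⟨-, k, l, hkl, hl⟩ := clType_unique hp hq hqe h1 (model_type hq hqe true (y.cast : ℤ))
      rw [hl rfl] at hkl
      have := congrArg (Int.cast : ℤ → ZMod p) hkl
      rw [Int.cast_add, Int.cast_add, Int.cast_mul, hpp] at this
      simp only [ZMod.intCast_cast, ZMod.cast_id', id, zero_mul, mul_zero, Int.cast_zero,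
        add_zero] at this
      rw [this]
  · intro c
    induction c using Quot.ind with
    | mk f =>
      obtain ⟨κ, n, hn⟩ := exists_type hp hq hpo hqe f.1 f.2
      cases κ
      · refine ⟨Sum.inl (n : ZMod (Nat.gcd p q)), ?_⟩
        simp only [Sum.elim_inl]
        have hm := model_type (p := p) hq hqe false ((n : ZMod (Nat.gcd p q)).cast : ℤ)
        obtain ⟨t, ht⟩ : (Nat.gcd p q : ℤ) ∣ ((n : ZMod (Nat.gcd p q)).cast : ℤ) - n := by
          rw [← ZMod.intCast_zmod_eq_zero_iff_dvd]; simp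
        rw [Nat.gcd_eq_gcd_ab] at ht
        have e1 : ((n : ZMod (Nat.gcd p q)).cast : ℤ) =
          n + p * (Nat.gcdA p q * t) + q * (Nat.gcdB p q * t) := by linarith
        rw [e1] at hm ⊢
        exact clType_eq hp hq hm ((hn.add_p hp _).add_q hq _)
      · refine ⟨Sum.inr (n : ZMod p), ?_⟩
        simp only [Sum.elim_inr]
        have hm := model_type (p := p) hq hqe true ((n : ZMod p).cast : ℤ)
        obtain ⟨t, ht⟩ : (p : ℤ) ∣ ((n : ZMod p).cast : ℤ) - n := by
          rw [← ZMod.intCast_zmod_eq_zero_iff_dvd]; simp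
        have e1 : ((n : ZMod p).cast : ℤ) = n + p * t := by linarith
        rw [e1] at hm ⊢
        exact clType_eq hp hq hm (hn.add_p hp _)

end

end MpqAux

/-- For `p` a positive odd integer and `q` a positive even integer with `r = gcd(p, q)`,
the set `[M_{p,q}, ℝP²]₀` of based homotopy classes is in bijection with `ℤ/r ⊔ ℤ/p`. -/
theorem basedHomotopyClasses_Mpq_RP2_odd_even (p q : ℕ)
    (hp : 0 < p) (hq : 0 < q) (hpo : Odd p) (hqe : Even q) :
    Nonempty (BasedHomotopyClasses (Mpq p q) RP2 (mpqBasePoint p q) rp2BasePoint ≃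
      (ZMod (Nat.gcd p q) ⊕ ZMod p)) := by
  exact ⟨(Equiv.ofBijective _ (MpqAux.bijective_aux hp hq hpo hqe)).symm⟩
end

section
/- The set [M_{2,3}, ℝP²] of free homotopy classes of continuous maps from the trefoil-knot-complement model M_{2,3} to the real projective plane has exactly 3 elements: that is, there are exactly three topological sectors of a uniaxial nematic liquid crystal with a trefoil knot line defect. -/
/-- Free homotopy classes of continuous maps `M → X`: the quotient of `C(M, X)` by the
homotopy relation. -/
def FreeHomotopyClasses (M X : Type*) [TopologicalSpace M] [TopologicalSpace X] : Type _ :=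
  Quot fun f g : C(M, X) => f.Homotopic g

namespace Trefoil

open Quaternion Topology

noncomputable section

abbrev S2 : Type := Metric.sphere (0 : EuclideanSpace ℝ (Fin 3)) 1
abbrev S3 : Type := Metric.sphere (0 : Quaternion ℝ) 1

/-- Quaternion with given coordinates. -/
def mkH (a b c d : ℝ) : Quaternion ℝ := ⟨a, b, c, d⟩
@[simp] lemma mkH_re (a b c d : ℝ) : (mkH a b c d).re = a := rfl
@[simp] lemma mkH_imI (a b c d : ℝ) : (mkH a b c d).imI = b := rfl
@[simp] lemma mkH_imJ (a b c d : ℝ) : (mkH a b c d).imJ = c := rfl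
@[simp] lemma mkH_imK (a b c d : ℝ) : (mkH a b c d).imK = d := rfl

/-- Imaginary quaternion of a vector. -/
def toH (x : EuclideanSpace ℝ (Fin 3)) : Quaternion ℝ := mkH 0 (x 0) (x 1) (x 2)
/-- Vector of imaginary parts. -/
def ofH (q : Quaternion ℝ) : EuclideanSpace ℝ (Fin 3) := !₂[q.imI, q.imJ, q.imK]

lemma ofH_toH (x) : ofH (toH x) = x := by
  ext i; fin_cases i <;> simp [ofH, toH]

lemma toH_ofH (q : Quaternion ℝ) (h : q.re = 0) : toH (ofH q) = q := by
  ext <;> simp [ofH, toH, h]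

lemma toH_neg (x) : toH (-x) = - toH x := by
  ext <;> simp [toH]

lemma toH_re (x) : (toH x).re = 0 := rfl

lemma norm_sq_H (q : Quaternion ℝ) : ‖q‖ ^ 2 = q.re ^ 2 + q.imI ^ 2 + q.imJ ^ 2 + q.imK ^ 2 := by
  rw [sq, ← Quaternion.normSq_eq_norm_mul_self, Quaternion.normSq_def']

lemma norm_toH (x) : ‖toH x‖ = ‖x‖ := by
  rw [← sq_eq_sq₀ (norm_nonneg _) (norm_nonneg _), norm_sq_H, EuclideanSpace.norm_sq_eq]
  simp [toH, Fin.sum_univ_three]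

lemma continuous_mkH {X : Type*} [TopologicalSpace X] {a b c d : X → ℝ} (ha : Continuous a)
    (hb : Continuous b) (hc : Continuous c) (hd : Continuous d) :
    Continuous fun x => mkH (a x) (b x) (c x) (d x) := by
  have h : (fun x => mkH (a x) (b x) (c x) (d x)) = fun x => (a x) • mkH 1 0 0 0 +
      (b x) • mkH 0 1 0 0 + (c x) • mkH 0 0 1 0 + (d x) • mkH 0 0 0 1 := by
    funext x; ext <;> simp
  rw [h]
  exact (((ha.smul continuous_const).add (hb.smul continuous_const)).add
    (hc.smul continuous_const)).add (hd.smul continuous_const)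

lemma continuous_toH : Continuous toH :=
  continuous_mkH continuous_const (by fun_prop) (by fun_prop) (by fun_prop)

lemma continuous_ofH : Continuous ofH := by
  unfold ofH
  have h1 := Quaternion.continuous_imI
  have h2 := Quaternion.continuous_imJ
  have h3 := Quaternion.continuous_imK
  refine (PiLp.continuous_toLp 2 _).comp (continuous_pi fun i => ?_)
  fin_cases i <;> simp <;> assumption

lemma rot_re (q p : Quaternion ℝ) (h : p.re = 0) : (q * p * star q).re = 0 := by
  simp [h]; ring

lemma S3_norm (q : S3) : ‖(q : Quaternion ℝ)‖ = 1 := by simp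
lemma S2_norm (x : S2) : ‖toH x‖ = 1 := by rw [norm_toH]; simp

lemma toH_sq (x : S2) : toH x * toH x = -1 := by
  have h := norm_sq_H (toH x)
  rw [S2_norm, toH_re] at h
  ext
  · simp [toH_re]; nlinarith
  · simp [toH_re]; ring
  · simp [toH_re]; ring
  · simp [toH_re]; ring

lemma norm_star' (q : Quaternion ℝ) : ‖star q‖ = ‖q‖ := Quaternion.norm_star q

/-- Rotation action of unit quaternions on the sphere. -/
def rot (q : S3) (x : S2) : S2 := ⟨ofH ((q : Quaternion ℝ) * toH x * star (q : Quaternion ℝ)), by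
  rw [mem_sphere_zero_iff_norm, ← norm_toH, toH_ofH _ (rot_re _ _ (toH_re _)), norm_mul, norm_mul,
    norm_star', S3_norm, S2_norm]; norm_num⟩

lemma S3_mul_star (q : S3) : (q : Quaternion ℝ) * star (q : Quaternion ℝ) = 1 := by
  rw [Quaternion.self_mul_star, Quaternion.normSq_eq_norm_mul_self, S3_norm]; simp
lemma S3_star_mul (q : S3) : star (q : Quaternion ℝ) * (q : Quaternion ℝ) = 1 := by
  rw [Quaternion.star_mul_self, Quaternion.normSq_eq_norm_mul_self, S3_norm]; simp

lemma S3_inv (q : S3) : ((q⁻¹ : S3) : Quaternion ℝ) = star (q : Quaternion ℝ) := by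
  rw [Metric.unitSphere.coe_inv]
  exact inv_eq_of_mul_eq_one_right (S3_mul_star q)

lemma toH_rot (q : S3) (x : S2) :
    toH (rot q x) = (q : Quaternion ℝ) * toH x * star (q : Quaternion ℝ) :=
  toH_ofH _ (rot_re _ _ (toH_re _))

lemma toH_inj {x y : S2} (h : toH x = toH y) : x = y := by
  apply Subtype.ext; rw [← ofH_toH x, h, ofH_toH]

lemma rot_eq_iff (q : S3) (x y : S2) :
    rot q x = y ↔ (q : Quaternion ℝ) * toH x = toH y * (q : Quaternion ℝ) := by
  constructor
  · rintro rfl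
    rw [toH_rot, mul_assoc, S3_star_mul, mul_one]
  · intro h
    apply toH_inj
    rw [toH_rot, h, mul_assoc, S3_mul_star, mul_one]

lemma rot_mul (p q : S3) (x : S2) : rot (p * q) x = rot p (rot q x) := by
  apply toH_inj
  rw [toH_rot, toH_rot, toH_rot, Metric.unitSphere.coe_mul, star_mul]
  simp only [mul_assoc]

lemma rot_one (x : S2) : rot 1 x = x := by
  rw [rot_eq_iff]; simp

lemma rot_neg (q : S3) (x : S2) : rot q (-x) = - rot q x := by
  apply toH_inj
  rw [toH_rot]
  show _ * toH (-(x:EuclideanSpace ℝ (Fin 3))) * _ = toH (-(rot q x : EuclideanSpace ℝ (Fin 3)))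
  rw [toH_neg, toH_neg, toH_rot]; simp

lemma continuous_rot : Continuous fun p : S3 × S2 => rot p.1 p.2 := by
  refine Continuous.subtype_mk (continuous_ofH.comp ?_) _
  have := continuous_toH
  fun_prop

/-- Projection of the sphere to the projective plane. -/
def rp (x : S2) : RP2 := Quot.mk _ x

lemma rp_neg (x : S2) : rp (-x) = rp x := by
  symm; exact Quot.sound rfl

lemma continuous_rp : Continuous rp := continuous_quot_mk

lemma rp_surj : Function.Surjective rp := Quot.mk_surjective

lemma rp_eq_iff (x y : S2) : rp x = rp y ↔ y = x ∨ y = -x := by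
  constructor
  · intro h
    let f : RP2 → Prop := Quot.lift (fun z : S2 => z = x ∨ z = -x) (by
      intro a b hab
      have hab' : b = -a := Subtype.ext hab
      subst hab'
      apply propext
      constructor
      · rintro (h | h) <;> simp [h]
      · rintro (h | h)
        · right; rw [← h, neg_neg]
        · left; exact neg_injective h)
    have : f (rp x) = f (rp y) := by rw [h]
    have h2 : (x = x ∨ x = -x) = (y = x ∨ y = -x) := this
    rw [← h2]; left; rfl
  · rintro (rfl | rfl)
    · rfl
    · exact (rp_neg x).symm

lemma isOpenQuotientMap_rp : IsOpenQuotientMap rp := by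
  refine ⟨rp_surj, continuous_rp, ?_⟩
  intro U hU
  have : IsQuotientMap rp := isQuotientMap_quot_mk
  rw [← this.isOpen_preimage]
  have h2 : rp ⁻¹' (rp '' U) = U ∪ (fun x => -x) ⁻¹' U := by
    ext y
    simp only [Set.mem_preimage, Set.mem_image, Set.mem_union]
    constructor
    · rintro ⟨x, hx, h⟩
      rcases (rp_eq_iff _ _).1 h with rfl | rfl
      · left; exact hx
      · right; simpa using hx
    · rintro (h | h)
      · exact ⟨y, h, rfl⟩
      · exact ⟨-y, h, rp_neg y⟩
  rw [h2]
  exact hU.union (hU.preimage continuous_neg)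

/-- Action of unit quaternions on the projective plane. -/
def act (q : S3) : RP2 → RP2 := Quot.lift (fun x => rp (rot q x)) (by
  intro a b hab
  have hab' : b = -a := Subtype.ext hab
  subst hab'
  rw [rot_neg, rp_neg])

lemma act_rp (q : S3) (x : S2) : act q (rp x) = rp (rot q x) := rfl

lemma act_mul (p q : S3) (x : RP2) : act (p * q) x = act p (act q x) := by
  obtain ⟨x, rfl⟩ := rp_surj x
  simp [act_rp, rot_mul]

lemma act_one (x : RP2) : act 1 x = x := by
  obtain ⟨x, rfl⟩ := rp_surj x
  simp [act_rp, rot_one]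

lemma continuous_act : Continuous fun p : S3 × RP2 => act p.1 p.2 := by
  have h := IsOpenQuotientMap.prodMap (IsOpenQuotientMap.id (X := S3)) isOpenQuotientMap_rp
  rw [← h.continuous_comp_iff]
  exact continuous_rp.comp continuous_rot

lemma continuous_act' {X : Type*} [TopologicalSpace X] {f : X → S3} {g : X → RP2}
    (hf : Continuous f) (hg : Continuous g) : Continuous fun x => act (f x) (g x) :=
  by
  have h := hf.prodMk hg
  have h2 := continuous_act.comp h
  exact h2

def cc (x y : S2) : ℝ := -(toH y * toH x).re
def tauS (x y : S2) : Quaternion ℝ := (|cc x y| : ℝ) • (1 : Quaternion ℝ) - cc x y • (toH y * toH x)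

lemma toH_negS (x : S2) : toH ((-x : S2) : EuclideanSpace ℝ (Fin 3)) = - toH x := toH_neg _

lemma cc_neg_left (x y : S2) : cc (-x) y = - cc x y := by
  rw [cc, toH_negS]; simp [cc]
lemma cc_neg_right (x y : S2) : cc x (-y) = - cc x y := by
  rw [cc, toH_negS]; simp [cc]
lemma tauS_neg_left (x y : S2) : tauS (-x) y = tauS x y := by
  rw [tauS, cc_neg_left, toH_negS]; simp [tauS]
lemma tauS_neg_right (x y : S2) : tauS x (-y) = tauS x y := by
  rw [tauS, cc_neg_right, toH_negS]; simp [tauS]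

def DD : RP2 → RP2 → ℝ := Quot.lift₂ (fun x y => |cc x y|)
  (by intro a b c h; obtain rfl : c = -b := Subtype.ext h; simp [cc_neg_right])
  (by intro a b c h; obtain rfl : b = -a := Subtype.ext h; simp [cc_neg_left])

def tau : RP2 → RP2 → Quaternion ℝ := Quot.lift₂ tauS
  (by intro a b c h; obtain rfl : c = -b := Subtype.ext h; simp [tauS_neg_right])
  (by intro a b c h; obtain rfl : b = -a := Subtype.ext h; simp [tauS_neg_left])

lemma DD_rp (x y : S2) : DD (rp x) (rp y) = |cc x y| := rfl
lemma tau_rp (x y : S2) : tau (rp x) (rp y) = tauS x y := rfl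

lemma continuous_toHS : Continuous fun x : S2 => toH x := continuous_toH.comp continuous_subtype_val

lemma continuous_cc : Continuous fun p : S2 × S2 => cc p.1 p.2 := by
  unfold cc
  have := continuous_toHS
  have h2 := Quaternion.continuous_re
  exact (h2.comp ((this.comp continuous_snd).mul (this.comp continuous_fst))).neg

lemma continuous_DD : Continuous fun p : RP2 × RP2 => DD p.1 p.2 := by
  have h := IsOpenQuotientMap.prodMap isOpenQuotientMap_rp isOpenQuotientMap_rp
  rw [← h.continuous_comp_iff]
  exact continuous_cc.abs

lemma continuous_tau : Continuous fun p : RP2 × RP2 => tau p.1 p.2 := by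
  have h := IsOpenQuotientMap.prodMap isOpenQuotientMap_rp isOpenQuotientMap_rp
  rw [← h.continuous_comp_iff]
  show Continuous fun p : S2 × S2 => tauS p.1 p.2
  have := continuous_toHS
  have h1 := continuous_cc
  unfold tauS
  exact (h1.abs.smul continuous_const).sub (h1.smul ((this.comp continuous_snd).mul (this.comp continuous_fst)))

lemma DD_self (x : RP2) : DD x x = 1 := by
  obtain ⟨x, rfl⟩ := rp_surj x
  rw [DD_rp, cc, toH_sq]; simp

lemma tau_self (x : RP2) : tau x x = 2 := by
  obtain ⟨x, rfl⟩ := rp_surj x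
  rw [tau_rp, tauS, cc, toH_sq]; simp; norm_num

lemma tau_ne (x y : RP2) (h : 0 < DD x y) : tau x y ≠ 0 := by
  obtain ⟨x, rfl⟩ := rp_surj x
  obtain ⟨y, rfl⟩ := rp_surj y
  intro h0
  rw [tau_rp] at h0
  rw [DD_rp] at h
  have : (tauS x y).re = 0 := by rw [h0]; rfl
  have h2 : (tauS x y).re = |cc x y| + cc x y ^ 2 := by
    rw [tauS]; 
    have : (toH y * toH x).re = - cc x y := by simp [cc]
    rw [Quaternion.re_sub, Quaternion.re_smul, Quaternion.re_smul, this]; simp; ring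
  nlinarith

/-- Normalisation. -/
def nz (q : Quaternion ℝ) (h : q ≠ 0) : S3 := ⟨(‖q‖⁻¹ : ℝ) • q, by
  rw [mem_sphere_zero_iff_norm, norm_smul, norm_inv, norm_norm]
  exact inv_mul_cancel₀ (norm_ne_zero_iff.2 h)⟩

lemma continuous_nz {X : Type*} [TopologicalSpace X] {f : X → Quaternion ℝ} (hf : Continuous f)
    (h : ∀ x, f x ≠ 0) : Continuous fun x => nz (f x) (h x) := by
  refine Continuous.subtype_mk ?_ _
  exact (hf.norm.inv₀ (fun x => norm_ne_zero_iff.2 (h x))).smul hf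

lemma act_nz_tau (x y : RP2) (h : 0 < DD x y) : act (nz (tau x y) (tau_ne x y h)) x = y := by
  obtain ⟨x, rfl⟩ := rp_surj x
  obtain ⟨y, rfl⟩ := rp_surj y
  rw [act_rp]
  rw [DD_rp] at h
  have hX := toH_sq x
  have hY := toH_sq y
  have e1 : tauS x y * toH x = (|cc x y|) • toH x + cc x y • toH y := by
    rw [tauS, sub_mul, smul_mul_assoc, smul_mul_assoc, mul_assoc, hX]; simp
  have e2 : toH y * tauS x y = (|cc x y|) • toH y + cc x y • toH x := by
    rw [tauS, mul_sub, mul_smul_comm, mul_smul_comm, ← mul_assoc, hY]; simp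
  rcases lt_or_gt_of_ne (abs_pos.1 h) with h1 | h1
  · rw [abs_of_neg h1] at e1 e2
    have : rot (nz (tau (rp x) (rp y)) (tau_ne (rp x) (rp y) h)) x = -y := by
      rw [rot_eq_iff, toH_negS]
      simp only [nz, tau_rp]
      rw [smul_mul_assoc, mul_smul_comm, neg_mul, e1, e2]
      congr 1; module
    rw [this, rp_neg]
  · rw [abs_of_pos h1] at e1 e2
    have : rot (nz (tau (rp x) (rp y)) (tau_ne (rp x) (rp y) h)) x = y := by
      rw [rot_eq_iff]
      simp only [nz, tau_rp]
      rw [smul_mul_assoc, mul_smul_comm, e1, e2]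
      congr 1; module
    rw [this]

lemma nz_tau_self (x : RP2) (h : 0 < DD x x) : nz (tau x x) (tau_ne x x h) = 1 := by
  apply Subtype.ext
  simp only [nz, tau_self]
  have : ‖(2 : Quaternion ℝ)‖ = 2 := by
    have := Quaternion.norm_coe (2:ℝ)
    rw [Real.norm_eq_abs, abs_of_pos (by norm_num)] at this
    rw [show (2 : Quaternion ℝ) = ((2:ℝ) : Quaternion ℝ) by norm_cast]
    exact this
  rw [this]
  rw [Metric.unitSphere.coe_one, show (2 : Quaternion ℝ) = ((2:ℝ) : Quaternion ℝ) by norm_cast]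
  ext <;> simp

/-- Base vector. -/
def e0 : S2 := ⟨!₂[1,0,0], by simp [EuclideanSpace.norm_eq, Fin.sum_univ_three]⟩
def x0 : RP2 := rp e0

lemma toH_e0 : toH e0 = mkH 0 1 0 0 := by
  ext <;> simp [toH, e0]

lemma act_trans (x : RP2) : ∃ q : S3, act q x0 = x := by
  obtain ⟨x, rfl⟩ := rp_surj x
  wlog h : 0 ≤ cc e0 x generalizing x
  · have := this (-x) (by rw [cc_neg_right]; linarith)
    rwa [rp_neg] at this
  have hne : 1 - toH x * toH e0 ≠ 0 := by
    intro h0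
    have : (1 - toH x * toH e0).re = 0 := by rw [h0]; rfl
    rw [Quaternion.re_sub] at this
    simp only [cc] at h
    have h1 : (1 : Quaternion ℝ).re = 1 := rfl
    rw [h1] at this
    linarith
  refine ⟨nz _ hne, ?_⟩
  rw [x0, act_rp]
  congr 1
  rw [rot_eq_iff]
  simp only [nz]
  rw [smul_mul_assoc, mul_smul_comm]
  congr 1
  rw [sub_mul, mul_sub, mul_assoc, ← mul_assoc (toH x) (toH x), toH_sq, toH_sq]
  simp [add_comm]

lemma act_x0_iff (n : S3) : act n x0 = x0 ↔ ((n : Quaternion ℝ).imJ = 0 ∧ (n : Quaternion ℝ).imK = 0) ∨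
    ((n : Quaternion ℝ).re = 0 ∧ (n : Quaternion ℝ).imI = 0) := by
  rw [x0, act_rp, eq_comm, rp_eq_iff, rot_eq_iff, rot_eq_iff, toH_negS, toH_e0]
  rw [Quaternion.ext_iff, Quaternion.ext_iff]
  simp
  constructor
  · rintro (h | h)
    · left; constructor <;> linarith [h.1, h.2]
    · right; constructor <;> linarith [h.1, h.2]
  · rintro (h | h)
    · left; simp [h]
    · right; simp [h]

end

end Trefoil

namespace Trefoil

open Quaternion Topology

noncomputable section

def clampN (δ : ℝ) (n : ℕ) (s : ℝ) : ℝ := max (-(n*δ)) (min (n*δ) s)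

lemma continuous_clampN (δ n) : Continuous (clampN δ n) := by
  unfold clampN; fun_prop

lemma clampN_eq {δ : ℝ} {n : ℕ} {s : ℝ} (h : |s| ≤ n * δ) : clampN δ n s = s := by
  rw [abs_le] at h
  rw [clampN, min_eq_right h.2, max_eq_right h.1]

lemma clampN_step {δ : ℝ} (hδ : 0 < δ) (n : ℕ) (s : ℝ) :
    |clampN δ n s - clampN δ (n+1) s| ≤ δ := by
  have hn : (0:ℝ) ≤ n * δ := by positivity
  unfold clampN
  push_cast
  rw [add_mul, one_mul]
  generalize (n:ℝ) * δ = a at *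
  rw [abs_le]
  rcases le_total a s with h1 | h1 <;> rcases le_total (a + δ) s with h2 | h2 <;>
  rcases le_total (-a) s with h3 | h3 <;> rcases le_total (-(a+δ)) s with h4 | h4 <;>
  simp only [min_eq_left, min_eq_right, h1, h2, h3, h4, max_eq_left, max_eq_right,
    neg_le_self hn, neg_le_self (add_nonneg hn hδ.le)] <;> constructor <;> linarith

section
variable {X : Type*} [TopologicalSpace X] (H : X × ℝ → RP2)
  {δ : ℝ} (hδ : 0 < δ) (hD : ∀ x s s', |s - s'| ≤ δ → 0 < DD (H (x,s)) (H (x,s')))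

/-- One transport step. -/
def stepR (n : ℕ) (p : X × ℝ) : S3 :=
  nz (tau (H (p.1, clampN δ n p.2)) (H (p.1, clampN δ (n+1) p.2)))
    (tau_ne _ _ (hD _ _ _ (clampN_step hδ n p.2)))

/-- Iterated transport. -/
def Rn : ℕ → X × ℝ → S3
  | 0 => fun _ => 1
  | n+1 => fun p => stepR H hδ hD n p * Rn n p

lemma continuous_stepR (hH : Continuous H) (n : ℕ) : Continuous (stepR H hδ hD n) := by
  have h1 : Continuous fun p : X × ℝ => H (p.1, clampN δ n p.2) :=
    hH.comp (continuous_fst.prodMk ((continuous_clampN δ n).comp continuous_snd))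
  have h2 : Continuous fun p : X × ℝ => H (p.1, clampN δ (n+1) p.2) :=
    hH.comp (continuous_fst.prodMk ((continuous_clampN δ (n+1)).comp continuous_snd))
  have h3 := continuous_tau.comp (h1.prodMk h2)
  exact continuous_nz h3 _

lemma continuous_Rn (hH : Continuous H) (n : ℕ) : Continuous (Rn H hδ hD n) := by
  induction n with
  | zero => exact continuous_const
  | succ n ih => exact (continuous_stepR H hδ hD hH n).mul ih

lemma act_Rn (n : ℕ) (x : X) (s : ℝ) :
    act (Rn H hδ hD n (x,s)) (H (x,0)) = H (x, clampN δ n s) := by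
  induction n with
  | zero =>
    have : clampN δ 0 s = 0 := by simp [clampN]
    rw [this]; exact act_one _
  | succ n ih =>
    show act (stepR H hδ hD n (x,s) * Rn H hδ hD n (x,s)) (H (x,0)) = _
    rw [act_mul, ih]
    exact act_nz_tau _ _ (hD _ _ _ (clampN_step hδ n s))

lemma Rn_succ (n : ℕ) (x : X) (s : ℝ) (h : |s| ≤ n * δ) :
    Rn H hδ hD (n+1) (x,s) = Rn H hδ hD n (x,s) := by
  show stepR H hδ hD n (x,s) * Rn H hδ hD n (x,s) = _
  have h2 : |s| ≤ (n+1:ℕ) * δ := by push_cast; linarith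
  have : stepR H hδ hD n (x,s) = 1 := by
    simp only [stepR, clampN_eq h, clampN_eq h2]
    exact nz_tau_self _ (by rw [DD_self]; norm_num)
  rw [this, one_mul]

lemma Rn_le (n m : ℕ) (hnm : n ≤ m) (x : X) (s : ℝ) (h : |s| ≤ n * δ) :
    Rn H hδ hD m (x,s) = Rn H hδ hD n (x,s) := by
  induction m, hnm using Nat.le_induction with
  | base => rfl
  | succ m hm ih =>
    rw [Rn_succ, ih]
    refine h.trans ?_
    have : (n:ℝ) ≤ m := by exact_mod_cast hm
    gcongr

end

theorem lift_lemma {X : Type*} [TopologicalSpace X] (H : X × ℝ → RP2) (hH : Continuous H)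
    {δ : ℝ} (hδ : 0 < δ) (hD : ∀ x s s', |s - s'| ≤ δ → 0 < DD (H (x,s)) (H (x,s'))) :
    ∃ R : X × ℝ → S3, Continuous R ∧ (∀ x, R (x,0) = 1) ∧
    ∀ x s, act (R (x,s)) (H (x,0)) = H (x,s) := by
  have hce : ∀ s : ℝ, |s| ≤ (⌈|s|/δ⌉₊ : ℕ) * δ := fun s => by
    rw [← div_le_iff₀ hδ]; exact Nat.le_ceil _
  have key : ∀ (n : ℕ) x s, |s| ≤ n * δ → Rn H hδ hD ⌈|s|/δ⌉₊ (x,s) = Rn H hδ hD n (x,s) := by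
    intro n x s h
    symm
    apply Rn_le _ _ _ _ _ _ _ _ (hce s)
    rw [Nat.ceil_le, div_le_iff₀ hδ]; exact h
  refine ⟨fun p => Rn H hδ hD ⌈|p.2|/δ⌉₊ p, ?_, ?_, ?_⟩
  · rw [continuous_iff_continuousAt]
    rintro ⟨x, s⟩
    obtain ⟨n, hn⟩ := exists_nat_gt (|s|/δ)
    rw [div_lt_iff₀ hδ] at hn
    refine (continuous_Rn H hδ hD hH n).continuousAt.congr ?_
    have : ∀ᶠ p : X × ℝ in 𝓝 (x,s), |p.2| < n * δ := by
      apply (continuous_snd.abs).continuousAt.eventually_lt_const; exact hn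
    filter_upwards [this] with p hp
    exact (key n p.1 p.2 hp.le).symm
  · intro x; simp [Rn]
  · intro x s
    simp only
    rw [act_Rn, clampN_eq (hce s)]

lemma tube {K : Type*} [TopologicalSpace K] [CompactSpace K] (D : K × ℝ → ℝ) (hD : Continuous D)
    (h0 : ∀ k, 0 < D (k,0)) : ∃ δ > 0, ∀ k w, |w| ≤ δ → 0 < D (k,w) := by
  obtain ⟨U, V, hU, hV, h1, h2, h3⟩ := generalized_tube_lemma (isCompact_univ (X := K))
    (isCompact_singleton (x := (0:ℝ))) (n := {p : K × ℝ | 0 < D p})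
    (isOpen_lt continuous_const hD) (by rintro ⟨k, w⟩ ⟨-, hw⟩; simp at hw; subst hw; exact h0 k)
  have : V ∈ 𝓝 (0:ℝ) := hV.mem_nhds (h2 rfl)
  obtain ⟨ε, hε, hb⟩ := Metric.mem_nhds_iff.1 this
  refine ⟨ε/2, by positivity, fun k w hw => ?_⟩
  apply h3 (show (k,w) ∈ U ×ˢ V from ⟨h1 trivial, hb ?_⟩)
  rw [mem_ball_zero_iff, Real.norm_eq_abs]; linarith

end

end Trefoil

namespace Trefoil

open Quaternion Topology

noncomputable section

abbrev M : Type := Mpq 2 3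

def quo (p : Set.Icc (0:ℝ) 1 × Circle) : M := Quot.mk _ p

lemma continuous_quo : Continuous quo := continuous_quot_mk

instance : CompactSpace M := Quot.compactSpace

abbrev pI (t : ℝ) : Set.Icc (0:ℝ) 1 := Set.projIcc 0 1 zero_le_one t

lemma continuous_pI : Continuous pI := continuous_projIcc

lemma pI_coe (t : Set.Icc (0:ℝ) 1) : pI t = t := Set.projIcc_val _ _

/-- Parametrisation of `M` by the plane. -/
def mkM (t θ : ℝ) : M := quo (pI t, Circle.exp θ)

lemma continuous_mkM : Continuous fun p : ℝ × ℝ => mkM p.1 p.2 :=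
  continuous_quo.comp ((continuous_pI.comp continuous_fst).prodMk
    (Circle.exp.continuous.comp continuous_snd))

lemma mkM_surj (m : M) : ∃ t θ, 0 ≤ t ∧ t ≤ 1 ∧ mkM t θ = m := by
  obtain ⟨⟨t, z⟩, rfl⟩ := Quot.mk_surjective m
  obtain ⟨θ, rfl⟩ := Circle.exp_surjective z
  exact ⟨t, θ, t.2.1, t.2.2, by rw [mkM, pI_coe]; rfl⟩

lemma mkM_per (t θ : ℝ) : mkM t (θ + 2 * Real.pi) = mkM t θ := by
  rw [mkM, mkM, Circle.exp_add_two_pi]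

lemma mkM_per0 (θ : ℝ) : mkM 0 (θ + Real.pi) = mkM 0 θ := by
  symm
  apply Quot.sound
  left
  refine ⟨by simp [pI], by simp [pI], ?_⟩
  simp only
  rw [Circle.exp_add, mul_comm]; congr 2; push_cast; ring

lemma mkM_per1 (θ : ℝ) : mkM 1 (θ + 2 * Real.pi / 3) = mkM 1 θ := by
  symm
  apply Quot.sound
  right
  refine ⟨by simp [pI], by simp [pI], ?_⟩
  simp only
  rw [Circle.exp_add, mul_comm]; congr 2

lemma isOpenQuotientMap_cexp : IsOpenQuotientMap (Circle.exp : ℝ → Circle) :=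
  ⟨Circle.exp_surjective, Circle.exp.continuous, Circle.isCoveringMap_exp.isLocalHomeomorph.isOpenMap⟩

theorem M_desc {Y : Type*} [TopologicalSpace Y] (f : ℝ × ℝ → Y) (hf : Continuous f)
    (h : ∀ t θ, f (t, θ + 2 * Real.pi) = f (t, θ)) (h0 : ∀ θ, f (0, θ + Real.pi) = f (0, θ))
    (h1 : ∀ θ, f (1, θ + 2 * Real.pi / 3) = f (1, θ)) :
    ∃ F : C(M, Y), ∀ t θ, 0 ≤ t → t ≤ 1 → F (mkM t θ) = f (t, θ) := by
  have hq : IsOpenQuotientMap (Prod.map (id : Set.Icc (0:ℝ) 1 → Set.Icc (0:ℝ) 1)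
    (Circle.exp : ℝ → Circle)) := IsOpenQuotientMap.prodMap .id isOpenQuotientMap_cexp
  let f' : C(Set.Icc (0:ℝ) 1 × ℝ, Y) := ⟨fun p => f (p.1, p.2), by fun_prop⟩
  have hcomp : ∀ a b : Set.Icc (0:ℝ) 1 × ℝ, Prod.map id (Circle.exp : ℝ → Circle) a =
      Prod.map id (Circle.exp : ℝ → Circle) b → f' a = f' b := by
    rintro ⟨t, x⟩ ⟨t', y⟩ hab
    simp only [Prod.map, id, Prod.mk.injEq] at hab
    obtain ⟨rfl, hab⟩ := hab
    obtain ⟨m, rfl⟩ := Circle.exp_eq_exp.1 hab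
    have hp : Function.Periodic (fun θ => f ((t:ℝ), θ)) (2 * Real.pi) := fun θ => h t θ
    exact hp.int_mul m y
  let qc : C(Set.Icc (0:ℝ) 1 × ℝ, Set.Icc (0:ℝ) 1 × Circle) := ⟨_, hq.continuous⟩
  have hqc : IsQuotientMap qc := hq.isQuotientMap
  have hcomp' : Function.FactorsThrough f' qc := fun {a b} => hcomp a b
  let G : C(Set.Icc (0:ℝ) 1 × Circle, Y) := hqc.lift f' hcomp'
  have hG : ∀ (t : Set.Icc (0:ℝ) 1) θ, G (t, Circle.exp θ) = f (t, θ) := fun t θ =>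
    DFunLike.congr_fun (hqc.lift_comp f' hcomp') (t, θ)
  have hrel : ∀ a b, MpqRel 2 3 a b → G a = G b := by
    rintro ⟨t, z⟩ ⟨t', z'⟩ hab
    obtain ⟨θ, rfl⟩ := Circle.exp_surjective z
    rcases hab with ⟨a1, a2, a3⟩ | ⟨a1, a2, a3⟩
    · simp only at a1 a2 a3
      subst a3
      rw [← Circle.exp_add, hG, hG, a1, a2, ← h0]
      congr 2; push_cast; ring
    · simp only at a1 a2 a3
      subst a3
      rw [← Circle.exp_add, hG, hG, a1, a2, ← h1]
      congr 2; push_cast; ring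
  refine ⟨⟨Quot.lift G hrel, continuous_quot_lift hrel G.continuous⟩, fun t θ ht0 ht1 => ?_⟩
  show G (pI t, Circle.exp θ) = _
  rw [hG]
  congr 2
  simp [pI, Set.projIcc, ht0, ht1]

/-- Every map to the projective plane lifts to the unit quaternions over the plane. -/
theorem exists_lift (F : C(M, RP2)) : ∃ g : ℝ × ℝ → S3, Continuous g ∧
    ∀ t θ, act (g (t, θ)) x0 = F (mkM t θ) := by
  have hF := F.continuous
  -- the `t` direction
  have hpI : ∀ s s', |((pI s' : ℝ) - pI s)| ≤ |s - s'| := by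
    intro s s'
    have := (Set.abs_projIcc_sub_projIcc (a := (0:ℝ)) (b := 1) (c := s') (d := s) zero_le_one)
    rw [abs_sub_comm s s']; exact this
  have c1 : Continuous fun p : Set.Icc (0:ℝ) 1 × ℝ =>
      DD (F (mkM p.1 0)) (F (mkM (p.1 + p.2) 0)) := by
    have a1 : Continuous fun p : Set.Icc (0:ℝ) 1 × ℝ => ((p.1 : ℝ), (0:ℝ)) := by fun_prop
    have a2 : Continuous fun p : Set.Icc (0:ℝ) 1 × ℝ => ((p.1 : ℝ) + p.2, (0:ℝ)) := by fun_prop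
    have := continuous_DD.comp ((hF.comp (continuous_mkM.comp a1)).prodMk
      (hF.comp (continuous_mkM.comp a2)))
    exact this
  obtain ⟨δ₁, hδ₁, hd₁⟩ := tube _ c1 (by intro k; simp [DD_self])
  have c1' : Continuous fun p : Unit × ℝ => F (mkM p.2 0) := by
    have a1 : Continuous fun p : Unit × ℝ => (p.2, (0:ℝ)) := by fun_prop
    exact hF.comp (continuous_mkM.comp a1)
  obtain ⟨R₁, hR₁, -, hR₁'⟩ := lift_lemma _ c1' hδ₁ (by
    intro x s s' hs
    have := hd₁ (pI s) ((pI s' : ℝ) - pI s) ((hpI _ _).trans hs)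
    simp only [add_sub_cancel] at this
    simpa [mkM, pI_coe] using this)
  -- the `θ` direction
  have c2 : Continuous fun p : (Set.Icc (0:ℝ) 1 × Circle) × ℝ =>
      DD (F (quo p.1)) (F (quo (p.1.1, p.1.2 * Circle.exp p.2))) := by
    have a2 : Continuous fun p : (Set.Icc (0:ℝ) 1 × Circle) × ℝ =>
      (p.1.1, p.1.2 * Circle.exp p.2) := by fun_prop
    have := continuous_DD.comp ((hF.comp (continuous_quo.comp continuous_fst)).prodMk
      (hF.comp (continuous_quo.comp a2)))
    exact this
  obtain ⟨δ₂, hδ₂, hd₂⟩ := tube _ c2 (by intro k; simp [DD_self])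
  have c2' : Continuous fun p : ℝ × ℝ => F (mkM p.1 p.2) := hF.comp continuous_mkM
  obtain ⟨R₂, hR₂, -, hR₂'⟩ := lift_lemma _ c2' hδ₂ (by
    intro x s s' hs
    have := hd₂ (pI x, Circle.exp s) (s' - s) (by rwa [abs_sub_comm])
    simp only [← Circle.exp_add, add_sub_cancel] at this
    exact this)
  obtain ⟨q, hq⟩ := act_trans (F (mkM 0 0))
  refine ⟨fun p => R₂ p * (R₁ ((), p.1) * q), ?_, ?_⟩
  · exact hR₂.mul ((hR₁.comp (continuous_const.prodMk continuous_fst)).mul continuous_const)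
  · intro t θ
    simp only at hR₁' hR₂'
    rw [act_mul, act_mul, hq, hR₁', hR₂']

/-- Homotopic maps differ by a map to the unit quaternions. -/
theorem homotopic_orbit (F F' : C(M, RP2)) (h : F.Homotopic F') :
    ∃ R : C(M, S3), ∀ m, act (R m) (F m) = F' m := by
  obtain ⟨H⟩ := h
  have hH := H.continuous
  have hpI : ∀ s s', |((pI s' : ℝ) - pI s)| ≤ |s - s'| := by
    intro s s'
    have := (Set.abs_projIcc_sub_projIcc (a := (0:ℝ)) (b := 1) (c := s') (d := s) zero_le_one)
    rw [abs_sub_comm s s']; exact this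
  have c1 : Continuous fun p : (M × Set.Icc (0:ℝ) 1) × ℝ =>
      DD (H (p.1.2, p.1.1)) (H (pI (p.1.2 + p.2), p.1.1)) := by
    have a1 : Continuous fun p : (M × Set.Icc (0:ℝ) 1) × ℝ => (p.1.2, p.1.1) := by fun_prop
    have a2 : Continuous fun p : (M × Set.Icc (0:ℝ) 1) × ℝ => (pI (p.1.2 + p.2), p.1.1) := by
      have := continuous_pI
      fun_prop
    have := continuous_DD.comp ((hH.comp a1).prodMk (hH.comp a2))
    exact this
  obtain ⟨δ₁, hδ₁, hd₁⟩ := tube _ c1 (by intro k; simp [DD_self])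
  have c1' : Continuous fun p : M × ℝ => H (pI p.2, p.1) := by
    have := continuous_pI
    exact hH.comp (by fun_prop)
  obtain ⟨R, hR, -, hR'⟩ := lift_lemma _ c1' hδ₁ (by
    intro x s s' hs
    have := hd₁ (x, pI s) ((pI s' : ℝ) - pI s) ((hpI _ _).trans hs)
    simp only [add_sub_cancel] at this
    simpa [pI_coe] using this)
  refine ⟨⟨fun m => R (m, 1), hR.comp (by fun_prop)⟩, fun m => ?_⟩
  have := hR' m 1
  simpa [pI] using this

end

end Trefoil

namespace Trefoil

open Quaternion Topology

noncomputable section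

/-- Functions on `M` which are `C¹` in the coordinates `t, θ`. -/
def algA : Subalgebra ℝ C(M, ℝ) where
  carrier := {f | ∃ F : ℝ × ℝ → ℝ, ContDiff ℝ 1 F ∧
    ∀ t θ, 0 ≤ t → t ≤ 1 → f (mkM t θ) = F (t, θ)}
  mul_mem' := by
    rintro f g ⟨F, hF, hF'⟩ ⟨G, hG, hG'⟩
    exact ⟨fun p => F p * G p, hF.mul hG, fun t θ h0 h1 => by
      simp [hF' t θ h0 h1, hG' t θ h0 h1]⟩
  add_mem' := by
    rintro f g ⟨F, hF, hF'⟩ ⟨G, hG, hG'⟩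
    exact ⟨fun p => F p + G p, hF.add hG, fun t θ h0 h1 => by
      simp [hF' t θ h0 h1, hG' t θ h0 h1]⟩
  algebraMap_mem' := by
    intro r
    exact ⟨fun _ => r, contDiff_const, fun t θ h0 h1 => rfl⟩

lemma algA_of (F : ℝ × ℝ → ℝ) (hF : ContDiff ℝ 1 F)
    (h : ∀ t θ, F (t, θ + 2 * Real.pi) = F (t, θ)) (h0 : ∀ θ, F (0, θ + Real.pi) = F (0, θ))
    (h1 : ∀ θ, F (1, θ + 2 * Real.pi / 3) = F (1, θ)) :
    ∃ f ∈ algA, ∀ t θ, 0 ≤ t → t ≤ 1 → f (mkM t θ) = F (t, θ) := by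
  obtain ⟨f, hf⟩ := M_desc F hF.continuous h h0 h1
  exact ⟨f, ⟨F, hF, hf⟩, hf⟩

lemma cexp_eq {a b : ℝ} (h1 : Real.cos a = Real.cos b) (h2 : Real.sin a = Real.sin b) :
    Circle.exp a = Circle.exp b := by
  apply Circle.ext
  rw [Circle.coe_exp, Circle.coe_exp]
  apply Complex.ext
  · rw [Complex.exp_ofReal_mul_I_re, Complex.exp_ofReal_mul_I_re, h1]
  · rw [Complex.exp_ofReal_mul_I_im, Complex.exp_ofReal_mul_I_im, h2]

lemma algA_sep : algA.SeparatesPoints := by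
  intro m m' hne
  by_contra hcon
  apply hne
  have key : ∀ f ∈ algA, f m = f m' := by
    intro f hf
    by_contra h
    exact hcon ⟨f, ⟨f, hf, rfl⟩, h⟩
  obtain ⟨t, θ, ht0, ht1, rfl⟩ := mkM_surj m
  obtain ⟨t', θ', ht0', ht1', rfl⟩ := mkM_surj m'
  have key2 : ∀ (F : ℝ × ℝ → ℝ), ContDiff ℝ 1 F →
    (∀ t θ, F (t, θ + 2 * Real.pi) = F (t, θ)) → (∀ θ, F (0, θ + Real.pi) = F (0, θ)) →
    (∀ θ, F (1, θ + 2 * Real.pi / 3) = F (1, θ)) → F (t, θ) = F (t', θ') := by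
    intro F hF h h0 h1
    obtain ⟨f, hf, hf'⟩ := algA_of F hF h h0 h1
    rw [← hf' t θ ht0 ht1, ← hf' t' θ' ht0' ht1', key f hf]
  have htt : t = t' := key2 (fun p => p.1) contDiff_fst (by simp) (by simp) (by simp)
  subst htt
  have p2c : ∀ x : ℝ, Real.cos (2 * (x + 2 * Real.pi)) = Real.cos (2 * x) := fun x => by
    rw [show 2 * (x + 2 * Real.pi) = 2 * x + 2 * Real.pi + 2 * Real.pi by ring,
      Real.cos_add_two_pi, Real.cos_add_two_pi]
  have p2s : ∀ x : ℝ, Real.sin (2 * (x + 2 * Real.pi)) = Real.sin (2 * x) := fun x => by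
    rw [show 2 * (x + 2 * Real.pi) = 2 * x + 2 * Real.pi + 2 * Real.pi by ring,
      Real.sin_add_two_pi, Real.sin_add_two_pi]
  have p3c : ∀ x : ℝ, Real.cos (3 * (x + 2 * Real.pi)) = Real.cos (3 * x) := fun x => by
    rw [show 3 * (x + 2 * Real.pi) = 3 * x + 2 * Real.pi + 2 * Real.pi + 2 * Real.pi by ring,
      Real.cos_add_two_pi, Real.cos_add_two_pi, Real.cos_add_two_pi]
  have p3s : ∀ x : ℝ, Real.sin (3 * (x + 2 * Real.pi)) = Real.sin (3 * x) := fun x => by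
    rw [show 3 * (x + 2 * Real.pi) = 3 * x + 2 * Real.pi + 2 * Real.pi + 2 * Real.pi by ring,
      Real.sin_add_two_pi, Real.sin_add_two_pi, Real.sin_add_two_pi]
  have c2 : (1 - t) * Real.cos (2 * θ) = (1 - t) * Real.cos (2 * θ') :=
    key2 (fun p => (1 - p.1) * Real.cos (2 * p.2)) (by fun_prop) (by simp [p2c])
      (fun x => by simp [mul_add]) (by simp)
  have s2 : (1 - t) * Real.sin (2 * θ) = (1 - t) * Real.sin (2 * θ') :=
    key2 (fun p => (1 - p.1) * Real.sin (2 * p.2)) (by fun_prop) (by simp [p2s])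
      (fun x => by simp [mul_add]) (by simp)
  have c3 : t * Real.cos (3 * θ) = t * Real.cos (3 * θ') :=
    key2 (fun p => p.1 * Real.cos (3 * p.2)) (by fun_prop) (by simp [p3c])
      (by simp) (fun x => by
        simp only [one_mul]
        rw [show 3 * (x + 2 * Real.pi / 3) = 3 * x + 2 * Real.pi by ring, Real.cos_add_two_pi])
  have s3 : t * Real.sin (3 * θ) = t * Real.sin (3 * θ') :=
    key2 (fun p => p.1 * Real.sin (3 * p.2)) (by fun_prop) (by simp [p3s])
      (by simp) (fun x => by
        simp only [one_mul]
        rw [show 3 * (x + 2 * Real.pi / 3) = 3 * x + 2 * Real.pi by ring, Real.sin_add_two_pi])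
  have c1 : t * (1 - t) * Real.cos θ = t * (1 - t) * Real.cos θ' :=
    key2 (fun p => p.1 * (1 - p.1) * Real.cos p.2) (by fun_prop) (by simp)
      (by simp) (by simp)
  have s1 : t * (1 - t) * Real.sin θ = t * (1 - t) * Real.sin θ' :=
    key2 (fun p => p.1 * (1 - p.1) * Real.sin p.2) (by fun_prop) (by simp)
      (by simp) (by simp)
  by_cases h0 : t = 0
  · subst h0
    simp only [sub_zero, one_mul] at c2 s2
    obtain ⟨k, hk⟩ := Circle.exp_eq_exp.1 (cexp_eq c2 s2)
    have hp : Function.Periodic (mkM 0) Real.pi := mkM_per0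
    rw [show θ = θ' + k * Real.pi by linarith]
    exact hp.int_mul k θ'
  by_cases h1 : t = 1
  · subst h1
    simp only [one_mul] at c3 s3
    obtain ⟨k, hk⟩ := Circle.exp_eq_exp.1 (cexp_eq c3 s3)
    have hp : Function.Periodic (mkM 1) (2 * Real.pi / 3) := mkM_per1
    rw [show θ = θ' + k * (2 * Real.pi / 3) by linarith]
    exact hp.int_mul k θ'
  have h2 : t * (1 - t) ≠ 0 := mul_ne_zero h0 (sub_ne_zero.2 (Ne.symm h1))
  rw [mkM, mkM, cexp_eq (mul_left_cancel₀ h2 c1) (mul_left_cancel₀ h2 s1)]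

lemma nz_S3 (q : S3) (h : (q : Quaternion ℝ) ≠ 0) : nz q h = q := by
  apply Subtype.ext
  simp [nz, S3_norm]

/-- Linear homotopies avoiding zero. -/
lemma homotopic_of_segment (f g : C(M, Quaternion ℝ)) (h0 : ∀ m, f m ≠ 0) (h1 : ∀ m, g m ≠ 0)
    (h : ∀ m (s : ℝ), 0 ≤ s → s ≤ 1 → (1 - s) • f m + s • g m ≠ 0) :
    (⟨fun m => nz (f m) (h0 m), continuous_nz f.continuous h0⟩ : C(M, S3)).Homotopic
      ⟨fun m => nz (g m) (h1 m), continuous_nz g.continuous h1⟩ := by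
  have hc : Continuous fun p : unitInterval × M =>
      (1 - (p.1 : ℝ)) • f p.2 + (p.1 : ℝ) • g p.2 := by fun_prop
  refine ⟨⟨⟨fun p => nz _ (h p.2 p.1 p.1.2.1 p.1.2.2), continuous_nz hc _⟩, ?_, ?_⟩⟩
  · intro m; apply Subtype.ext; simp [nz]
  · intro m; apply Subtype.ext; simp [nz]

theorem S3_null (R : C(M, S3)) : R.Homotopic (ContinuousMap.const M 1) := by
  -- approximate
  have happ : ∀ c : C(Quaternion ℝ, ℝ), ∃ f ∈ algA, ∀ m : M, |f m - c (R m)| < 1/4 := by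
    intro c
    obtain ⟨g, hg⟩ := ContinuousMap.exists_mem_subalgebra_near_continuous_of_separatesPoints
      algA algA_sep (fun m => c (R m)) (by fun_prop) (1/4) (by norm_num)
    exact ⟨g, g.2, fun m => by simpa using hg m⟩
  obtain ⟨f0, hf0, a0⟩ := happ ⟨_, Quaternion.continuous_re⟩
  obtain ⟨f1, hf1, a1⟩ := happ ⟨_, Quaternion.continuous_imI⟩
  obtain ⟨f2, hf2, a2⟩ := happ ⟨_, Quaternion.continuous_imJ⟩
  obtain ⟨f3, hf3, a3⟩ := happ ⟨_, Quaternion.continuous_imK⟩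
  simp only [ContinuousMap.coe_mk] at a0 a1 a2 a3
  obtain ⟨F0, hF0, b0⟩ := hf0
  obtain ⟨F1, hF1, b1⟩ := hf1
  obtain ⟨F2, hF2, b2⟩ := hf2
  obtain ⟨F3, hF3, b3⟩ := hf3
  let Rq : C(M, Quaternion ℝ) := ⟨fun m => R m, by fun_prop⟩
  let f : C(M, Quaternion ℝ) := ⟨fun m => mkH (f0 m) (f1 m) (f2 m) (f3 m),
    continuous_mkH f0.continuous f1.continuous f2.continuous f3.continuous⟩
  have hclose : ∀ m, ‖f m - Rq m‖ < 1 := by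
    intro m
    have h := norm_sq_H (f m - Rq m)
    have e0 : (f m - Rq m).re = f0 m - (R m : Quaternion ℝ).re := rfl
    have e1 : (f m - Rq m).imI = f1 m - (R m : Quaternion ℝ).imI := rfl
    have e2 : (f m - Rq m).imJ = f2 m - (R m : Quaternion ℝ).imJ := rfl
    have e3 : (f m - Rq m).imK = f3 m - (R m : Quaternion ℝ).imK := rfl
    rw [e0, e1, e2, e3] at h
    have g0 := sq_lt_sq' (abs_lt.1 (a0 m)).1 (abs_lt.1 (a0 m)).2
    have g1 := sq_lt_sq' (abs_lt.1 (a1 m)).1 (abs_lt.1 (a1 m)).2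
    have g2 := sq_lt_sq' (abs_lt.1 (a2 m)).1 (abs_lt.1 (a2 m)).2
    have g3 := sq_lt_sq' (abs_lt.1 (a3 m)).1 (abs_lt.1 (a3 m)).2
    nlinarith [norm_nonneg (f m - Rq m)]
  have hseg : ∀ m (s : ℝ), 0 ≤ s → s ≤ 1 → (1 - s) • Rq m + s • f m ≠ 0 := by
    intro m s hs0 hs1 h
    have h2 : s • (f m - Rq m) = - Rq m := by
      rw [← sub_eq_zero, ← h]; module
    have h3 := congrArg norm h2
    rw [norm_neg, norm_smul, Real.norm_of_nonneg hs0] at h3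
    have h4 : ‖Rq m‖ = 1 := S3_norm (R m)
    nlinarith [hclose m, norm_nonneg (f m - Rq m)]
  have hR0 : ∀ m, Rq m ≠ 0 := fun m => by simpa using hseg m 0 le_rfl zero_le_one
  have hf0' : ∀ m, f m ≠ 0 := fun m => by simpa using hseg m 1 zero_le_one le_rfl
  have H1 := homotopic_of_segment Rq f hR0 hf0' hseg
  -- a missed direction
  let Cn : ℝ × (ℝ × ℝ) → Quaternion ℝ := fun p =>
    (p.1 * F0 p.2) • mkH 1 0 0 0 + (p.1 * F1 p.2) • mkH 0 1 0 0 + (p.1 * F2 p.2) • mkH 0 0 1 0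
      + (p.1 * F3 p.2) • mkH 0 0 0 1
  have hCn : ContDiff ℝ 1 Cn := by
    have k0 : ContDiff ℝ 1 fun p : ℝ × (ℝ × ℝ) => p.1 * F0 p.2 := contDiff_fst.mul (hF0.comp contDiff_snd)
    have k1 : ContDiff ℝ 1 fun p : ℝ × (ℝ × ℝ) => p.1 * F1 p.2 := contDiff_fst.mul (hF1.comp contDiff_snd)
    have k2 : ContDiff ℝ 1 fun p : ℝ × (ℝ × ℝ) => p.1 * F2 p.2 := contDiff_fst.mul (hF2.comp contDiff_snd)
    have k3 : ContDiff ℝ 1 fun p : ℝ × (ℝ × ℝ) => p.1 * F3 p.2 := contDiff_fst.mul (hF3.comp contDiff_snd)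
    exact (((k0.smul contDiff_const).add (k1.smul contDiff_const)).add
      (k2.smul contDiff_const)).add (k3.smul contDiff_const)
  have hfr : Module.finrank ℝ (Quaternion ℝ) = 4 := Quaternion.finrank_eq_four
  have hdense := hCn.dense_compl_range_of_finrank_lt_finrank (by
    rw [hfr]; simp)
  obtain ⟨v, hv⟩ := hdense.nonempty
  have hCf : ∀ (r : ℝ) m, r • f m ∈ Set.range Cn := by
    intro r m
    obtain ⟨t, θ, ht0, ht1, rfl⟩ := mkM_surj m
    refine ⟨(r, (t, θ)), ?_⟩
    have e : f (mkM t θ) = mkH (F0 (t,θ)) (F1 (t,θ)) (F2 (t,θ)) (F3 (t,θ)) := by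
      rw [← b0 t θ ht0 ht1, ← b1 t θ ht0 ht1, ← b2 t θ ht0 ht1, ← b3 t θ ht0 ht1]; rfl
    rw [e]
    simp only [Cn]
    ext <;> simp
  have m0 : M := mkM 0 0
  have hv0 : -v ≠ 0 := by
    intro h
    apply hv
    have := hCf 0 m0
    rw [zero_smul] at this
    rwa [neg_eq_zero.1 h]
  have H2 := homotopic_of_segment f (ContinuousMap.const M (-v)) hf0' (fun _ => hv0) (by
    intro m s hs0 hs1 h
    simp only [ContinuousMap.const_apply] at h
    have hs : s ≠ 0 := by
      rintro rfl
      simp at h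
      exact hf0' m h
    apply hv
    have : v = ((1 - s) / s) • f m := by
      have h5 : (1 - s) • f m = s • v := by
        rw [← sub_eq_zero, ← h]; module
      rw [div_eq_inv_mul, mul_smul, h5, smul_smul, inv_mul_cancel₀ hs, one_smul]
    rw [this]; exact hCf _ m)
  have H3 : (ContinuousMap.const M (nz (-v) hv0)).Homotopic (ContinuousMap.const M (1 : S3)) := by
    have hpc : IsPathConnected (Metric.sphere (0 : Quaternion ℝ) 1) :=
      isPathConnected_sphere (by
        rw [← Module.finrank_eq_rank, hfr]; norm_num) 0 zero_le_one
    have : PathConnectedSpace S3 := isPathConnected_iff_pathConnectedSpace.1 hpc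
    obtain ⟨γ⟩ := PathConnectedSpace.joined (nz (-v) hv0) (1 : S3)
    exact ⟨⟨⟨fun p => γ p.1, by fun_prop⟩, by simp, by simp⟩⟩
  have e1 : R = ⟨fun m => nz (Rq m) (hR0 m), continuous_nz Rq.continuous hR0⟩ := by
    ext1 m
    exact (nz_S3 (R m) (hR0 m)).symm
  rw [e1]
  exact (H1.trans H2).trans H3

/-- Maps in the same orbit are homotopic. -/
theorem orbit_homotopic (F F' : C(M, RP2)) (R : C(M, S3)) (h : ∀ m, act (R m) (F m) = F' m) :
    F'.Homotopic F := by
  obtain ⟨H⟩ := S3_null R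
  refine ⟨⟨⟨fun p => act (H p) (F p.2), continuous_act' H.continuous (F.continuous.comp continuous_snd)⟩, ?_, ?_⟩⟩
  · intro m; simp [h]
  · intro m; simp [act_one]

end

end Trefoil

namespace Trefoil

open Quaternion Topology

noncomputable section

lemma diff_one {X : Type*} [TopologicalSpace X] (a : X × ℝ → ℝ) (ha : Continuous a) (T : ℝ)
    (hT : 0 < T) (s C : ℝ) (hC : ∀ x θ, θ ≤ C → a (x, θ) = 0) :
    ∃ φ : X × ℝ → ℝ, Continuous φ ∧ (∀ x θ, φ (x, θ + T) = s * φ (x, θ) + a (x, θ)) ∧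
      ∀ x, (∀ θ, a (x, θ) = 0) → ∀ θ, φ (x, θ) = 0 := by
  have hfin : ∀ (x : X) (θ : ℝ), (Function.support fun k : ℕ => s ^ k * a (x, θ - (k + 1) * T)).Finite := by
    intro x θ
    obtain ⟨N, hN⟩ := exists_nat_gt ((θ - C) / T)
    refine (Set.finite_lt_nat N).subset fun k hk => ?_
    by_contra h
    apply hk
    have h' : (N : ℝ) ≤ k := by exact_mod_cast not_lt.1 h
    show s ^ k * a _ = 0
    rw [hC, mul_zero]
    rw [div_lt_iff₀ hT] at hN
    nlinarith
  refine ⟨fun p => ∑ᶠ k : ℕ, s ^ k * a (p.1, p.2 - (k + 1) * T), ?_, ?_, ?_⟩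
  · refine continuous_finsum (fun k => by fun_prop) ?_
    rintro ⟨x, θ⟩
    refine ⟨Set.univ ×ˢ Set.Iio (θ + 1), ?_, ?_⟩
    · exact (isOpen_univ.prod isOpen_Iio).mem_nhds ⟨trivial, by simp⟩
    · obtain ⟨N, hN⟩ := exists_nat_gt ((θ + 1 - C) / T)
      refine (Set.finite_lt_nat N).subset ?_
      rintro k ⟨⟨y, τ⟩, hk, -, hτ⟩
      by_contra h
      apply hk
      have h' : (N : ℝ) ≤ k := by exact_mod_cast not_lt.1 h
      show s ^ k * a _ = 0
      rw [hC, mul_zero]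
      rw [div_lt_iff₀ hT] at hN
      simp at hτ
      simp only
      nlinarith
  · intro x θ
    simp only
    have h1 := hfin x (θ + T)
    have h0 := hfin x θ
    rw [← tsum_eq_finsum (L := SummationFilter.unconditional ℕ) h1, ← tsum_eq_finsum (L := SummationFilter.unconditional ℕ) h0,
      (summable_of_hasFiniteSupport h1).tsum_eq_zero_add, ← tsum_mul_left, add_comm]
    congr 1
    · refine tsum_congr fun k => ?_
      rw [pow_succ' s k, mul_assoc]
      congr 4
      push_cast; ring
    · simp
  · intro x hx θ
    simp [hx]

lemma diff_eq {X : Type*} [TopologicalSpace X] (a : X × ℝ → ℝ) (ha : Continuous a) (T : ℝ)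
    (hT : 0 < T) (s : ℝ) (hs : s * s = 1) :
    ∃ φ : X × ℝ → ℝ, Continuous φ ∧ (∀ x θ, φ (x, θ + T) = s * φ (x, θ) + a (x, θ)) ∧
      ∀ x, (∀ θ, a (x, θ) = 0) → ∀ θ, φ (x, θ) = 0 := by
  obtain ⟨u, hu, hu1, hu2⟩ := diff_one (fun p => a p * max 0 (min 1 p.2)) (by fun_prop) T hT s 0
    (fun x θ h => by simp only; rw [max_eq_left ((min_le_right _ _).trans h), mul_zero])
  obtain ⟨v, hv, hv1, hv2⟩ := diff_one (fun p : X × ℝ => - s * (a (p.1, - p.2 - T) *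
      (1 - max 0 (min 1 (- p.2 - T))))) (by fun_prop) T hT s (-1 - T)
    (fun x θ h => by
      simp only; rw [min_eq_left (by linarith), max_eq_right (by norm_num)]; ring)
  refine ⟨fun p => u p + v (p.1, - p.2), by fun_prop, ?_, ?_⟩
  · intro x θ
    simp only
    have h1 := hu1 x θ
    have h2 := hv1 x (-(θ + T))
    simp only [show -(θ + T) + T = - θ by ring, show - -(θ + T) - T = θ by ring] at h1 h2
    rw [h1, h2]
    linear_combination (- v (x, -(θ+T)) + a (x, θ) * (1 - max 0 (min 1 θ))) * hs
  · intro x hx θ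
    simp only
    rw [hu2 x (by simp [hx]), hv2 x (by simp [hx]), add_zero]

lemma gauge (s : ℝ) (hs : s * s = 1) (b0 b1 : ℝ → ℝ) (c : ℝ × ℝ → ℝ) (hb0 : Continuous b0)
    (hb1 : Continuous b1) (hc : Continuous c)
    (h0 : ∀ θ, c (0, θ) = s * b0 θ + b0 (θ + Real.pi))
    (h1 : ∀ θ, c (1, θ) = b1 θ + b1 (θ + 2 * Real.pi / 3)
      + b1 (θ + 2 * Real.pi / 3 + 2 * Real.pi / 3)) :
    ∃ φ : ℝ × ℝ → ℝ, Continuous φ ∧ (∀ t θ, φ (t, θ + 2 * Real.pi) = φ (t, θ) + c (t, θ)) ∧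
      (∀ θ, φ (0, θ + Real.pi) = s * φ (0, θ) + b0 θ) ∧
      (∀ θ, φ (1, θ + 2 * Real.pi / 3) = φ (1, θ) + b1 θ) := by
  have hpi := Real.pi_pos
  obtain ⟨f0, hf0, hf0', -⟩ := diff_eq (X := Unit) (fun p => b0 p.2) (by fun_prop) Real.pi hpi s hs
  obtain ⟨f1, hf1, hf1', -⟩ := diff_eq (X := Unit) (fun p => b1 p.2) (by fun_prop)
    (2 * Real.pi / 3) (by positivity) 1 (by norm_num)
  obtain ⟨f2, hf2, hf2', hz⟩ := diff_eq (X := ℝ) (fun p => c p - (1 - p.1) * c (0, p.2)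
    - p.1 * c (1, p.2)) (by fun_prop) (2 * Real.pi) (by positivity) 1 (by norm_num)
  have z0 := hz 0 (by simp)
  have z1 := hz 1 (by simp)
  simp only at hf0' hf1' hf2'
  refine ⟨fun p => (1 - p.1) * f0 ((), p.2) + p.1 * f1 ((), p.2) + f2 p, by fun_prop, ?_, ?_, ?_⟩
  · intro t θ
    simp only
    have e0 : f0 ((), θ + 2 * Real.pi) = f0 ((), θ) + c (0, θ) := by
      rw [show θ + 2 * Real.pi = θ + Real.pi + Real.pi by ring, hf0', hf0', h0]
      linear_combination f0 ((), θ) * hs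
    have e1 : f1 ((), θ + 2 * Real.pi) = f1 ((), θ) + c (1, θ) := by
      rw [show θ + 2 * Real.pi = θ + 2 * Real.pi / 3 + 2 * Real.pi / 3 + 2 * Real.pi / 3 by ring,
        hf1', hf1', hf1', h1]
      ring
    rw [e0, e1, hf2']
    ring
  · intro θ
    simp only [z0, hf0']
    ring
  · intro θ
    simp only [z1, hf1']
    ring

/-! ### The circle subgroup -/

lemma S3_ext {p q : S3} (h : (p : Quaternion ℝ) = q) : p = q := Subtype.ext h

/-- A point of `S3` from coordinates. -/
def mkS (a b c d : ℝ) (h : a ^ 2 + b ^ 2 + c ^ 2 + d ^ 2 = 1) : S3 := ⟨mkH a b c d, by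
  rw [mem_sphere_zero_iff_norm, ← sq_eq_sq₀ (norm_nonneg _) zero_le_one, norm_sq_H]
  simpa using h⟩

def E (η : ℝ) : S3 := mkS (Real.cos η) (Real.sin η) 0 0 (by simp)
def kk : S3 := mkS 0 0 0 1 (by simp)

lemma E_coe (η : ℝ) : ((E η : S3) : Quaternion ℝ) = mkH (Real.cos η) (Real.sin η) 0 0 := rfl
lemma kk_coe : ((kk : S3) : Quaternion ℝ) = mkH 0 0 0 1 := rfl

lemma continuous_E : Continuous E :=
  Continuous.subtype_mk (continuous_mkH Real.continuous_cos Real.continuous_sin continuous_const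
    continuous_const) _

lemma E_add (a b : ℝ) : E (a + b) = E a * E b := by
  apply S3_ext
  rw [Metric.unitSphere.coe_mul, E_coe, E_coe, E_coe]
  ext <;> simp [Real.cos_add, Real.sin_add] <;> ring

lemma E_zero : E 0 = 1 := by
  apply S3_ext
  rw [E_coe, Metric.unitSphere.coe_one]
  ext <;> simp

lemma E_neg (a : ℝ) : E (-a) = (E a)⁻¹ := by
  rw [eq_inv_iff_mul_eq_one, ← E_add, neg_add_cancel, E_zero]

lemma kk_E (a : ℝ) : kk * E a = E (-a) * kk := by
  apply S3_ext
  rw [Metric.unitSphere.coe_mul, Metric.unitSphere.coe_mul, E_coe, E_coe, kk_coe]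
  ext <;> simp

lemma kk_kk : kk * kk = E Real.pi := by
  apply S3_ext
  rw [Metric.unitSphere.coe_mul, E_coe, kk_coe]
  ext <;> simp

lemma E_inj {a b : ℝ} (h : E a = E b) : ∃ m : ℤ, a = b + m * (2 * Real.pi) := by
  have h' : ((E a : S3) : Quaternion ℝ) = E b := by rw [h]
  rw [E_coe, E_coe] at h'
  have h1 := congrArg QuaternionAlgebra.re h'
  have h2 := congrArg QuaternionAlgebra.imI h'
  simp only [mkH_re, mkH_imI] at h1 h2
  exact Circle.exp_eq_exp.1 (cexp_eq h1 h2)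

lemma E_int (m : ℤ) (a : ℝ) : E (a + m * (2 * Real.pi)) = E a := by
  apply S3_ext
  rw [E_coe, E_coe, Real.cos_add_int_mul_two_pi, Real.sin_add_int_mul_two_pi]

lemma E_two_pi : E (2 * Real.pi) = 1 := by
  have := E_int 1 0
  rw [E_zero] at this; simpa using this

def isP (n : S3) : Prop := (n : Quaternion ℝ).imJ = 0 ∧ (n : Quaternion ℝ).imK = 0
def isN (n : S3) : Prop := (n : Quaternion ℝ).re = 0 ∧ (n : Quaternion ℝ).imI = 0

lemma act_iff (n : S3) : act n x0 = x0 ↔ isP n ∨ isN n := act_x0_iff n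

lemma S3_sq (n : S3) : (n : Quaternion ℝ).re ^ 2 + (n : Quaternion ℝ).imI ^ 2 +
    (n : Quaternion ℝ).imJ ^ 2 + (n : Quaternion ℝ).imK ^ 2 = 1 := by
  rw [← norm_sq_H, S3_norm, one_pow]

lemma isP_not_isN {n : S3} (h : isP n) (h' : isN n) : False := by
  have := S3_sq n
  rw [h.1, h.2, h'.1, h'.2] at this
  norm_num at this

lemma isP_E (a : ℝ) : isP (E a) := ⟨rfl, rfl⟩

lemma isP_exists {n : S3} (h : isP n) : ∃ a, n = E a := by
  have h1 := S3_sq n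
  have h2 : (n : Quaternion ℝ).re ^ 2 + (n : Quaternion ℝ).imI ^ 2 = 1 := by
    rw [h.1, h.2] at h1; linarith
  have hne : (⟨(n : Quaternion ℝ).re, (n : Quaternion ℝ).imI⟩ : ℂ) ∈ Submonoid.unitSphere ℂ := by
    rw [Submonoid.unitSphere, Submonoid.mem_mk]
    show _ ∈ Metric.sphere (0:ℂ) 1
    rw [mem_sphere_zero_iff_norm, ← sq_eq_sq₀ (norm_nonneg _) zero_le_one, ← Complex.normSq_eq_norm_sq,
      Complex.normSq_mk]
    linarith
  obtain ⟨a, ha⟩ := Circle.exp_surjective ⟨_, hne⟩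
  have ha' := congrArg (fun z : Circle => (z : ℂ)) ha
  simp only [Circle.coe_exp] at ha'
  refine ⟨a, S3_ext ?_⟩
  rw [E_coe]
  have hr := congrArg Complex.re ha'
  have hi := congrArg Complex.im ha'
  rw [Complex.exp_ofReal_mul_I_re] at hr
  rw [Complex.exp_ofReal_mul_I_im] at hi
  ext
  · exact hr.symm
  · exact hi.symm
  · exact h.1
  · exact h.2

lemma isN_mul_kk {n : S3} : isN (n * kk) ↔ isP n := by
  unfold isN isP
  rw [Metric.unitSphere.coe_mul, kk_coe]
  simp [and_comm]

lemma isP_mul_kk {n : S3} : isP (n * kk) ↔ isN n := by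
  unfold isN isP
  rw [Metric.unitSphere.coe_mul, kk_coe]
  simp [and_comm]

lemma isN_exists {n : S3} (h : isN n) : ∃ a, n = E a * kk := by
  obtain ⟨a, ha⟩ := isP_exists (isP_mul_kk.2 h)
  refine ⟨a - Real.pi, ?_⟩
  have : n * kk * kk = E a * kk := by rw [ha]
  rw [mul_assoc, kk_kk] at this
  rw [sub_eq_add_neg, E_add, E_neg]
  have e : E a * (E Real.pi)⁻¹ * kk = (E a * kk) * (E Real.pi) := by
    rw [mul_assoc, ← E_neg, mul_assoc, kk_E]
  rw [e, ← this, mul_assoc, ← E_add, ← two_mul, E_two_pi, mul_one]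

lemma isP_mul {m n : S3} (hm : isP m) (hn : isP n) : isP (m * n) := by
  obtain ⟨a, rfl⟩ := isP_exists hm
  obtain ⟨b, rfl⟩ := isP_exists hn
  rw [← E_add]; exact isP_E _

lemma isP_mul_isN {m n : S3} (hm : isP m) (hn : isN n) : isN (m * n) := by
  obtain ⟨b, rfl⟩ := isN_exists hn
  rw [← mul_assoc]
  exact isN_mul_kk.2 (isP_mul hm (isP_E _))

lemma isN_mul_isP {m n : S3} (hm : isN m) (hn : isP n) : isN (m * n) := by
  obtain ⟨a, rfl⟩ := isN_exists hm
  obtain ⟨b, rfl⟩ := isP_exists hn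
  rw [mul_assoc, kk_E, ← mul_assoc, ← E_add]
  exact isN_mul_kk.2 (isP_E _)

lemma isN_mul {m n : S3} (hm : isN m) (hn : isN n) : isP (m * n) := by
  obtain ⟨b, rfl⟩ := isN_exists hn
  rw [← mul_assoc]
  exact isP_mul_kk.2 (isN_mul_isP hm (isP_E _))

lemma type_const {Y : Type*} [TopologicalSpace Y] [PreconnectedSpace Y] (n : Y → S3)
    (hn : Continuous n) (h : ∀ y, act (n y) x0 = x0) : (∀ y, isP (n y)) ∨ ∀ y, isN (n y) := by
  have hP : IsClosed {y | isP (n y)} := by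
    have h1 := Quaternion.continuous_imJ.comp (continuous_subtype_val.comp hn)
    have h2 := Quaternion.continuous_imK.comp (continuous_subtype_val.comp hn)
    exact (isClosed_eq h1 continuous_const).inter (isClosed_eq h2 continuous_const)
  have hN : IsClosed {y | isN (n y)} := by
    have h1 := Quaternion.continuous_re.comp (continuous_subtype_val.comp hn)
    have h2 := Quaternion.continuous_imI.comp (continuous_subtype_val.comp hn)
    exact (isClosed_eq h1 continuous_const).inter (isClosed_eq h2 continuous_const)
  have hc : {y | isP (n y)} = {y | isN (n y)}ᶜ := by
    ext y
    constructor
    · intro a b; exact isP_not_isN a b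
    · intro a; exact ((act_iff _).1 (h y)).resolve_right a
  have hcl : IsClopen {y | isP (n y)} := ⟨hP, by rw [hc]; exact hN.isOpen_compl⟩
  rcases isClopen_iff.1 hcl with h' | h'
  · right; intro y
    refine ((act_iff _).1 (h y)).resolve_left fun hy => ?_
    have : y ∈ {y | isP (n y)} := hy
    rw [h'] at this; exact this
  · left; intro y
    have : y ∈ {y | isP (n y)} := by rw [h']; trivial
    exact this

lemma int_const {Y : Type*} [TopologicalSpace Y] [PreconnectedSpace Y] [Nonempty Y] (f : Y → ℝ)
    (hf : Continuous f)
    (h : ∀ y, ∃ m : ℤ, f y = m * (2 * Real.pi)) : ∃ m : ℤ, ∀ y, f y = m * (2 * Real.pi) := by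
  choose m hm using h
  have hpi := Real.pi_pos
  have hc : Continuous m := by
    have : Continuous fun y => (m y : ℝ) := by
      have e : (fun y => (m y : ℝ)) = fun y => f y / (2 * Real.pi) := by
        funext y; rw [hm]; field_simp
      rw [e]; fun_prop
    exact Int.isClosedEmbedding_coe_real.isInducing.continuous_iff.2 this
  obtain ⟨y0⟩ := ‹Nonempty Y›
  refine ⟨m y0, fun y => ?_⟩
  rw [hm y, PreconnectedSpace.constant ‹_› hc]

lemma E_const {Y : Type*} [TopologicalSpace Y] [PreconnectedSpace Y] [Nonempty Y] {f g : Y → ℝ}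
    (hf : Continuous f) (hg : Continuous g) (h : ∀ y, E (f y) = E (g y)) :
    ∃ m : ℤ, ∀ y, f y = g y + m * (2 * Real.pi) := by
  obtain ⟨m, hm⟩ := int_const (fun y => f y - g y) (by fun_prop) (fun y => by
    obtain ⟨m, hm⟩ := E_inj (h y)
    exact ⟨m, by rw [hm]; ring⟩)
  exact ⟨m, fun y => by linarith [hm y]⟩

lemma E_lift {Y : Type*} [TopologicalSpace Y] [SimplyConnectedSpace Y] [LocallyPathConnectedSpace Y]
    (n : Y → S3) (hn : Continuous n) (h : ∀ y, isP (n y)) :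
    ∃ η : Y → ℝ, Continuous η ∧ ∀ y, n y = E (η y) := by
  have hm : ∀ y, (⟨(n y : Quaternion ℝ).re, (n y : Quaternion ℝ).imI⟩ : ℂ) ∈ Submonoid.unitSphere ℂ := by
    intro y
    obtain ⟨a, ha⟩ := isP_exists (h y)
    rw [ha]
    have := (Circle.exp a).2
    convert! this using 1
    rw [Circle.coe_exp]
    apply Complex.ext
    · rw [Complex.exp_ofReal_mul_I_re]; rfl
    · rw [Complex.exp_ofReal_mul_I_im]; rfl
  have hc : Continuous fun y => (⟨_, hm y⟩ : Circle) := by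
    refine Continuous.subtype_mk ?_ _
    have h1 := Quaternion.continuous_re.comp (continuous_subtype_val.comp hn)
    have h2 := Quaternion.continuous_imI.comp (continuous_subtype_val.comp hn)
    have h3 := Complex.equivRealProdCLM.symm.continuous.comp (h1.prodMk h2)
    exact h3
  obtain ⟨y0⟩ : Nonempty Y := inferInstance
  obtain ⟨a0, ha0⟩ := Circle.exp_surjective ⟨_, hm y0⟩
  obtain ⟨η, ⟨-, hη⟩, -⟩ := Circle.isCoveringMap_exp.existsUnique_continuousMap_lifts
    ⟨_, hc⟩ y0 a0 ha0
  refine ⟨η, η.continuous, fun y => S3_ext ?_⟩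
  have h1 := congrArg (fun z : Circle => (z : ℂ)) (congrFun hη y)
  simp only [Function.comp, Circle.coe_exp, ContinuousMap.coe_mk] at h1
  have hr := congrArg Complex.re h1
  have hi := congrArg Complex.im h1
  rw [Complex.exp_ofReal_mul_I_re] at hr
  rw [Complex.exp_ofReal_mul_I_im] at hi
  rw [E_coe]
  ext
  · exact hr.symm
  · exact hi.symm
  · exact (h y).1
  · exact (h y).2

end

end Trefoil

namespace Trefoil

open Quaternion Topology

noncomputable section

lemma act_E (a : ℝ) : act (E a) x0 = x0 := (act_iff _).2 (Or.inl (isP_E a))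

lemma isN_kk : isN kk := ⟨rfl, rfl⟩

lemma act_kk : act kk x0 = x0 := (act_iff _).2 (Or.inr isN_kk)

lemma act_inv_mul {a b : S3} {x y : RP2} (h : act a x = act b y) : act (a⁻¹ * b) y = x := by
  rw [act_mul, ← h, ← act_mul, inv_mul_cancel, act_one]

lemma E_pi_comm (n : S3) : E Real.pi * n = n * E Real.pi := by
  apply S3_ext
  rw [Metric.unitSphere.coe_mul, Metric.unitSphere.coe_mul, E_coe]
  ext <;> simp

lemma E_pi_pi : E Real.pi * E Real.pi = 1 := by
  rw [← E_add, ← two_mul, E_two_pi]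

lemma of_mul_kk {n : S3} {a : ℝ} (h : n * kk = E a) : n = E (a + Real.pi) * kk := by
  have : n * kk * kk = E a * kk := by rw [h]
  rw [mul_assoc, kk_kk] at this
  rw [E_add, mul_assoc, E_pi_comm, ← mul_assoc, ← this, mul_assoc, E_pi_pi, mul_one]

/-- Standard equivariance of a lift. -/
structure IsStd (h : ℝ × ℝ → S3) (μ : ℝ) : Prop where
  cont : Continuous h
  per : ∀ t θ, h (t, θ + 2 * Real.pi) = h (t, θ) * E Real.pi
  per0 : ∀ θ, h (0, θ + Real.pi) = h (0, θ) * kk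
  per1 : ∀ θ, h (1, θ + 2 * Real.pi / 3) = h (1, θ) * E μ

/-- `h` is a lift of `F`. -/
def Lifts (h : ℝ × ℝ → S3) (F : C(M, RP2)) : Prop :=
  ∀ t θ, 0 ≤ t → t ≤ 1 → F (mkM t θ) = act (h (t, θ)) x0

lemma IsStd.desc {h : ℝ × ℝ → S3} {μ : ℝ} (H : IsStd h μ) : ∃ F : C(M, RP2), Lifts h F := by
  obtain ⟨F, hF⟩ := M_desc (fun p => act (h p) x0) (continuous_act' H.cont continuous_const)
    (fun t θ => by rw [H.per, act_mul, act_E])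
    (fun θ => by rw [H.per0, act_mul, act_kk])
    (fun θ => by rw [H.per1, act_mul, act_E])
  exact ⟨F, hF⟩

lemma std_homotopic {h s : ℝ × ℝ → S3} {μ : ℝ} {F F' : C(M, RP2)} (H : IsStd h μ) (S : IsStd s μ)
    (hF : Lifts h F) (sF : Lifts s F') : F.Homotopic F' := by
  have hc : Continuous fun p => h p * (s p)⁻¹ := H.cont.mul S.cont.inv
  obtain ⟨R, hR⟩ := M_desc (fun p => h p * (s p)⁻¹) hc
    (fun t θ => by rw [H.per, S.per]; group)
    (fun θ => by rw [H.per0, S.per0]; group)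
    (fun θ => by rw [H.per1, S.per1]; group)
  refine orbit_homotopic F' F R fun m => ?_
  obtain ⟨t, θ, h0, h1, rfl⟩ := mkM_surj m
  rw [hR t θ h0 h1, sF t θ h0 h1, hF t θ h0 h1, ← act_mul, inv_mul_cancel_right]

lemma IsStd.mul_kk {h : ℝ × ℝ → S3} {μ : ℝ} (H : IsStd h μ) : IsStd (fun p => h p * kk) (-μ) where
  cont := H.cont.mul continuous_const
  per t θ := by rw [H.per, mul_assoc, E_pi_comm, mul_assoc]
  per0 θ := by rw [H.per0]
  per1 θ := by rw [H.per1, mul_assoc, mul_assoc, kk_E, neg_neg]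

lemma Lifts.mul_kk {h : ℝ × ℝ → S3} {F : C(M, RP2)} (H : Lifts h F) :
    Lifts (fun p => h p * kk) F := fun t θ h0 h1 => by
  rw [act_mul, act_kk, H t θ h0 h1]

theorem classify (F : C(M, RP2)) : F.Homotopic (ContinuousMap.const M x0) ∨
    (∃ h, Lifts h F ∧ IsStd h (Real.pi / 3)) ∨ (∃ h, Lifts h F ∧ IsStd h Real.pi) := by
  obtain ⟨g, hg, hgF⟩ := exists_lift F
  set n1 : ℝ × ℝ → S3 := fun p => (g p)⁻¹ * g (p.1, p.2 + 2 * Real.pi) with hn1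
  set n0 : ℝ → S3 := fun θ => (g (0, θ))⁻¹ * g (0, θ + Real.pi) with hn0
  set n2 : ℝ → S3 := fun θ => (g (1, θ))⁻¹ * g (1, θ + 2 * Real.pi / 3) with hn2
  have cn1 : Continuous n1 := hg.inv.mul (hg.comp (by fun_prop))
  have cn0 : Continuous n0 := (hg.comp (by fun_prop : Continuous fun θ : ℝ => ((0:ℝ), θ))).inv.mul
    (hg.comp (by fun_prop : Continuous fun θ : ℝ => ((0:ℝ), θ + Real.pi)))
  have cn2 : Continuous n2 := (hg.comp (by fun_prop : Continuous fun θ : ℝ => ((1:ℝ), θ))).inv.mul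
    (hg.comp (by fun_prop : Continuous fun θ : ℝ => ((1:ℝ), θ + 2 * Real.pi / 3)))
  have an1 : ∀ p, act (n1 p) x0 = x0 := fun p => act_inv_mul (by
    rw [show g p = g (p.1, p.2) from rfl, hgF, hgF, mkM_per])
  have an0 : ∀ p, act (n0 p) x0 = x0 := fun p => act_inv_mul (by rw [hgF, hgF, mkM_per0])
  have an2 : ∀ p, act (n2 p) x0 = x0 := fun p => act_inv_mul (by rw [hgF, hgF, mkM_per1])
  have rel0 : ∀ θ, n1 (0, θ) = n0 θ * n0 (θ + Real.pi) := by
    intro θ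
    simp only [hn1, hn0]
    rw [show θ + 2 * Real.pi = θ + Real.pi + Real.pi by ring]
    group
  have rel1 : ∀ θ, n1 (1, θ) = n2 θ * n2 (θ + 2 * Real.pi / 3) *
      n2 (θ + 2 * Real.pi / 3 + 2 * Real.pi / 3) := by
    intro θ
    simp only [hn1, hn2]
    rw [show θ + 2 * Real.pi = θ + 2 * Real.pi / 3 + 2 * Real.pi / 3 + 2 * Real.pi / 3 by ring]
    group
  have ga1 : ∀ t θ, g (t, θ + 2 * Real.pi) = g (t, θ) * n1 (t, θ) := fun t θ => by
    simp only [hn1]; group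
  have ga0 : ∀ θ, g (0, θ + Real.pi) = g (0, θ) * n0 θ := fun θ => by
    simp only [hn0]; group
  have ga2 : ∀ θ, g (1, θ + 2 * Real.pi / 3) = g (1, θ) * n2 θ := fun θ => by
    simp only [hn2]; group
  have t0 := type_const n0 cn0 an0
  have t1 : ∀ p, isP (n1 p) := by
    refine (type_const n1 cn1 an1).resolve_right fun h => ?_
    have h1 := h (0, 0)
    rw [rel0] at h1
    rcases t0 with h0 | h0
    · exact isP_not_isN (isP_mul (h0 _) (h0 _)) h1
    · exact isP_not_isN (isN_mul (h0 _) (h0 _)) h1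
  have t2 : ∀ p, isP (n2 p) := by
    refine (type_const n2 cn2 an2).resolve_right fun h => ?_
    have h1 := t1 (1, 0)
    rw [rel1] at h1
    exact isP_not_isN h1 (isP_mul_isN (isN_mul (h _) (h _)) (h _))
  clear_value n0 n1 n2
  obtain ⟨η, cη, hη⟩ := E_lift n1 cn1 t1
  obtain ⟨μ, cμ, hμ⟩ := E_lift n2 cn2 t2
  obtain ⟨n, hn⟩ := E_const (f := fun θ => η (1, θ)) (g := fun θ => μ θ + μ (θ + 2 * Real.pi / 3)
    + μ (θ + 2 * Real.pi / 3 + 2 * Real.pi / 3)) (by fun_prop) (by fun_prop) (fun θ => by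
      rw [← hη, rel1, hμ, hμ, hμ, E_add, E_add])
  rcases t0 with t0 | t0
  · left
    obtain ⟨ν, cν, hν⟩ := E_lift n0 cn0 t0
    obtain ⟨k, hk⟩ := E_const (f := fun θ => η (0, θ)) (g := fun θ => ν θ + ν (θ + Real.pi))
      (by fun_prop) (by fun_prop) (fun θ => by rw [← hη, rel0, hν, hν, E_add])
    obtain ⟨φ, cφ, p, p0, p1⟩ := gauge 1 (by norm_num)
      (fun θ => -(ν θ + (-(k - n) : ℤ) * (2 * Real.pi)))
      (fun θ => -(μ θ + (-(k - n) : ℤ) * (2 * Real.pi)))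
      (fun q => -(η q + (-2 * (k - n) - k : ℤ) * (2 * Real.pi))) (by fun_prop) (by fun_prop)
      (by fun_prop) (fun θ => by rw [hk]; push_cast; ring) (fun θ => by rw [hn]; push_cast; ring)
    have ch : Continuous fun q => g q * E (φ q) := hg.mul (continuous_E.comp cφ)
    obtain ⟨R, hR⟩ := M_desc (fun q => g q * E (φ q)) ch
      (fun t θ => by
        rw [p, ga1, hη, mul_assoc, ← E_add, ← E_int (-(-2 * (k - n) - k)) (φ (t, θ))]
        congr 2; push_cast; ring)
      (fun θ => by
        rw [p0, ga0, hν, mul_assoc, ← E_add, ← E_int (k - n) (φ (0, θ))]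
        congr 2; push_cast; ring)
      (fun θ => by
        rw [p1, ga2, hμ, mul_assoc, ← E_add, ← E_int (k - n) (φ (1, θ))]
        congr 2; push_cast; ring)
    refine orbit_homotopic _ _ R fun m => ?_
    obtain ⟨t, θ, h0, h1, rfl⟩ := mkM_surj m
    rw [hR t θ h0 h1, ContinuousMap.const_apply, act_mul, act_E, hgF]
  · right
    have cn0' : Continuous fun θ => n0 θ * kk := cn0.mul continuous_const
    obtain ⟨ρ, cρ, hρ⟩ := E_lift (fun θ => n0 θ * kk) cn0' (fun θ => isP_mul_kk.2 (t0 θ))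
    set ν : ℝ → ℝ := fun θ => ρ θ + Real.pi with hνdef
    have cν : Continuous ν := by fun_prop
    have hν : ∀ θ, n0 θ = E (ν θ) * kk := fun θ => of_mul_kk (hρ θ)
    clear_value ν
    obtain ⟨k, hk⟩ := E_const (f := fun θ => η (0, θ))
      (g := fun θ => ν θ + - ν (θ + Real.pi) + Real.pi)
      (by fun_prop) (by fun_prop) (fun θ => by
        rw [← hη, rel0, hν, hν, E_add, E_add, ← kk_kk, ← mul_assoc, ← mul_assoc,
          mul_assoc (E (ν θ)) kk, kk_E, ← mul_assoc])
    obtain ⟨q, r, hqr, hr⟩ : ∃ q r : ℤ, k - n = 3 * q + r ∧ (r = 0 ∨ r = 1 ∨ r = -1) :=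
      ⟨(k - n + 1) / 3, k - n - 3 * ((k - n + 1) / 3), by ring, by omega⟩
    have hqr' : (k : ℝ) - n = 3 * q + r := by exact_mod_cast hqr
    obtain ⟨φ, cφ, p, p0, p1⟩ := gauge (-1) (by norm_num) ν
      (fun θ => (Real.pi + 2 * Real.pi * r) / 3 - (μ θ - q * (2 * Real.pi)))
      (fun x => Real.pi - (η x - k * (2 * Real.pi))) (by fun_prop) (by fun_prop)
      (by fun_prop) (fun θ => by rw [hk]; ring)
      (fun θ => by rw [hn]; linear_combination 2 * Real.pi * hqr')
    have H : IsStd (fun x => g x * E (φ x)) ((Real.pi + 2 * Real.pi * r) / 3) := by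
      refine ⟨hg.mul (continuous_E.comp cφ), fun t θ => ?_, fun θ => ?_, fun θ => ?_⟩
      · rw [p, ga1, hη, mul_assoc, mul_assoc, ← E_add, ← E_add,
          ← E_int k (φ (t, θ) + Real.pi)]
        congr 2; ring
      · rw [p0, ga0, hν, mul_assoc, mul_assoc, mul_assoc, kk_E, ← mul_assoc (E _), ← E_add]
        congr 3; ring
      · rw [p1, ga2, hμ, mul_assoc (g _), mul_assoc (g _), ← E_add, ← E_add,
          ← E_int q (φ (1, θ) + _)]
        congr 2; ring
    have HF : Lifts (fun x => g x * E (φ x)) F := fun t θ _ _ => by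
      rw [act_mul, act_E, hgF]
    rcases hr with rfl | rfl | rfl
    · left
      refine ⟨_, HF, ?_⟩
      convert! H using 1
      push_cast; ring
    · right
      refine ⟨_, HF, ?_⟩
      convert! H using 1
      push_cast; ring
    · left
      refine ⟨_, HF.mul_kk, ?_⟩
      convert! H.mul_kk using 1
      push_cast; ring

/-! ### Standard maps -/

def KE (a : ℝ) : S3 := mkS (Real.cos a) 0 0 (Real.sin a) (by simp)
def JE (a : ℝ) : S3 := mkS (Real.cos a) 0 (-Real.sin a) 0 (by simp)
lemma KE_coe (a : ℝ) : ((KE a : S3) : Quaternion ℝ) = mkH (Real.cos a) 0 0 (Real.sin a) := rfl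
lemma JE_coe (a : ℝ) : ((JE a : S3) : Quaternion ℝ) = mkH (Real.cos a) 0 (-Real.sin a) 0 := rfl

lemma continuous_KE : Continuous KE :=
  Continuous.subtype_mk (continuous_mkH Real.continuous_cos continuous_const
    continuous_const Real.continuous_sin) _
lemma continuous_JE : Continuous JE :=
  Continuous.subtype_mk (continuous_mkH Real.continuous_cos continuous_const
    Real.continuous_sin.neg continuous_const) _

lemma KE_add (a b : ℝ) : KE (a + b) = KE a * KE b := by
  apply S3_ext
  rw [Metric.unitSphere.coe_mul, KE_coe, KE_coe, KE_coe]
  ext <;> simp [Real.cos_add, Real.sin_add]; ring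

lemma KE_pi : KE Real.pi = E Real.pi := by
  apply S3_ext; rw [KE_coe, E_coe]; ext <;> simp

lemma KE_npi : KE (-Real.pi) = E Real.pi := by
  apply S3_ext; rw [KE_coe, E_coe]; ext <;> simp

lemma KE_half : KE (Real.pi / 2) = kk := by
  apply S3_ext; rw [KE_coe, kk_coe]; ext <;> simp

lemma KE_n3half : KE (-(3 * Real.pi / 2)) = kk := by
  rw [show -(3 * Real.pi / 2) = -Real.pi + -Real.pi + Real.pi / 2 by ring, KE_add, KE_add,
    KE_npi, E_pi_pi, one_mul, KE_half]

lemma JE_zero : JE 0 = 1 := by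
  apply S3_ext; rw [JE_coe, Metric.unitSphere.coe_one]; ext <;> simp

lemma KE_JE (a : ℝ) : KE a * JE (Real.pi / 4) = JE (Real.pi / 4) * E a := by
  apply S3_ext
  rw [Metric.unitSphere.coe_mul, Metric.unitSphere.coe_mul, KE_coe, JE_coe, E_coe]
  ext <;> simp <;> ring

def s1 (p : ℝ × ℝ) : S3 := KE (p.2 / 2) * JE (Real.pi / 4 * p.1)
def s2 (p : ℝ × ℝ) : S3 := KE (-(3 * p.2 / 2))

lemma s1_std : IsStd s1 (Real.pi / 3) := by
  refine ⟨(continuous_KE.comp (by fun_prop)).mul (continuous_JE.comp (by fun_prop)), ?_, ?_, ?_⟩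
  · intro t θ
    simp only [s1]
    rw [show (θ + 2 * Real.pi) / 2 = θ / 2 + Real.pi by ring, KE_add, KE_pi, mul_assoc, E_pi_comm,
      mul_assoc]
  · intro θ
    simp only [s1, mul_zero, JE_zero, mul_one]
    rw [show (θ + Real.pi) / 2 = θ / 2 + Real.pi / 2 by ring, KE_add, KE_half]
  · intro θ
    simp only [s1, mul_one]
    rw [show (θ + 2 * Real.pi / 3) / 2 = θ / 2 + Real.pi / 3 by ring, KE_add, mul_assoc, KE_JE,
      mul_assoc]

lemma s2_std : IsStd s2 Real.pi := by
  refine ⟨continuous_KE.comp (by fun_prop), ?_, ?_, ?_⟩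
  · intro t θ
    simp only [s2]
    rw [show -(3 * (θ + 2 * Real.pi) / 2) = -(3 * θ / 2) + -Real.pi + -Real.pi + -Real.pi by ring,
      KE_add, KE_add, KE_add, KE_npi, mul_assoc _ (E _) (E _), E_pi_pi, mul_one]
  · intro θ
    simp only [s2]
    rw [show -(3 * (θ + Real.pi) / 2) = -(3 * θ / 2) + -(3 * Real.pi / 2) by ring,
      KE_add, KE_n3half]
  · intro θ
    simp only [s2]
    rw [show -(3 * (θ + 2 * Real.pi / 3) / 2) = -(3 * θ / 2) + -Real.pi by ring,
      KE_add, KE_npi]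

/-! ### Non-homotopic maps -/

lemma not_const {h : ℝ × ℝ → S3} {μ : ℝ} {F : C(M, RP2)} (H : IsStd h μ) (hF : Lifts h F)
    (hh : (ContinuousMap.const M x0).Homotopic F) : False := by
  obtain ⟨R, hR⟩ := homotopic_orbit _ _ hh
  have cR : Continuous fun θ : ℝ => R (mkM 0 θ) := 
    R.continuous.comp (continuous_mkM.comp (by fun_prop : Continuous fun θ : ℝ => ((0:ℝ), θ)))
  have ch : Continuous fun θ : ℝ => h (0, θ) := H.cont.comp (by fun_prop)
  have cn : Continuous fun θ : ℝ => (R (mkM 0 θ))⁻¹ * h (0, θ) := cR.inv.mul ch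
  have an : ∀ θ : ℝ, act ((R (mkM 0 θ))⁻¹ * h (0, θ)) x0 = x0 := fun θ => act_inv_mul (by
    rw [← hF 0 θ le_rfl zero_le_one, ← hR, ContinuousMap.const_apply])
  have e : (R (mkM 0 (0 + Real.pi)))⁻¹ * h (0, 0 + Real.pi) = (R (mkM 0 0))⁻¹ * h (0, 0) * kk := by
    rw [mkM_per0, H.per0, mul_assoc]
  rcases type_const _ cn an with hP | hN
  · have h1 := hP (0 + Real.pi)
    simp only [e] at h1
    exact isP_not_isN (hP 0) (isP_mul_kk.1 h1)
  · have h1 := hN (0 + Real.pi)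
    simp only [e] at h1
    exact isP_not_isN (isN_mul_kk.1 h1) (hN 0)

/-- Two standard lifts related by a map into `S3` which is of type `+`. -/
lemma std_rel {h s : ℝ × ℝ → S3} {μ κ : ℝ} (H : IsStd h μ) (S : IsStd s κ) (R : C(M, S3))
    (hP : ∀ p : ℝ × ℝ, isP ((h p)⁻¹ * R (mkM p.1 p.2) * s p)) :
    ∃ r : ℤ, 3 * (κ - μ) = 3 * r * (2 * Real.pi) := by
  have cR : Continuous fun p : ℝ × ℝ => R (mkM p.1 p.2) := R.continuous.comp continuous_mkM
  have cn : Continuous fun p : ℝ × ℝ => (h p)⁻¹ * R (mkM p.1 p.2) * s p :=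
    (H.cont.inv.mul cR).mul S.cont
  obtain ⟨φ, cφ, hφ'⟩ := E_lift _ cn hP
  have hφ : ∀ t θ, (h (t, θ))⁻¹ * R (mkM t θ) * s (t, θ) = E (φ (t, θ)) :=
    fun t θ => hφ' (t, θ)
  obtain ⟨l, hl⟩ := E_const (f := fun p : ℝ × ℝ => φ (p.1, p.2 + 2 * Real.pi)) (g := φ)
    (by fun_prop) cφ (by
      rintro ⟨t, θ⟩
      simp only
      rw [← hφ, ← hφ]
      rw [mkM_per, H.per, S.per]
      have e := E_pi_comm ((h (t, θ))⁻¹ * R (mkM t θ) * s (t, θ))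
      rw [← inv_mul_eq_iff_eq_mul.2 e.symm]
      group)
  obtain ⟨m, hm⟩ := E_const (f := fun θ => φ (0, θ + Real.pi)) (g := fun θ => - φ (0, θ))
    (by fun_prop) (by fun_prop) (by
      intro θ
      have e : kk⁻¹ * E (φ (0, θ)) * kk = E (- φ (0, θ)) := by
        rw [mul_assoc, ← neg_neg (φ (0, θ)), ← kk_E, neg_neg]; group
      rw [← e, ← hφ, ← hφ]
      rw [mkM_per0, H.per0, S.per0]
      group)
  obtain ⟨r, hr⟩ := E_const (f := fun θ => φ (1, θ + 2 * Real.pi / 3))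
    (g := fun θ => φ (1, θ) + (κ - μ)) (by fun_prop) (by fun_prop) (by
      intro θ
      have e : E (φ (1, θ) + (κ - μ)) = (E μ)⁻¹ * E (φ (1, θ)) * E κ := by
        rw [← E_neg, ← E_add, ← E_add]; congr 1; ring
      rw [e, ← hφ, ← hφ]
      rw [mkM_per1, H.per1, S.per1]
      group)
  have a1 := hl (0, 0)
  have a2 := hm 0
  have a3 := hm (0 + Real.pi)
  have b1 := hl (1, 0)
  have b2 := hr 0
  have b3 := hr (0 + 2 * Real.pi / 3)
  have b4 := hr (0 + 2 * Real.pi / 3 + 2 * Real.pi / 3)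
  simp only [show (0:ℝ) + 2 * Real.pi / 3 + 2 * Real.pi / 3 + 2 * Real.pi / 3 = 0 + 2 * Real.pi by ring,
    show (0:ℝ) + Real.pi + Real.pi = 0 + 2 * Real.pi by ring] at a1 a2 a3 b1 b2 b3 b4
  exact ⟨-r, by push_cast; linarith⟩

lemma not_int {μ : ℝ} (hμ : μ = -(2 * Real.pi / 3) ∨ μ = 4 * Real.pi / 3) (r : ℤ)
    (h : 3 * μ = 3 * r * (2 * Real.pi)) : False := by
  have hpi := Real.pi_pos
  rcases hμ with rfl | rfl
  · have h1 : (2 * Real.pi) * (-1) = (2 * Real.pi) * (3 * r : ℤ) := by push_cast; linarith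
    have h2 := mul_left_cancel₀ (by positivity) h1
    have h3 : (-1 : ℤ) = 3 * r := by exact_mod_cast h2
    omega
  · have h1 : (2 * Real.pi) * 2 = (2 * Real.pi) * (3 * r : ℤ) := by push_cast; linarith
    have h2 := mul_left_cancel₀ (by positivity) h1
    have h3 : (2 : ℤ) = 3 * r := by exact_mod_cast h2
    omega

/-- Clamp to the unit interval. -/
def cl (t : ℝ) : ℝ := max 0 (min 1 t)

lemma continuous_cl : Continuous cl := by unfold cl; fun_prop
lemma cl_nonneg (t : ℝ) : 0 ≤ cl t := le_max_left _ _
lemma cl_le (t : ℝ) : cl t ≤ 1 := max_le zero_le_one (min_le_left _ _)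
lemma cl_zero : cl 0 = 0 := by simp [cl]
lemma cl_one : cl 1 = 1 := by simp [cl]

lemma mkM_cl (t θ : ℝ) : mkM (cl t) θ = mkM t θ := by
  have : pI (cl t) = pI t := by
    apply Subtype.ext
    simp [pI, Set.coe_projIcc, cl]
  unfold mkM
  rw [this]

lemma IsStd.clamp {h : ℝ × ℝ → S3} {μ : ℝ} (H : IsStd h μ) :
    IsStd (fun p => h (cl p.1, p.2)) μ where
  cont := H.cont.comp ((continuous_cl.comp continuous_fst).prodMk continuous_snd)
  per t θ := H.per (cl t) θ
  per0 θ := by simp only [cl_zero]; exact H.per0 θ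
  per1 θ := by simp only [cl_one]; exact H.per1 θ

lemma not_12 {F F' : C(M, RP2)} (hF : Lifts s1 F) (hF' : Lifts s2 F') (hh : F.Homotopic F') :
    False := by
  obtain ⟨R, hR⟩ := homotopic_orbit _ _ hh
  have H1 := s1_std.clamp
  have H2 := s2_std.clamp
  have cR : Continuous fun p : ℝ × ℝ => R (mkM p.1 p.2) := R.continuous.comp continuous_mkM
  have an : ∀ p : ℝ × ℝ, act ((s2 (cl p.1, p.2))⁻¹ * R (mkM p.1 p.2) * s1 (cl p.1, p.2)) x0
      = x0 := by
    intro p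
    rw [mul_assoc]
    apply act_inv_mul
    rw [act_mul, ← hF _ _ (cl_nonneg _) (cl_le _), ← hF' _ _ (cl_nonneg _) (cl_le _), mkM_cl, hR]
  rcases type_const _ ((H2.cont.inv.mul cR).mul H1.cont) an with h | h
  · obtain ⟨r, hr⟩ := std_rel H2 H1 R h
    exact not_int (Or.inl (by ring)) r hr
  · obtain ⟨r, hr⟩ := std_rel H2.mul_kk H1 R (fun p => by
      have e : (s2 (cl p.1, p.2) * kk)⁻¹ * R (mkM p.1 p.2) * s1 (cl p.1, p.2) =
        kk⁻¹ * ((s2 (cl p.1, p.2))⁻¹ * R (mkM p.1 p.2) * s1 (cl p.1, p.2)) := by group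
      simp only [e]
      refine isN_mul ?_ (h p)
      have : kk⁻¹ = E Real.pi * kk := by
        rw [inv_eq_iff_mul_eq_one, ← mul_assoc, ← E_pi_comm, mul_assoc, kk_kk, E_pi_pi]
      rw [this]
      exact isN_mul_kk.2 (isP_E _))
    exact not_int (Or.inr (by ring)) r hr

theorem main : Nonempty (FreeHomotopyClasses (Mpq 2 3) RP2 ≃ Fin 3) := by
  obtain ⟨F1, h1⟩ := s1_std.desc
  obtain ⟨F2, h2⟩ := s2_std.desc
  have hex : ∀ A B : C(M, RP2), (Quot.mk _ A : FreeHomotopyClasses (Mpq 2 3) RP2) = Quot.mk _ B →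
      A.Homotopic B := by
    intro A B h
    have h' := Quot.eqvGen_exact h
    exact (ContinuousMap.Homotopic.equivalence.eqvGen_iff).1 h'
  let G : Fin 3 → C(M, RP2) := ![ContinuousMap.const M x0, F1, F2]
  let f : Fin 3 → FreeHomotopyClasses (Mpq 2 3) RP2 := fun i => Quot.mk _ (G i)
  have h01 : ¬ (G 0).Homotopic (G 1) := fun h => not_const s1_std h1 h
  have h02 : ¬ (G 0).Homotopic (G 2) := fun h => not_const s2_std h2 h
  have h12 : ¬ (G 1).Homotopic (G 2) := fun h => not_12 h1 h2 h
  have hinj : Function.Injective f := by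
    intro i j hij
    have h := hex _ _ hij
    fin_cases i <;> fin_cases j
    · rfl
    · exact absurd h h01
    · exact absurd h h02
    · exact absurd h.symm h01
    · rfl
    · exact absurd h h12
    · exact absurd h.symm h02
    · exact absurd h.symm h12
    · rfl
  have hsurj : Function.Surjective f := by
    intro c
    obtain ⟨F, rfl⟩ := Quot.exists_rep c
    rcases classify F with h | ⟨h, hF, H⟩ | ⟨h, hF, H⟩
    · exact ⟨0, (Quot.sound h).symm⟩
    · exact ⟨1, (Quot.sound (std_homotopic H s1_std hF h1)).symm⟩
    · exact ⟨2, (Quot.sound (std_homotopic H s2_std hF h2)).symm⟩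
  exact ⟨(Equiv.ofBijective f ⟨hinj, hsurj⟩).symm⟩

end

end Trefoil

/-- The set `[M_{2,3}, ℝP²]` of free homotopy classes of maps from the trefoil-knot
complement model `M_{2,3}` to the real projective plane has exactly three elements. -/
theorem freeHomotopyClasses_M23_RP2 :
    Nonempty (FreeHomotopyClasses (Mpq 2 3) RP2 ≃ Fin 3) := by
  exact Trefoil.main
end

section
/- Let (∂ : H → G) and (∂' : H' → G') be crossed modules. Both based homotopy and free homotopy are equivalence relations on the set of crossed module homomorphisms from ∂ to ∂': each relation is reflexive, symmetric, and transitive. -/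
/-- A crossed module: a group homomorphism `∂ : H → G` together with an action of `G` on
`H` by automorphisms such that `∂(ᵍh) = g ∂(h) g⁻¹` and `^{∂h}h' = h h' h⁻¹`. -/
structure CrossedModule (G H : Type*) [Group G] [Group H] where
  /-- The action of `G` on `H` by automorphisms. -/
  act : G →* MulAut H
  /-- The boundary homomorphism `∂ : H → G`. -/
  bdry : H →* G
  bdry_act : ∀ (g : G) (h : H), bdry (act g h) = g * bdry h * g⁻¹
  peiffer : ∀ h h' : H, act (bdry h) h' = h * h' * h⁻¹

/-- A homomorphism of crossed modules: a pair of equivariant group homomorphisms commuting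
with the boundary maps. -/
structure CrossedModuleHom {G H G' H' : Type*} [Group G] [Group H] [Group G'] [Group H']
    (𝒳 : CrossedModule G H) (𝒴 : CrossedModule G' H') where
  /-- The homomorphism `φ₁ : G → G'`. -/
  φ₁ : G →* G'
  /-- The homomorphism `φ₂ : H → H'`. -/
  φ₂ : H →* H'
  equivariant : ∀ (g : G) (h : H), φ₂ (𝒳.act g h) = 𝒴.act (φ₁ g) (φ₂ h)
  comm : ∀ h : H, 𝒴.bdry (φ₂ h) = φ₁ (𝒳.bdry h)

/-- `(θ, γ)` is a free homotopy from `φ` to `ψ`. -/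
def IsFreeHomotopy {G H G' H' : Type*} [Group G] [Group H] [Group G'] [Group H']
    {𝒳 : CrossedModule G H} {𝒴 : CrossedModule G' H'}
    (φ ψ : CrossedModuleHom 𝒳 𝒴) (θ : G → H') (γ : G') : Prop :=
  (∀ g g' : G, θ (g * g') = θ g * 𝒴.act (γ * ψ.φ₁ g * γ⁻¹) (θ g')) ∧
  (∀ g : G, 𝒴.bdry (θ g) = φ.φ₁ g * γ * (ψ.φ₁ g)⁻¹ * γ⁻¹) ∧
  (∀ h : H, θ (𝒳.bdry h) = φ.φ₂ h * (𝒴.act γ (ψ.φ₂ h))⁻¹)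


/-- Two crossed module homomorphisms are freely homotopic if some free homotopy `(θ, γ)`
connects them. -/
def FreeHomotopic {G H G' H' : Type*} [Group G] [Group H] [Group G'] [Group H']
    {𝒳 : CrossedModule G H} {𝒴 : CrossedModule G' H'}
    (φ ψ : CrossedModuleHom 𝒳 𝒴) : Prop :=
  ∃ (θ : G → H') (γ : G'), IsFreeHomotopy φ ψ θ γ

/-- Two crossed module homomorphisms are based homotopic if some free homotopy `(θ, 1)`
with `γ` the identity connects them. -/
def BasedHomotopic {G H G' H' : Type*} [Group G] [Group H] [Group G'] [Group H']
    {𝒳 : CrossedModule G H} {𝒴 : CrossedModule G' H'}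
    (φ ψ : CrossedModuleHom 𝒳 𝒴) : Prop :=
  ∃ θ : G → H', IsFreeHomotopy φ ψ θ 1

theorem IsFreeHomotopy.refl' {G H G' H' : Type*} [Group G] [Group H] [Group G'] [Group H']
    {𝒳 : CrossedModule G H} {𝒴 : CrossedModule G' H'}
    (φ : CrossedModuleHom 𝒳 𝒴) : IsFreeHomotopy φ φ (fun _ => 1) 1 := by
  refine ⟨fun g g' => ?_, fun g => ?_, fun h => ?_⟩ <;> simp

/-- If `∂ t = a * b⁻¹`, the actions of `a` and `b` differ by conjugation by `t`. -/
theorem CrossedModule.act_conj {G H : Type*} [Group G] [Group H]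
    (𝒴 : CrossedModule G H) (a b : G) (t x : H) (h : 𝒴.bdry t = a * b⁻¹) :
    𝒴.act a x = t * 𝒴.act b x * t⁻¹ := by
  have ha : a = 𝒴.bdry t * b := by rw [h]; group
  rw [ha, map_mul, MulAut.mul_apply, 𝒴.peiffer]

theorem IsFreeHomotopy.symm' {G H G' H' : Type*} [Group G] [Group H] [Group G'] [Group H']
    {𝒳 : CrossedModule G H} {𝒴 : CrossedModule G' H'}
    {φ ψ : CrossedModuleHom 𝒳 𝒴} {θ : G → H'} {γ : G'} (h : IsFreeHomotopy φ ψ θ γ) :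
    IsFreeHomotopy ψ φ (fun g => 𝒴.act γ⁻¹ (θ g)⁻¹) γ⁻¹ := by
  obtain ⟨h1, h2, h3⟩ := h
  refine ⟨fun g g' => ?_, fun g => ?_, fun h => ?_⟩
  · have hc := 𝒴.act_conj (φ.φ₁ g) (γ * ψ.φ₁ g * γ⁻¹) (θ g) (θ g')⁻¹ (by rw [h2]; group)
    have e : γ⁻¹ * φ.φ₁ g * γ⁻¹⁻¹ * γ⁻¹ = γ⁻¹ * φ.φ₁ g := by group
    dsimp only
    rw [← MulAut.mul_apply _ (𝒴.act (γ⁻¹ * φ.φ₁ g * γ⁻¹⁻¹)), ← map_mul 𝒴.act, e,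
      map_mul 𝒴.act, MulAut.mul_apply, hc, ← map_mul (𝒴.act γ⁻¹), h1]
    congr 1
    rw [map_inv (𝒴.act (γ * ψ.φ₁ g * γ⁻¹))]
    group
  · dsimp only
    rw [𝒴.bdry_act, map_inv, h2]
    group
  · dsimp only
    rw [h3, mul_inv_rev, inv_inv, map_mul, ← MulAut.mul_apply, ← map_mul 𝒴.act]
    simp

theorem IsFreeHomotopy.trans' {G H G' H' : Type*} [Group G] [Group H] [Group G'] [Group H']
    {𝒳 : CrossedModule G H} {𝒴 : CrossedModule G' H'}
    {φ ψ χ : CrossedModuleHom 𝒳 𝒴} {θ θ' : G → H'} {γ γ' : G'}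
    (h : IsFreeHomotopy φ ψ θ γ) (h' : IsFreeHomotopy ψ χ θ' γ') :
    IsFreeHomotopy φ χ (fun g => θ g * 𝒴.act γ (θ' g)) (γ * γ') := by
  obtain ⟨h1, h2, h3⟩ := h
  obtain ⟨k1, k2, k3⟩ := h'
  refine ⟨fun g g' => ?_, fun g => ?_, fun h => ?_⟩
  · have hc := 𝒴.act_conj (γ * ψ.φ₁ g * γ⁻¹) (γ * γ' * χ.φ₁ g * (γ * γ')⁻¹) (𝒴.act γ (θ' g))
      (θ g') (by rw [𝒴.bdry_act, k2]; group)
    have e : 𝒴.act (γ * γ' * χ.φ₁ g * (γ * γ')⁻¹) (𝒴.act γ (θ' g')) =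
        𝒴.act γ (𝒴.act (γ' * χ.φ₁ g * γ'⁻¹) (θ' g')) := by
      rw [← MulAut.mul_apply, ← MulAut.mul_apply, ← map_mul 𝒴.act, ← map_mul 𝒴.act]
      congr 2
      group
    dsimp only
    rw [h1, k1, hc, map_mul (𝒴.act (γ * γ' * χ.φ₁ g * (γ * γ')⁻¹)), e, map_mul (𝒴.act γ)]
    group
  · dsimp only
    rw [map_mul, 𝒴.bdry_act, k2, h2]
    group
  · dsimp only
    rw [h3, k3, map_mul (𝒴.act γ), map_inv (𝒴.act γ), map_mul 𝒴.act, MulAut.mul_apply]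
    group

/-- Based homotopy and free homotopy are both equivalence relations (reflexive, symmetric
and transitive) on the set of homomorphisms between two crossed modules. -/
theorem basedHomotopic_and_freeHomotopic_equivalence
    {G H G' H' : Type*} [Group G] [Group H] [Group G'] [Group H']
    (𝒳 : CrossedModule G H) (𝒴 : CrossedModule G' H') :
    Equivalence (@BasedHomotopic G H G' H' _ _ _ _ 𝒳 𝒴) ∧
      Equivalence (@FreeHomotopic G H G' H' _ _ _ _ 𝒳 𝒴) := by
  refine ⟨⟨fun φ => ⟨_, IsFreeHomotopy.refl' φ⟩, ?_, ?_⟩,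
    ⟨fun φ => ⟨_, _, IsFreeHomotopy.refl' φ⟩, ?_, ?_⟩⟩
  · rintro φ ψ ⟨θ, h⟩
    exact ⟨_, by simpa only [inv_one] using h.symm'⟩
  · rintro φ ψ χ ⟨θ, h⟩ ⟨θ', h'⟩
    exact ⟨_, by simpa only [mul_one] using h.trans' h'⟩
  · rintro φ ψ ⟨θ, γ, h⟩
    exact ⟨_, _, h.symm'⟩
  · rintro φ ψ χ ⟨θ, γ, h⟩ ⟨θ', γ', h'⟩
    exact ⟨_, _, h.trans' h'⟩
end
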